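/- Ground state energy in the Gross–Pitaevskii regime (Lieb–Seiringer–Yngvason): Let V:ℝ³→[0,∞) be measurable, radial and compactly supported with scattering length 𝔞>0. For N∈ℕ let E_N^{GP} be the ground state energy of the Gross–Pitaevskii Hamiltonian on the unit torus. Then lim_{N→∞} E_N^{GP}/N = 4π𝔞. -/

import Mathlib

open MeasureTheory Filter Real
open scoped ENNReal NNReal

noncomputable section

abbrev Vec (d : ℕ) := Fin d → ℝ

def box (d N : ℕ) (T : ℝ) : Set (Fin N → Vec d) :=
  {x | ∀ i k, x i k ∈ Set.Icc (-T/2) (T/2)}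

def periodize (d : ℕ) (V : Vec d → ℝ≥0∞) (T : ℝ) (z : Vec d) : ℝ≥0∞ :=
  ∑' n : Fin d → ℤ, V (fun k => z k + T * n k)

def kineticE (d N : ℕ) (T : ℝ) (ψ : (Fin N → Vec d) → ℂ) : ℝ≥0∞ :=
  ∑ i : Fin N, ∑ k : Fin d,
    ∫⁻ x in box d N T, (‖fderiv ℝ ψ x (Pi.single i (Pi.single k 1))‖₊ : ℝ≥0∞) ^ 2

def interE (d N : ℕ) (T : ℝ) (V : Vec d → ℝ≥0∞) (ψ : (Fin N → Vec d) → ℂ) : ℝ≥0∞ :=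
  ∑ i : Fin N, ∑ j : Fin N,
    if i < j then
      ∫⁻ x in box d N T, periodize d V T (fun k => x i k - x j k) * (‖ψ x‖₊ : ℝ≥0∞) ^ 2
    else 0

def IsTrialState (d N : ℕ) (T : ℝ) (ψ : (Fin N → Vec d) → ℂ) : Prop :=
  ContDiff ℝ (⊤ : ℕ∞) ψ ∧
  (∀ (x : Fin N → Vec d) (v : Fin N → Fin d → ℤ), ψ (fun i k => x i k + T * v i k) = ψ x) ∧
  (∀ (σ : Equiv.Perm (Fin N)) (x : Fin N → Vec d), ψ (x ∘ σ) = ψ x) ∧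
  ∫⁻ x in box d N T, (‖ψ x‖₊ : ℝ≥0∞) ^ 2 = 1

def gsEnergy (d N : ℕ) (T : ℝ) (V : Vec d → ℝ≥0∞) : ℝ :=
  sInf {e : ℝ | ∃ ψ, IsTrialState d N T ψ ∧
        kineticE d N T ψ + interE d N T V ψ ≠ ⊤ ∧
        (kineticE d N T ψ + interE d N T V ψ).toReal = e}

/-- side length of the thermodynamic box -/
def sideLength (d : ℕ) (ρ : ℝ) (N : ℕ) : ℝ := ((N : ℝ) / ρ) ^ ((1 : ℝ) / d)

def eMinus (d : ℕ) (V : Vec d → ℝ≥0∞) (ρ : ℝ) : ℝ :=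
  liminf (fun N : ℕ => gsEnergy d N (sideLength d ρ N) V / (sideLength d ρ N) ^ d) atTop

def ePlus (d : ℕ) (V : Vec d → ℝ≥0∞) (ρ : ℝ) : ℝ :=
  limsup (fun N : ℕ => gsEnergy d N (sideLength d ρ N) V / (sideLength d ρ N) ^ d) atTop

def scatSet3 (V : Vec 3 → ℝ≥0∞) : Set ℝ≥0∞ :=
  {E | ∃ f : Vec 3 → ℝ, ContDiff ℝ (⊤ : ℕ∞) f ∧ HasCompactSupport (fun x => f x - 1) ∧
       E = ∫⁻ x, ((∑ k, ((‖fderiv ℝ f x (Pi.single k 1)‖₊ : ℝ≥0∞)) ^ 2)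
             + V x * (‖f x‖₊ : ℝ≥0∞) ^ 2 / 2)}

/-- The Gross–Pitaevskii interaction on the unit torus:
`V_N(x) = Σ_{n ∈ ℤ³} N² V(N(x+n))`. -/
def gpPotential (V : Vec 3 → ℝ) (N : ℕ) : Vec 3 → ℝ≥0∞ :=
  fun x => ENNReal.ofReal ((N : ℝ) ^ 2 * V ((N : ℝ) • x))

theorem lintegral_comp_add_smul {E : Type*} [NormedAddCommGroup E] [NormedSpace ℝ E]
    [MeasurableSpace E] [BorelSpace E] [FiniteDimensional ℝ E] (μ : Measure E)
    [μ.IsAddHaarMeasure] {r : ℝ} (hr : r ≠ 0) (b : E) (f : E → ℝ≥0∞) :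
    ∫⁻ x, f (b + r • x) ∂μ
      = ENNReal.ofReal |(r ^ Module.finrank ℝ E)⁻¹| * ∫⁻ x, f x ∂μ := by
  have h1 : ∫⁻ x, f (b + r • x) ∂μ = ∫⁻ x, f (b + x) ∂(Measure.map (r • ·) μ) := by
    have he : MeasurableEmbedding (fun x : E => r • x) :=
      (Homeomorph.smulOfNeZero r hr).measurableEmbedding
    rw [he.lintegral_map]
  rw [h1, Measure.map_addHaar_smul μ hr, lintegral_smul_measure, smul_eq_mul,
    lintegral_add_left_eq_self (μ := μ) f b]

theorem sq_lintegral_le {α : Type*} [MeasurableSpace α] (μ : Measure α) [IsProbabilityMeasure μ]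
    {f : α → ℝ≥0∞} (hf : AEMeasurable f μ) : (∫⁻ x, f x ∂μ) ^ 2 ≤ ∫⁻ x, f x ^ 2 ∂μ := by
  have h := ENNReal.lintegral_mul_le_Lp_mul_Lq μ (p := 2) (q := 2)
    (by constructor <;> norm_num) hf (aemeasurable_const (b := 1))
  simp only [Pi.mul_apply, mul_one, ENNReal.one_rpow, lintegral_const, measure_univ] at h
  calc (∫⁻ x, f x ∂μ) ^ 2 ≤ ((∫⁻ x, f x ^ (2:ℝ) ∂μ) ^ (1 / (2:ℝ))) ^ 2 := by gcongr
    _ = ∫⁻ x, f x ^ 2 ∂μ := by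
      rw [← ENNReal.rpow_natCast, ← ENNReal.rpow_mul]
      norm_num

theorem enorm_sub_sq_le_lintegral_segment {E : Type*} [NormedAddCommGroup E] [NormedSpace ℝ E]
    {φ : E → ℝ} (hφ : ContDiff ℝ 1 φ) {x y : E} (hxy : ‖x - y‖ ≤ 1) :
    ‖φ x - φ y‖ₑ ^ 2
      ≤ ∫⁻ t in Set.Icc (0 : ℝ) 1, ‖fderiv ℝ φ ((1 - t) • y + t • x)‖ₑ ^ 2 := by
  have : IsProbabilityMeasure (volume.restrict (Set.Icc (0 : ℝ) 1)) := ⟨by simp⟩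
  have hcont : Continuous fun t : ℝ => fderiv ℝ φ ((1 - t) • y + t • x) :=
    (hφ.continuous_fderiv one_ne_zero).comp (by fun_prop)
  have hd : ∀ t ∈ Set.uIcc (0 : ℝ) 1, HasDerivAt (fun t : ℝ => φ ((1 - t) • y + t • x))
      (fderiv ℝ φ ((1 - t) • y + t • x) (x - y)) t := by
    intro t _
    have hl : HasDerivAt (fun t : ℝ => (1 - t) • y + t • x) (x - y) t := by
      have := (((hasDerivAt_id t).const_sub 1).smul_const y).add ((hasDerivAt_id t).smul_const x)
      convert! this using 1
      simp [sub_eq_add_neg, add_comm]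
    exact ((hφ.differentiable one_ne_zero _).hasFDerivAt).comp_hasDerivAt t hl
  have hint := intervalIntegral.integral_eq_sub_of_hasDerivAt hd
    ((hcont.clm_apply continuous_const).intervalIntegrable 0 1)
  simp only [sub_self, zero_smul, one_smul, zero_add, sub_zero, add_zero] at hint
  refine le_trans ?_ (sq_lintegral_le _ (hcont.enorm.measurable.aemeasurable))
  gcongr
  rw [← hint, intervalIntegral.integral_of_le zero_le_one, ← integral_Icc_eq_integral_Ioc]
  refine (enorm_integral_le_lintegral_enorm _).trans (lintegral_mono fun t => ?_)
  refine (ContinuousLinearMap.le_opENorm _ _).trans ?_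
  refine mul_le_of_le_one_right (zero_le) ?_
  rw [← ofReal_norm]
  exact ENNReal.ofReal_le_one.2 hxy

section Poincare

variable {E : Type*} [NormedAddCommGroup E] [NormedSpace ℝ E]
    [MeasurableSpace E] [BorelSpace E] [FiniteDimensional ℝ E] (μ : Measure E)
    [μ.IsAddHaarMeasure]

theorem setLIntegral_comp_add_smul_le {s : Set E} (hs : MeasurableSet s) {r : ℝ} (hr : 1 / 2 ≤ r)
    (b : E) (hb : ∀ x ∈ s, b + r • x ∈ s) (g : E → ℝ≥0∞) :
    ∫⁻ x in s, g (b + r • x) ∂μ ≤ 2 ^ Module.finrank ℝ E * ∫⁻ x in s, g x ∂μ := by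
  have hr0 : 0 < r := by linarith
  calc ∫⁻ x in s, g (b + r • x) ∂μ = ∫⁻ x in s, s.indicator g (b + r • x) ∂μ := by
        refine setLIntegral_congr_fun hs fun x hx => ?_
        simp [hb x hx]
    _ ≤ ∫⁻ x, s.indicator g (b + r • x) ∂μ := setLIntegral_le_lintegral _ _
    _ = ENNReal.ofReal |(r ^ Module.finrank ℝ E)⁻¹| * ∫⁻ x in s, g x ∂μ := by
        rw [lintegral_comp_add_smul μ hr0.ne', lintegral_indicator hs]
    _ ≤ _ := by
        gcongr
        rw [abs_of_pos (by positivity), ← inv_pow, ENNReal.ofReal_pow (by positivity)]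
        gcongr
        rw [show (2 : ℝ≥0∞) = ENNReal.ofReal 2 by simp]
        apply ENNReal.ofReal_le_ofReal
        rw [inv_le_comm₀ hr0 (by norm_num)]
        linarith

theorem lintegral_lintegral_segment_le {s : Set E} (hs : MeasurableSet s) (hc : Convex ℝ s)
    (h1 : μ s = 1) {g : E → ℝ≥0∞} (hg : Measurable g) {t : ℝ} (ht : t ∈ Set.Icc (0 : ℝ) 1) :
    ∫⁻ x in s, ∫⁻ y in s, g ((1 - t) • y + t • x) ∂μ ∂μ
      ≤ 2 ^ Module.finrank ℝ E * ∫⁻ x in s, g x ∂μ := by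
  have key : ∀ f : E → ℝ≥0∞, (∀ x ∈ s, f x ≤ 2 ^ Module.finrank ℝ E * ∫⁻ x in s, g x ∂μ) →
      ∫⁻ x in s, f x ∂μ ≤ 2 ^ Module.finrank ℝ E * ∫⁻ x in s, g x ∂μ := by
    intro f hf
    calc ∫⁻ x in s, f x ∂μ ≤ ∫⁻ x in s, 2 ^ Module.finrank ℝ E * ∫⁻ x in s, g x ∂μ ∂μ :=
          setLIntegral_mono' hs hf
      _ = _ := by simp [h1]
  rcases le_total (1 / 2) t with h | h
  · rw [lintegral_lintegral_swap]
    · refine key _ fun y hy => ?_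
      refine setLIntegral_comp_add_smul_le μ hs h _ (fun x hx => ?_) g
      exact hc hy hx (by linarith [ht.2]) ht.1 (by ring)
    · exact (hg.comp (by fun_prop)).aemeasurable
  · refine key _ fun x hx => ?_
    simp_rw [add_comm _ (t • x)]
    refine setLIntegral_comp_add_smul_le μ hs (by linarith) _ (fun y hy => ?_) g
    exact hc hx hy ht.1 (by linarith [ht.2]) (by ring)

theorem exists_lintegral_enorm_sub_sq_le {s : Set E} (hs : MeasurableSet s) (hc : Convex ℝ s)
    (h1 : μ s = 1) (hdiam : ∀ x ∈ s, ∀ y ∈ s, ‖x - y‖ ≤ 1) {φ : E → ℝ} (hφ : ContDiff ℝ 1 φ) :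
    ∃ c : ℝ, ∫⁻ x in s, ‖φ x - c‖ₑ ^ 2 ∂μ
      ≤ 2 ^ Module.finrank ℝ E * ∫⁻ x in s, ‖fderiv ℝ φ x‖ₑ ^ 2 ∂μ := by
  have : IsProbabilityMeasure (μ.restrict s) := ⟨by simp [h1]⟩
  have hg : Continuous fun x => ‖fderiv ℝ φ x‖ₑ ^ 2 :=
    (ENNReal.continuous_pow 2).comp (hφ.continuous_fderiv one_ne_zero).enorm
  have hφc := hφ.continuous
  have hmeas : Measurable fun z : E × E => ‖φ z.2 - φ z.1‖ₑ ^ 2 :=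
    ((ENNReal.continuous_pow 2).comp (by fun_prop : Continuous fun z : E × E =>
      ‖φ z.2 - φ z.1‖ₑ)).measurable
  obtain ⟨y, hy⟩ := exists_le_lintegral (μ := μ.restrict s)
    (f := fun y => ∫⁻ x in s, ‖φ x - φ y‖ₑ ^ 2 ∂μ)
    (hmeas.lintegral_prod_right' (ν := μ.restrict s)).aemeasurable
  refine ⟨φ y, hy.trans ?_⟩
  calc ∫⁻ y in s, ∫⁻ x in s, ‖φ x - φ y‖ₑ ^ 2 ∂μ ∂μ
      ≤ ∫⁻ y in s, ∫⁻ x in s, ∫⁻ t in Set.Icc (0 : ℝ) 1,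
          ‖fderiv ℝ φ ((1 - t) • y + t • x)‖ₑ ^ 2 ∂volume ∂μ ∂μ :=
        setLIntegral_mono' hs fun y hy => setLIntegral_mono' hs fun x hx =>
          enorm_sub_sq_le_lintegral_segment hφ (hdiam x hx y hy)
    _ = ∫⁻ y in s, ∫⁻ t in Set.Icc (0 : ℝ) 1, ∫⁻ x in s,
          ‖fderiv ℝ φ ((1 - t) • y + t • x)‖ₑ ^ 2 ∂μ ∂volume ∂μ := by
        refine lintegral_congr fun y => lintegral_lintegral_swap ?_
        exact (hg.comp (by fun_prop : Continuous fun z : E × ℝ =>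
          (1 - z.2) • y + z.2 • z.1)).measurable.aemeasurable
    _ = ∫⁻ t in Set.Icc (0 : ℝ) 1, ∫⁻ y in s, ∫⁻ x in s,
          ‖fderiv ℝ φ ((1 - t) • y + t • x)‖ₑ ^ 2 ∂μ ∂μ := by
        refine lintegral_lintegral_swap ?_
        refine Measurable.aemeasurable ?_
        exact Measurable.lintegral_prod_right' (ν := μ.restrict s)
          (f := fun z : (E × ℝ) × E => ‖fderiv ℝ φ ((1 - z.1.2) • z.1.1 + z.1.2 • z.2)‖ₑ ^ 2)
          (hg.comp (by fun_prop : Continuous fun z : (E × ℝ) × E =>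
            (1 - z.1.2) • z.1.1 + z.1.2 • z.2)).measurable
    _ ≤ ∫⁻ t in Set.Icc (0 : ℝ) 1,
          2 ^ Module.finrank ℝ E * ∫⁻ x in s, ‖fderiv ℝ φ x‖ₑ ^ 2 ∂μ := by
        refine setLIntegral_mono' measurableSet_Icc fun t ht => ?_
        have h' : (1 - t) ∈ Set.Icc (0 : ℝ) 1 := ⟨by linarith [ht.2], by linarith [ht.1]⟩
        have := lintegral_lintegral_segment_le μ hs hc h1 hg.measurable h'
        simpa [add_comm] using this
    _ = _ := by simp

end Poincare

theorem opNorm_le_sum_single {ι F : Type*} [Fintype ι] [DecidableEq ι] [NormedAddCommGroup F]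
    [NormedSpace ℝ F] (L : (ι → F) →L[ℝ] ℝ) :
    ‖L‖ ≤ ∑ i, ‖L.comp (ContinuousLinearMap.single ℝ (fun _ => F) i)‖ := by
  refine L.opNorm_le_bound (by positivity) fun x => ?_
  have hx : L x = ∑ i, L.comp (ContinuousLinearMap.single ℝ (fun _ => F) i) (x i) := by
    conv_lhs => rw [← Finset.univ_sum_single x]
    simp
  rw [hx, Finset.sum_mul]
  refine norm_sum_le_of_le _ fun i _ => ?_
  refine (ContinuousLinearMap.le_opNorm _ _).trans ?_
  gcongr
  exact norm_le_pi_norm x i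

theorem opNorm_le_sum_basis {κ : Type*} [Fintype κ] [DecidableEq κ] (L : (κ → ℝ) →L[ℝ] ℝ) :
    ‖L‖ ≤ ∑ k, ‖L (Pi.single k 1)‖ := by
  refine (opNorm_le_sum_single L).trans (Finset.sum_le_sum fun k _ => ?_)
  refine ContinuousLinearMap.opNorm_le_bound _ (norm_nonneg _) fun t => ?_
  have : (Pi.single k t : κ → ℝ) = t • Pi.single k 1 := by
    rw [← Pi.single_smul]; simp
  simp [this, mul_comm]

/-- The squared Euclidean norm of the gradient. -/
def gradSq {d : ℕ} (h : Vec d → ℝ) (z : Vec d) : ℝ≥0∞ :=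
  ∑ k, ‖fderiv ℝ h z (Pi.single k 1)‖ₑ ^ 2

theorem enorm_sq_eq_ofReal (x : ℝ) : ‖x‖ₑ ^ 2 = ENNReal.ofReal (x ^ 2) := by
  rw [Real.enorm_eq_ofReal_abs, ← ENNReal.ofReal_pow (abs_nonneg _), sq_abs]

theorem gradSq_eq_ofReal {d : ℕ} (h : Vec d → ℝ) (z : Vec d) :
    gradSq h z = ENNReal.ofReal (∑ k, (fderiv ℝ h z (Pi.single k 1)) ^ 2) := by
  simp_rw [gradSq, enorm_sq_eq_ofReal]
  rw [ENNReal.ofReal_sum_of_nonneg fun _ _ => sq_nonneg _]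

theorem enorm_clm_sq_le {d : ℕ} (L : Vec d →L[ℝ] ℝ) :
    ‖L‖ₑ ^ 2 ≤ ENNReal.ofReal (d * ∑ k, (L (Pi.single k 1)) ^ 2) := by
  rw [← ofReal_norm, ← ENNReal.ofReal_pow (norm_nonneg _)]
  apply ENNReal.ofReal_le_ofReal
  calc ‖L‖ ^ 2 ≤ (∑ k, ‖L (Pi.single k 1)‖) ^ 2 := by
        gcongr; exact opNorm_le_sum_basis L
    _ ≤ d * ∑ k, ‖L (Pi.single k 1)‖ ^ 2 := by
        have := sq_sum_le_card_mul_sum_sq (s := (Finset.univ : Finset (Fin d)))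
          (f := fun k => ‖L (Pi.single k 1)‖)
        simpa using this
    _ = _ := by simp

theorem enorm_fderiv_sq_le {d : ℕ} (h : Vec d → ℝ) (z : Vec d) :
    ‖fderiv ℝ h z‖ₑ ^ 2 ≤ d * gradSq h z := by
  refine (enorm_clm_sq_le _).trans ?_
  rw [gradSq_eq_ofReal, ENNReal.ofReal_mul (by positivity), ENNReal.ofReal_natCast]

theorem gradSq_le {d : ℕ} (h : Vec d → ℝ) (z : Vec d) :
    gradSq h z ≤ d * ‖fderiv ℝ h z‖ₑ ^ 2 := by
  calc gradSq h z ≤ ∑ k : Fin d, ‖fderiv ℝ h z‖ₑ ^ 2 := by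
        refine Finset.sum_le_sum fun k _ => ?_
        gcongr
        refine (ContinuousLinearMap.le_opENorm _ _).trans ?_
        rw [← ofReal_norm (Pi.single k (1:ℝ) : Vec d), Pi.norm_single]
        simp
    _ = _ := by simp

theorem fderiv_comp_smul_apply {E : Type*} [NormedAddCommGroup E] [NormedSpace ℝ E]
    {g : E → ℝ} (hg : Differentiable ℝ g) (b : E) (r : ℝ) (z v : E) :
    fderiv ℝ (fun w => g (b + r • w)) z v = r * fderiv ℝ g (b + r • z) v := by
  have h1 : HasFDerivAt (fun w : E => b + r • w) (r • ContinuousLinearMap.id ℝ E) z :=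
    ((hasFDerivAt_id z).const_smul r).const_add b
  have h2 := (hg (b + r • z)).hasFDerivAt.comp z h1
  have h3 : fderiv ℝ (fun w => g (b + r • w)) z = _ := h2.fderiv
  rw [h3]
  simp

theorem gradSq_comp_smul {d : ℕ} {g : Vec d → ℝ} (hg : Differentiable ℝ g) (b : Vec d) (r : ℝ)
    (z : Vec d) :
    gradSq (fun w => g (b + r • w)) z = ENNReal.ofReal (r ^ 2) * gradSq g (b + r • z) := by
  simp_rw [gradSq, fderiv_comp_smul_apply hg, enorm_mul, mul_pow, Finset.mul_sum,
    enorm_sq_eq_ofReal]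

section Scattering

variable {V : Vec 3 → ℝ} {a : ℝ}

theorem scattering_le (hscat : sInf (scatSet3 (fun x => ENNReal.ofReal (V x)))
      = ENNReal.ofReal (4 * π * a)) {l : ℝ} (hl : 0 < l) {g : Vec 3 → ℝ}
    (hg : ContDiff ℝ (⊤ : ℕ∞) g) {c : ℝ} (hc : HasCompactSupport fun z => g z - c) :
    ENNReal.ofReal (4 * π * a / l) * ‖c‖ₑ ^ 2
      ≤ ∫⁻ z, (gradSq g z + ENNReal.ofReal (l ^ 2 * V (l • z)) * ‖g z‖ₑ ^ 2 / 2) := by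
  rcases eq_or_ne c 0 with rfl | hc0
  · simp
  have hgd : Differentiable ℝ g := hg.differentiable (by simp)
  set F : Vec 3 → ℝ≥0∞ := fun z => gradSq g z + ENNReal.ofReal (l ^ 2 * V (l • z)) * ‖g z‖ₑ ^ 2 / 2
  have hmem : (∫⁻ w, ENNReal.ofReal ((l ^ 2 * c ^ 2)⁻¹) * F (0 + l⁻¹ • w)) ∈
      scatSet3 (fun x => ENNReal.ofReal (V x)) := by
    refine ⟨fun w => c⁻¹ * g (0 + l⁻¹ • w), ?_, ?_, ?_⟩
    · exact contDiff_const.mul (hg.comp (by fun_prop))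
    · have h1 := hc.comp_homeomorph (Homeomorph.smulOfNeZero (α := Vec 3) l⁻¹ (inv_ne_zero hl.ne'))
      have h2 := h1.mul_left (f := fun _ => c⁻¹)
      convert! h2 using 1
      ext w
      simp [mul_sub, hc0]
    · refine lintegral_congr fun w => ?_
      have hd : Differentiable ℝ (fun w => g (0 + l⁻¹ • w)) := by fun_prop
      have e1 : ∑ k, (‖fderiv ℝ (fun w => c⁻¹ * g (0 + l⁻¹ • w)) w (Pi.single k 1)‖₊ : ℝ≥0∞) ^ 2
          = ENNReal.ofReal (c⁻¹ ^ 2) * (ENNReal.ofReal (l⁻¹ ^ 2) * gradSq g (0 + l⁻¹ • w)) := by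
        rw [← gradSq_comp_smul hgd, gradSq, Finset.mul_sum]
        refine Finset.sum_congr rfl fun k _ => ?_
        rw [fderiv_const_mul (hd w), ← enorm_sq_eq_ofReal, ← mul_pow, ← enorm_mul]
        simp [enorm_eq_nnnorm]
      rw [e1]
      simp only [F, mul_add]
      congr 1
      · rw [← mul_assoc, ← ENNReal.ofReal_mul (by positivity)]
        congr 2
        field_simp
      · have e2 : l • (0 + l⁻¹ • w) = w := by simp [smul_smul, hl.ne']
        rw [e2, ← enorm_eq_nnnorm, enorm_mul, mul_pow, enorm_sq_eq_ofReal c⁻¹,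
          ENNReal.ofReal_mul (by positivity), mul_inv, ENNReal.ofReal_mul (by positivity)]
        simp only [ENNReal.div_eq_inv_mul]
        have : ENNReal.ofReal (l ^ 2)⁻¹ * ENNReal.ofReal (l ^ 2) = 1 := by
          rw [← ENNReal.ofReal_mul (by positivity), inv_mul_cancel₀ (by positivity)]; simp
        rw [← inv_pow c]
        calc _ = (ENNReal.ofReal (l ^ 2)⁻¹ * ENNReal.ofReal (l ^ 2)) * (2⁻¹ *
              (ENNReal.ofReal (V w) * (ENNReal.ofReal (c⁻¹ ^ 2) * ‖g (0 + l⁻¹ • w)‖ₑ ^ 2))) := by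
              ring
          _ = _ := by rw [this, one_mul]
  have h1 := sInf_le hmem
  rw [hscat, lintegral_const_mul' _ _ ENNReal.ofReal_ne_top,
    lintegral_comp_add_smul volume (inv_ne_zero hl.ne') 0 F, ← mul_assoc,
    ← ENNReal.ofReal_mul (by positivity)] at h1
  have e3 : (l ^ 2 * c ^ 2)⁻¹ * |(l⁻¹ ^ Module.finrank ℝ (Vec 3))⁻¹| = l / c ^ 2 := by
    rw [abs_of_pos (by positivity)]
    simp
    field_simp
  rw [e3] at h1
  calc ENNReal.ofReal (4 * π * a / l) * ‖c‖ₑ ^ 2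
      = ENNReal.ofReal (c ^ 2 / l) * ENNReal.ofReal (4 * π * a) := by
        rw [enorm_sq_eq_ofReal, mul_comm, ← ENNReal.ofReal_mul (by positivity),
          ← ENNReal.ofReal_mul (by positivity)]
        congr 1; ring
    _ ≤ ENNReal.ofReal (c ^ 2 / l) * (ENNReal.ofReal (l / c ^ 2) * ∫⁻ x, F x) := by gcongr
    _ = _ := by
        rw [← mul_assoc, ← ENNReal.ofReal_mul (by positivity)]
        have : c ^ 2 / l * (l / c ^ 2) = 1 := by field_simp
        simp [this]

end Scattering

theorem enorm_sum_pow_le_of_subsingleton {α : Type*} {F : Type*} [NormedAddCommGroup F]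
    (s : Finset α) (f : α → F) (n : ℕ)
    (h : ∀ i ∈ s, ∀ j ∈ s, f i ≠ 0 → f j ≠ 0 → i = j) :
    ‖∑ i ∈ s, f i‖ₑ ^ (n + 1) ≤ ∑ i ∈ s, ‖f i‖ₑ ^ (n + 1) := by
  by_cases hz : ∀ i ∈ s, f i = 0
  · rw [Finset.sum_eq_zero hz]
    simp
  · push Not at hz
    obtain ⟨i, hi, hi0⟩ := hz
    rw [Finset.sum_eq_single_of_mem i hi fun j hj hji => by
      by_contra hj0
      exact hji (h j hj i hi hj0 hi0)]
    exact Finset.single_le_sum (f := fun i => ‖f i‖ₑ ^ (n + 1)) (fun _ _ => zero_le) hi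

theorem exists_cutoff {δ : ℝ} (hδ : 0 < δ) {ε : ℝ≥0∞} (hε : ε ≠ 0) :
    ∃ χ : Vec 3 → ℝ, ContDiff ℝ (⊤ : ℕ∞) χ ∧ (∀ x, 0 ≤ χ x) ∧ (∀ x, χ x ≤ 1) ∧
      (∀ x, δ ≤ ‖x‖ → χ x = 0) ∧ (∃ r > 0, ∀ x, ‖x‖ ≤ r → χ x = 1) ∧
      ∫⁻ x, ‖fderiv ℝ χ x‖ₑ ^ 3 ≤ ε := by
  let β : ContDiffBump (0 : Vec 3) := ⟨1, 2, one_pos, one_lt_two⟩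
  have hβ : ContDiff ℝ (⊤ : ℕ∞) β := β.contDiff
  have hβd : Differentiable ℝ β := hβ.differentiable (by simp)
  have hβ0 : ∀ x, 2 < ‖x‖ ∨ ‖x‖ < 1 → fderiv ℝ β x = 0 := by
    intro x hx
    rcases hx with hx | hx
    · have : x ∉ tsupport β := by
        rw [β.tsupport_eq]
        simpa using hx
      exact image_eq_zero_of_notMem_tsupport fun h => this (tsupport_fderiv_subset ℝ h)
    · have : (β : Vec 3 → ℝ) =ᶠ[nhds x] 1 := β.eventuallyEq_one_of_mem_ball (by simpa using hx)
      rw [this.fderiv_eq]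
      exact fderiv_const_apply 1
  set A : ℝ≥0∞ := ∫⁻ x, ‖fderiv ℝ β x‖ₑ ^ 3 with hA
  have hAtop : A ≠ ⊤ := by
    have hc : Continuous fun x => ‖fderiv ℝ β x‖ ^ 3 :=
      (hβ.continuous_fderiv (by simp)).norm.pow 3
    have hs : HasCompactSupport fun x => ‖fderiv ℝ β x‖ ^ 3 := by
      refine (β.hasCompactSupport.fderiv ℝ).comp_left (g := fun L => ‖L‖ ^ 3) (by simp)
    have := (hc.integrable_of_hasCompactSupport (μ := volume) hs).lintegral_lt_top
    refine ne_of_lt (lt_of_eq_of_lt (lintegral_congr fun x => ?_) this)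
    rw [ENNReal.ofReal_pow (norm_nonneg _), ofReal_norm]
  obtain ⟨K, hK⟩ := ENNReal.exists_nat_mul_gt hε hAtop
  have hKpos : 0 < K := by
    rcases Nat.eq_zero_or_pos K with rfl | h
    · simp at hK
    · exact h
  have hK1 : (1 : ℝ) ≤ K := by exact_mod_cast hKpos
  let s : ℕ → ℝ := fun k => 3 * 4 ^ k / δ
  have hs : ∀ k, 0 < s k := fun k => by positivity
  let b : ℕ → Vec 3 → ℝ := fun k x => β (0 + s k • x)
  have hb : ∀ k, ContDiff ℝ (⊤ : ℕ∞) (b k) := fun k => hβ.comp (by fun_prop)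
  have hbd : ∀ k, Differentiable ℝ (b k) := fun k => (hb k).differentiable (by simp)
  have hDb : ∀ k x, fderiv ℝ (b k) x = s k • fderiv ℝ β (0 + s k • x) := by
    intro k x
    ext v
    simp only [b, fderiv_comp_smul_apply hβd]
    simp
  have hnorm : ∀ k (x : Vec 3), ‖0 + s k • x‖ = s k * ‖x‖ := fun k x => by
    rw [zero_add, norm_smul, Real.norm_of_nonneg (hs k).le]
  have hint : ∀ k, ∫⁻ x, ‖fderiv ℝ (b k) x‖ₑ ^ 3 = A := by
    intro k
    simp_rw [hDb, enorm_smul, mul_pow]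
    rw [lintegral_const_mul' _ _ (by finiteness),
      lintegral_comp_add_smul volume (hs k).ne' 0 (fun x => ‖fderiv ℝ β x‖ₑ ^ 3), ← mul_assoc,
      Real.enorm_eq_ofReal (hs k).le, ← ENNReal.ofReal_pow (hs k).le,
      ← ENNReal.ofReal_mul (by have := hs k; positivity)]
    have h1 : s k ^ 3 * |(s k ^ Module.finrank ℝ (Vec 3))⁻¹| = 1 := by
      have := hs k
      rw [abs_of_pos (by positivity)]
      simp [this.ne']
    rw [h1]
    simp [hA]
  refine ⟨fun x => (K : ℝ)⁻¹ * ∑ k ∈ Finset.range K, b k x, ?_, ?_, ?_, ?_, ?_, ?_⟩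
  · exact contDiff_const.mul (ContDiff.sum fun k _ => hb k)
  · intro x
    have : 0 ≤ ∑ k ∈ Finset.range K, b k x := Finset.sum_nonneg fun k _ => β.nonneg
    positivity
  · intro x
    have : ∑ k ∈ Finset.range K, b k x ≤ ∑ k ∈ Finset.range K, 1 :=
      Finset.sum_le_sum fun k _ => β.le_one
    simp only [Finset.sum_const, Finset.card_range, nsmul_eq_mul, mul_one] at this
    rw [inv_mul_le_iff₀ (by positivity)]
    linarith
  · intro x hx
    change (K : ℝ)⁻¹ * ∑ k ∈ Finset.range K, b k x = 0
    rw [Finset.sum_eq_zero, mul_zero]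
    intro k _
    apply β.zero_of_le_dist
    rw [dist_zero_right, hnorm]
    have h4 : (1 : ℝ) ≤ 4 ^ k := one_le_pow₀ (by norm_num)
    calc (2 : ℝ) ≤ 3 * 4 ^ k / δ * δ := by field_simp; linarith
      _ ≤ s k * ‖x‖ := by gcongr
  · refine ⟨(s K)⁻¹, inv_pos.2 (hs K), fun x hx => ?_⟩
    have : ∑ k ∈ Finset.range K, b k x = ∑ k ∈ Finset.range K, 1 := by
      refine Finset.sum_congr rfl fun k hk => ?_
      apply β.one_of_mem_closedBall
      rw [mem_closedBall_zero_iff, hnorm]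
      have h4 : s k ≤ s K := by
        have : (4 : ℝ) ^ k ≤ 4 ^ K := pow_le_pow_right₀ (by norm_num) (Finset.mem_range.1 hk).le
        simp only [s]
        gcongr
      calc s k * ‖x‖ ≤ s K * (s K)⁻¹ := by gcongr
        _ = 1 := mul_inv_cancel₀ (hs K).ne'
    change (K : ℝ)⁻¹ * ∑ k ∈ Finset.range K, b k x = 1
    rw [this]
    simp [hKpos.ne']
  · have hD : ∀ x, ‖fderiv ℝ (fun x => (K : ℝ)⁻¹ * ∑ k ∈ Finset.range K, b k x) x‖ₑ ^ 3
        ≤ ((K : ℝ≥0∞)⁻¹) ^ 3 * ∑ k ∈ Finset.range K, ‖fderiv ℝ (b k) x‖ₑ ^ 3 := by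
      intro x
      rw [fderiv_const_mul (by fun_prop), fderiv_fun_sum fun k _ => hbd k x, enorm_smul, mul_pow,
        enorm_inv (by positivity)]
      have : ‖(K : ℝ)‖ₑ = K := by simp
      rw [this]
      gcongr
      refine enorm_sum_pow_le_of_subsingleton _ _ 2 fun i _ j _ hi hj => ?_
      have key : ∀ i j, fderiv ℝ (b i) x ≠ 0 → fderiv ℝ (b j) x ≠ 0 → ¬ i < j := by
        intro i j hi hj hij
        have h1 : 1 ≤ s i * ‖x‖ := by
          by_contra! h
          exact hi (by rw [hDb, hβ0 _ (Or.inr (by rwa [hnorm])), smul_zero])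
        have h2 : s j * ‖x‖ ≤ 2 := by
          by_contra! h
          exact hj (by rw [hDb, hβ0 _ (Or.inl (by rwa [hnorm])), smul_zero])
        have h3 : 4 * s i ≤ s j := by
          have : (4 : ℝ) ^ (i + 1) ≤ 4 ^ j := pow_le_pow_right₀ (by norm_num) hij
          simp only [s]
          rw [← mul_div_assoc, div_le_div_iff_of_pos_right hδ]
          rw [pow_succ] at this
          linarith
        have := mul_le_mul_of_nonneg_right h3 (norm_nonneg x)
        linarith
      exact le_antisymm (not_lt.1 (key j i hj hi)) (not_lt.1 (key i j hi hj))
    refine (lintegral_mono hD).trans ?_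
    rw [lintegral_const_mul' _ _ (by
      refine ENNReal.pow_ne_top (ENNReal.inv_ne_top.2 (by exact_mod_cast hKpos.ne'))),
      lintegral_finsetSum]
    · simp_rw [hint]
      rw [Finset.sum_const, Finset.card_range, nsmul_eq_mul]
      have hK0 : (K : ℝ≥0∞) ≠ 0 := by exact_mod_cast hKpos.ne'
      have hKt : (K : ℝ≥0∞) ≠ ⊤ := ENNReal.natCast_ne_top K
      have hKle : (K : ℝ≥0∞)⁻¹ ≤ 1 := ENNReal.inv_le_one.2 (by exact_mod_cast hKpos)
      calc (K : ℝ≥0∞)⁻¹ ^ 3 * (K * A) ≤ (K : ℝ≥0∞)⁻¹ ^ 3 * (K * (K * ε)) := by gcongr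
        _ = (K : ℝ≥0∞)⁻¹ * ((K : ℝ≥0∞)⁻¹ * K) * ((K : ℝ≥0∞)⁻¹ * K) * ε := by ring
        _ = (K : ℝ≥0∞)⁻¹ * ε := by rw [ENNReal.inv_mul_cancel hK0 hKt]; ring
        _ ≤ 1 * ε := by gcongr
        _ = ε := one_mul _
    · intro k _
      exact (((hb k).continuous_fderiv (by simp)).enorm.measurable.pow_const 3)

theorem exists_lintegral_sq_mul_sq_le : ∃ C : ℝ≥0, ∀ (u : Vec 3 → ℝ) (w : Vec 3 → ℝ≥0∞),
    ContDiff ℝ 1 u → HasCompactSupport u → Measurable w →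
    ∫⁻ x, w x ^ 2 * ‖u x‖ₑ ^ 2
      ≤ (∫⁻ x, w x ^ 3) ^ (2 / 3 : ℝ) * (C * ∫⁻ x, ‖fderiv ℝ u x‖ₑ ^ 2) := by
  refine ⟨SNormLESNormFDerivOfEqConst ℝ (volume : Measure (Vec 3)) (2 : ℝ≥0) ^ 2,
    fun u w hu hs hw => ?_⟩
  have hS := eLpNorm_le_eLpNorm_fderiv_of_eq (μ := (volume : Measure (Vec 3))) hu hs
    (p := 2) (p' := 6) (by norm_num) (by simp) (by simp; norm_num)
  set K := SNormLESNormFDerivOfEqConst ℝ (volume : Measure (Vec 3)) (2 : ℝ≥0)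
  have h2 : eLpNorm (fderiv ℝ u) (2 : ℝ≥0) volume ^ 2 = ∫⁻ x, ‖fderiv ℝ u x‖ₑ ^ 2 := by
    rw [eLpNorm_eq_lintegral_rpow_enorm_toReal (by simp) (by simp), ← ENNReal.rpow_natCast,
      ← ENNReal.rpow_mul]
    simp
  have h6 : (∫⁻ x, ‖u x‖ₑ ^ 6) ^ (1 / 3 : ℝ) = eLpNorm u (6 : ℝ≥0) volume ^ 2 := by
    rw [eLpNorm_eq_lintegral_rpow_enorm_toReal (by simp) (by simp), ← ENNReal.rpow_natCast,
      ← ENNReal.rpow_mul]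
    simp only [ENNReal.coe_toReal, NNReal.coe_ofNat, Nat.cast_ofNat]
    norm_num
  calc ∫⁻ x, w x ^ 2 * ‖u x‖ₑ ^ 2
      = ∫⁻ x, (w x ^ 3) ^ (2 / 3 : ℝ) * (‖u x‖ₑ ^ 6) ^ (1 / 3 : ℝ) := by
        refine lintegral_congr fun x => ?_
        simp_rw [← ENNReal.rpow_natCast, ← ENNReal.rpow_mul]
        norm_num
    _ ≤ (∫⁻ x, w x ^ 3) ^ (2 / 3 : ℝ) * (∫⁻ x, ‖u x‖ₑ ^ 6) ^ (1 / 3 : ℝ) :=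
        ENNReal.lintegral_mul_norm_pow_le (hw.pow_const 3).aemeasurable
          (hu.continuous.enorm.measurable.pow_const 6).aemeasurable (by norm_num) (by norm_num)
          (by norm_num)
    _ ≤ (∫⁻ x, w x ^ 3) ^ (2 / 3 : ℝ) * (K * eLpNorm (fderiv ℝ u) (2 : ℝ≥0) volume) ^ 2 := by
        rw [h6]
        gcongr
    _ = _ := by
        rw [mul_pow, h2]
        push_cast
        rfl

theorem enorm_zero_clm : ‖(0 : Vec 3 →L[ℝ] ℝ)‖ₑ = 0 := by
  rw [enorm_eq_nnnorm, nnnorm_zero]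
  rfl

theorem enorm_add_sq_le {e : ℝ} (he : 0 < e) (p q : ℝ) :
    ‖p + q‖ₑ ^ 2 ≤ ENNReal.ofReal (1 + e) * ‖p‖ₑ ^ 2 + ENNReal.ofReal (1 + 1 / e) * ‖q‖ₑ ^ 2 := by
  simp_rw [enorm_sq_eq_ofReal]
  rw [← ENNReal.ofReal_mul (by positivity), ← ENNReal.ofReal_mul (by positivity),
    ← ENNReal.ofReal_add (by positivity) (by positivity)]
  apply ENNReal.ofReal_le_ofReal
  have h : 0 ≤ (e * p - q) ^ 2 / e := by positivity
  have : (e * p - q) ^ 2 / e = e * p ^ 2 + 1 / e * q ^ 2 - 2 * p * q := by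
    field_simp
    ring
  linarith

theorem enorm_add_sq_le_two {F : Type*} [NormedAddCommGroup F] (p q : F) :
    ‖p + q‖ₑ ^ 2 ≤ 2 * ‖p‖ₑ ^ 2 + 2 * ‖q‖ₑ ^ 2 := by
  have h := enorm_add_sq_le one_pos ‖p‖ ‖q‖
  norm_num at h
  refine le_trans (pow_le_pow_left' ?_ 2) h
  rw [← enorm_norm (p + q)]
  simp only [enorm_eq_nnnorm]
  norm_cast
  rw [← NNReal.coe_le_coe]
  simp only [coe_nnnorm, Real.norm_eq_abs]
  rw [abs_norm, abs_of_nonneg (by positivity)]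
  exact norm_add_le p q

section LocalScattering

variable {V : Vec 3 → ℝ} {a : ℝ}

theorem gradSq_mul_add_le {e : ℝ} (he : 0 < e) {χ h : Vec 3 → ℝ} (hχ : Differentiable ℝ χ)
    (hh : Differentiable ℝ h) (c : ℝ) (z : Vec 3) :
    gradSq (fun z => χ z * (h z - c) + c) z ≤
      ENNReal.ofReal (1 + e) * (‖χ z‖ₑ ^ 2 * gradSq h z)
        + ENNReal.ofReal (1 + 1 / e) * (3 * ‖fderiv ℝ χ z‖ₑ ^ 2 * ‖h z - c‖ₑ ^ 2) := by
  have hd : ∀ v, fderiv ℝ (fun z => χ z * (h z - c) + c) z v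
      = χ z * fderiv ℝ h z v + (h z - c) * fderiv ℝ χ z v := by
    intro v
    rw [fderiv_add_const, fderiv_fun_mul (hχ z) (by fun_prop), fderiv_sub_const]
    simp
  have h3 : gradSq χ z ≤ 3 * ‖fderiv ℝ χ z‖ₑ ^ 2  := by
    exact_mod_cast gradSq_le χ z
  calc gradSq (fun z => χ z * (h z - c) + c) z
      ≤ ∑ k, (ENNReal.ofReal (1 + e) * (‖χ z‖ₑ ^ 2 * ‖fderiv ℝ h z (Pi.single k 1)‖ₑ ^ 2)
        + ENNReal.ofReal (1 + 1 / e) *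
          (‖h z - c‖ₑ ^ 2 * ‖fderiv ℝ χ z (Pi.single k 1)‖ₑ ^ 2)) := by
        refine Finset.sum_le_sum fun k _ => ?_
        rw [hd, ← mul_pow, ← mul_pow, ← enorm_mul, ← enorm_mul]
        exact enorm_add_sq_le he _ _
    _ = ENNReal.ofReal (1 + e) * (‖χ z‖ₑ ^ 2 * gradSq h z)
        + ENNReal.ofReal (1 + 1 / e) * (‖h z - c‖ₑ ^ 2 * gradSq χ z) := by
        rw [Finset.sum_add_distrib, gradSq, gradSq, Finset.mul_sum, Finset.mul_sum, Finset.mul_sum,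
          Finset.mul_sum]
    _ ≤ _ := by
        rw [mul_comm (3 * _)]
        gcongr

theorem exists_local_scattering_zero
    (hscat : sInf (scatSet3 (fun x => ENNReal.ofReal (V x))) = ENNReal.ofReal (4 * π * a))
    (hVsupp : HasCompactSupport V) {ε δ : ℝ} (hε : 0 < ε) (hδ : 0 < δ) :
    ∃ l₀ > 0, ∀ l ≥ l₀, ∀ (h : Vec 3 → ℝ) (c : ℝ), ContDiff ℝ (⊤ : ℕ∞) h →
      ENNReal.ofReal (4 * π * a / l) * ‖c‖ₑ ^ 2 ≤ ∫⁻ z in Metric.ball 0 δ,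
        (ENNReal.ofReal (1 + ε) *
          (gradSq h z + ENNReal.ofReal (l ^ 2 * V (l • z)) * ‖h z‖ₑ ^ 2 / 2)
          + ENNReal.ofReal ε * ‖h z - c‖ₑ ^ 2) := by
  obtain ⟨C, hC⟩ := exists_lintegral_sq_mul_sq_le
  obtain ⟨R, hR0, hR⟩ : ∃ R > 0, ∀ x, V x ≠ 0 → ‖x‖ ≤ R := by
    obtain ⟨R, hR⟩ := hVsupp.isBounded.subset_closedBall 0
    refine ⟨max R 1, by positivity, fun x hx => le_max_of_le_left ?_⟩
    simpa using hR (subset_tsupport _ hx)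
  let η : ContDiffBump (0 : Vec 3) := ⟨δ / 2, δ * (3 / 4), by positivity, by linarith⟩
  have hη : ContDiff ℝ (⊤ : ℕ∞) η := η.contDiff
  have hηd : Differentiable ℝ η := hη.differentiable (by simp)
  obtain ⟨B, hB⟩ : ∃ B : ℝ≥0, ∀ x, ‖fderiv ℝ η x‖ₑ ≤ B := by
    obtain ⟨B, hB⟩ := (hη.continuous_fderiv (by simp)).bounded_above_of_compact_support
      (η.hasCompactSupport.fderiv ℝ)
    refine ⟨B.toNNReal, fun x => ?_⟩
    rw [← ofReal_norm]
    exact ENNReal.ofReal_le_ofReal (hB x)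
  obtain ⟨t, ht0, ht1⟩ : ∃ t : ℝ≥0, t ≠ 0 ∧
      ENNReal.ofReal (1 + 1 / (ε / 2)) * (3 * (t * (C * (6 + 2 * B ^ 2))))
        ≤ ENNReal.ofReal (ε / 2) := by
    refine ⟨(ε / 2).toNNReal / ((1 + 1 / (ε / 2)).toNNReal * (3 * (C * (6 + 2 * B ^ 2))) + 1),
      ?_, ?_⟩
    · have : 0 < (ε / 2).toNNReal := by simpa using hε
      positivity
    · simp only [ENNReal.ofReal]
      norm_cast
      set P : ℝ≥0 := (1 + 1 / (ε / 2)).toNNReal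
      set Q : ℝ≥0 := C * (6 + 2 * B ^ 2)
      set e : ℝ≥0 := (ε / 2).toNNReal
      calc P * (3 * (e / (P * (3 * Q) + 1) * Q))
          = e * ((P * (3 * Q)) / (P * (3 * Q) + 1)) := by
            ring
        _ ≤ e * 1 := by
            gcongr
            exact div_le_one_of_le₀ (by simp) (by positivity)
        _ = e := mul_one e
  obtain ⟨χ, hχ, hχ0, hχ1, hχδ, ⟨r, hr0, hr⟩, hχi⟩ :=
    exists_cutoff (δ := δ / 2) (by positivity) (ε := (t : ℝ≥0∞) ^ (3 / 2 : ℝ)) (by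
      simp [ENNReal.rpow_eq_zero_iff, ht0])
  have hχd : Differentiable ℝ χ := hχ.differentiable (by simp)
  have hχi' : (∫⁻ x, ‖fderiv ℝ χ x‖ₑ ^ 3) ^ (2 / 3 : ℝ) ≤ t := by
    calc _ ≤ ((t : ℝ≥0∞) ^ (3 / 2 : ℝ)) ^ (2 / 3 : ℝ) := by gcongr
      _ = t := by rw [← ENNReal.rpow_mul]; norm_num
  refine ⟨R / r, by positivity, fun l hl h c hh => ?_⟩
  have hl0 : 0 < l := lt_of_lt_of_le (by positivity) hl
  have hhd : Differentiable ℝ h := hh.differentiable (by simp)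
  have hrδ : r < δ := by
    by_contra! hcon
    have hp : ‖(fun _ => δ : Vec 3)‖ = δ := by
      rw [pi_norm_const, Real.norm_of_nonneg hδ.le]
    have h1 := hr (fun _ => δ) (by rw [hp]; exact hcon)
    have h2 := hχδ (fun _ => δ) (by rw [hp]; linarith)
    linarith
  set g : Vec 3 → ℝ := fun z => χ z * (h z - c) + c with hgdef
  have hg : ContDiff ℝ (⊤ : ℕ∞) g := (hχ.mul (hh.sub contDiff_const)).add contDiff_const
  have hχs : HasCompactSupport χ := by
    refine HasCompactSupport.intro (isCompact_closedBall (0 : Vec 3) (δ / 2)) fun x hx => ?_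
    rw [mem_closedBall_zero_iff, not_le] at hx
    exact hχδ x hx.le
  have hgc : HasCompactSupport fun z => g z - c := by
    have : (fun z => g z - c) = fun z => χ z * (h z - c) := by ext z; simp [g]
    rw [this]
    exact hχs.mul_right
  set u : Vec 3 → ℝ := fun z => η z * (h z - c) with hu
  have huC : ContDiff ℝ 1 u := (hη.mul (hh.sub contDiff_const)).of_le (by simp)
  have hus : HasCompactSupport u := η.hasCompactSupport.mul_right
  have hub : ∫⁻ x, ‖fderiv ℝ u x‖ₑ ^ 2 ≤
      ∫⁻ x in Metric.ball 0 δ, (6 * gradSq h x + 2 * B ^ 2 * ‖h x - c‖ₑ ^ 2) := by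
    rw [← lintegral_indicator Metric.isOpen_ball.measurableSet]
    refine lintegral_mono fun x => ?_
    by_cases hx : x ∈ Metric.ball (0 : Vec 3) δ
    · rw [Set.indicator_of_mem hx, hu, fderiv_fun_mul (hηd x) (by fun_prop), fderiv_sub_const]
      refine (enorm_add_sq_le_two _ _).trans ?_
      rw [enorm_smul, enorm_smul, mul_pow, mul_pow]
      have h1 : ‖η x‖ₑ ≤ 1 := by
        rw [Real.enorm_eq_ofReal η.nonneg]
        exact ENNReal.ofReal_le_one.2 η.le_one
      have h2 : ‖fderiv ℝ h x‖ₑ ^ 2 ≤ 3 * gradSq h x := by exact_mod_cast enorm_fderiv_sq_le h x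
      calc 2 * (‖η x‖ₑ ^ 2 * ‖fderiv ℝ h x‖ₑ ^ 2) + 2 * (‖h x - c‖ₑ ^ 2 * ‖fderiv ℝ η x‖ₑ ^ 2)
          ≤ 2 * (1 ^ 2 * (3 * gradSq h x)) + 2 * (‖h x - c‖ₑ ^ 2 * B ^ 2) := by
            gcongr
            exact hB x
        _ = _ := by ring
    · have h0 : x ∉ tsupport u := fun hxu => by
        have := tsupport_mul_subset_left hxu
        rw [η.tsupport_eq, mem_closedBall_zero_iff] at this
        rw [mem_ball_zero_iff, not_lt] at hx
        change ‖x‖ ≤ δ * (3 / 4) at this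
        linarith
      have : fderiv ℝ u x = 0 :=
        image_eq_zero_of_notMem_tsupport fun h => h0 (tsupport_fderiv_subset ℝ h)
      rw [this, enorm_zero_clm]
      simp
  have hpt : ∀ z, gradSq g z + ENNReal.ofReal (l ^ 2 * V (l • z)) * ‖g z‖ₑ ^ 2 / 2 ≤
      (Metric.ball (0 : Vec 3) δ).indicator (fun z => ENNReal.ofReal (1 + ε / 2) *
        (gradSq h z + ENNReal.ofReal (l ^ 2 * V (l • z)) * ‖h z‖ₑ ^ 2 / 2)) z
      + ENNReal.ofReal (1 + 1 / (ε / 2)) * (3 * (‖fderiv ℝ χ z‖ₑ ^ 2 * ‖u z‖ₑ ^ 2)) := by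
    intro z
    have hgr := gradSq_mul_add_le (half_pos hε) hχd hhd c z
    have hV : ENNReal.ofReal (l ^ 2 * V (l • z)) * ‖g z‖ₑ ^ 2 / 2 ≤
        (Metric.ball (0 : Vec 3) δ).indicator (fun z => ENNReal.ofReal (1 + ε / 2) *
        (ENNReal.ofReal (l ^ 2 * V (l • z)) * ‖h z‖ₑ ^ 2 / 2)) z := by
      by_cases hv : V (l • z) = 0
      · simp [hv]
      · have hz := hR _ hv
        rw [norm_smul, Real.norm_of_nonneg hl0.le] at hz
        have hzr : ‖z‖ ≤ r := by
          have : R ≤ l * r := by rwa [ge_iff_le, div_le_iff₀ hr0] at hl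
          by_contra! hcon
          have := mul_lt_mul_of_pos_left hcon hl0
          linarith
        have hgz : g z = h z := by simp [hgdef, hr z hzr]
        rw [Set.indicator_of_mem (by rw [mem_ball_zero_iff]; linarith), hgz]
        refine le_mul_of_one_le_left zero_le ?_
        rw [ENNReal.one_le_ofReal]
        linarith
    have hG : ENNReal.ofReal (1 + ε / 2) * (‖χ z‖ₑ ^ 2 * gradSq h z) ≤
        (Metric.ball (0 : Vec 3) δ).indicator
          (fun z => ENNReal.ofReal (1 + ε / 2) * gradSq h z) z := by
      by_cases hz : z ∈ Metric.ball (0 : Vec 3) δ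
      · rw [Set.indicator_of_mem hz]
        gcongr
        refine mul_le_of_le_one_left zero_le ?_
        refine pow_le_one₀ zero_le ?_
        rw [Real.enorm_eq_ofReal (hχ0 z)]
        exact ENNReal.ofReal_le_one.2 (hχ1 z)
      · rw [mem_ball_zero_iff, not_lt] at hz
        rw [hχδ z (by linarith)]
        simp
    have hD : 3 * ‖fderiv ℝ χ z‖ₑ ^ 2 * ‖h z - c‖ₑ ^ 2
        = 3 * (‖fderiv ℝ χ z‖ₑ ^ 2 * ‖u z‖ₑ ^ 2) := by
      rw [mul_assoc]
      by_cases hz : ‖z‖ ≤ δ / 2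
      · have : η z = 1 := η.one_of_mem_closedBall (by rwa [mem_closedBall_zero_iff])
        simp [hu, this]
      · have h0 : z ∉ tsupport χ := fun hx => by
          have : tsupport χ ⊆ Metric.closedBall 0 (δ / 2) := by
            refine closure_minimal (fun x hx => ?_) Metric.isClosed_closedBall
            rw [mem_closedBall_zero_iff]
            by_contra! hcon
            exact hx (hχδ x hcon.le)
          exact hz (mem_closedBall_zero_iff.1 (this hx))
        have : fderiv ℝ χ z = 0 :=
          image_eq_zero_of_notMem_tsupport fun h => h0 (tsupport_fderiv_subset ℝ h)
        rw [this, enorm_zero_clm]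
        simp
    rw [hD] at hgr
    calc _ ≤ _ := add_le_add (hgr.trans (add_le_add_left hG _)) hV
      _ = _ := by
        simp only [Set.indicator]
        split_ifs <;> ring
  have hmball : MeasurableSet (Metric.ball (0 : Vec 3) δ) := Metric.isOpen_ball.measurableSet
  have hmh : Measurable fun z => ‖h z - c‖ₑ ^ 2 :=
    ((hh.continuous.sub continuous_const).enorm.measurable.pow_const 2)
  have hmG : Measurable (gradSq h) := by
    refine Finset.measurable_sum _ fun k _ => ?_
    exact (((hh.continuous_fderiv (by simp)).clm_apply continuous_const).enorm.measurable.pow_const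
      2)
  have hmw : Measurable fun z => ‖fderiv ℝ χ z‖ₑ :=
    (hχ.continuous_fderiv (by simp)).enorm.measurable
  have hmu : Measurable fun z => ‖u z‖ₑ := huC.continuous.enorm.measurable
  have herr : ENNReal.ofReal (1 + 1 / (ε / 2)) *
      ∫⁻ z, (3 * (‖fderiv ℝ χ z‖ₑ ^ 2 * ‖u z‖ₑ ^ 2)) ≤
      ENNReal.ofReal (ε / 2) * ∫⁻ z in Metric.ball 0 δ, (gradSq h z + ‖h z - c‖ₑ ^ 2) := by
    rw [lintegral_const_mul' _ _ (by simp)]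
    calc _ ≤ ENNReal.ofReal (1 + 1 / (ε / 2)) * (3 * (t * (C *
          ∫⁻ x in Metric.ball 0 δ, (6 * gradSq h x + 2 * B ^ 2 * ‖h x - c‖ₑ ^ 2)))) := by
          gcongr
          refine (hC u _ huC hus hmw).trans ?_
          gcongr
      _ ≤ ENNReal.ofReal (1 + 1 / (ε / 2)) * (3 * (t * (C *
          ∫⁻ x in Metric.ball 0 δ, ((6 + 2 * B ^ 2) * (gradSq h x + ‖h x - c‖ₑ ^ 2))))) := by
          gcongr with x
          calc 6 * gradSq h x + 2 * (B : ℝ≥0∞) ^ 2 * ‖h x - c‖ₑ ^ 2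
              ≤ 6 * gradSq h x + 2 * (B : ℝ≥0∞) ^ 2 * ‖h x - c‖ₑ ^ 2
                + (2 * (B : ℝ≥0∞) ^ 2 * gradSq h x + 6 * ‖h x - c‖ₑ ^ 2) := le_self_add
            _ = _ := by ring
      _ = (ENNReal.ofReal (1 + 1 / (ε / 2)) * (3 * (t * (C * (6 + 2 * B ^ 2))))) *
          ∫⁻ x in Metric.ball 0 δ, (gradSq h x + ‖h x - c‖ₑ ^ 2) := by
          rw [lintegral_const_mul' _ _ (by finiteness)]
          ring
      _ ≤ _ := by gcongr
  refine (scattering_le hscat hl0 hg hgc).trans ?_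
  refine (lintegral_mono hpt).trans ?_
  rw [lintegral_add_right _ (by fun_prop), lintegral_const_mul' _ _ (by simp),
    lintegral_indicator hmball]
  refine (add_le_add_right herr _).trans ?_
  rw [← lintegral_const_mul' _ _ (by simp), ← lintegral_add_right _ (by fun_prop)]
  refine lintegral_mono fun z => ?_
  set X := gradSq h z
  set Y := ENNReal.ofReal (l ^ 2 * V (l • z)) * ‖h z‖ₑ ^ 2 / 2
  set Z := ‖h z - c‖ₑ ^ 2
  have e1 : ENNReal.ofReal (1 + ε) = ENNReal.ofReal (1 + ε / 2) + ENNReal.ofReal (ε / 2) := by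
    rw [← ENNReal.ofReal_add (by positivity) (by positivity)]
    congr 1; ring
  have e2 : ENNReal.ofReal (ε / 2) ≤ ENNReal.ofReal ε := ENNReal.ofReal_le_ofReal (by linarith)
  calc ENNReal.ofReal (1 + ε / 2) * (X + Y) + ENNReal.ofReal (ε / 2) * (X + Z)
      ≤ ENNReal.ofReal (1 + ε / 2) * (X + Y) + (ENNReal.ofReal (ε / 2) * ((X + Y) + Z)) := by
        gcongr
        exact le_self_add
    _ = ENNReal.ofReal (1 + ε) * (X + Y) + ENNReal.ofReal (ε / 2) * Z := by rw [e1]; ring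
    _ ≤ _ := by gcongr

theorem exists_local_scattering
    (hscat : sInf (scatSet3 (fun x => ENNReal.ofReal (V x))) = ENNReal.ofReal (4 * π * a))
    (hVsupp : HasCompactSupport V) {ε δ : ℝ} (hε : 0 < ε) (hδ : 0 < δ) :
    ∃ l₀ > 0, ∀ l ≥ l₀, ∀ (h : Vec 3 → ℝ) (c : ℝ) (y : Vec 3), ContDiff ℝ (⊤ : ℕ∞) h →
      ENNReal.ofReal (4 * π * a / l) * ‖c‖ₑ ^ 2 ≤ ∫⁻ z in Metric.ball y δ,
        (ENNReal.ofReal (1 + ε) *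
          (gradSq h z + ENNReal.ofReal (l ^ 2 * V (l • (z - y))) * ‖h z‖ₑ ^ 2 / 2)
          + ENNReal.ofReal ε * ‖h z - c‖ₑ ^ 2) := by
  obtain ⟨l₀, hl₀, H⟩ := exists_local_scattering_zero hscat hVsupp hε hδ
  refine ⟨l₀, hl₀, fun l hl h c y hh => ?_⟩
  refine (H l hl (fun z => h (y + (1 : ℝ) • z)) c (hh.comp (by fun_prop))).trans_eq ?_
  have hmp : MeasurePreserving (fun z : Vec 3 => y + z) volume volume :=
    measurePreserving_add_left volume y
  have hpre : (fun z : Vec 3 => y + z) ⁻¹' Metric.ball y δ = Metric.ball 0 δ := by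
    ext z
    simp [dist_eq_norm]
  rw [← hmp.setLIntegral_comp_preimage_emb (MeasurableEquiv.addLeft y).measurableEmbedding _
    (Metric.ball y δ), hpre]
  refine lintegral_congr fun z => ?_
  rw [gradSq_comp_smul (hh.differentiable (by simp))]
  simp

end LocalScattering

section Configurations

variable {ι : Type*} [Fintype ι] [DecidableEq ι]

theorem volume_Icc_zero_one_vec : volume (Set.Icc (0 : ι → Vec 3) 1) = 1 := by
  rw [← Set.pi_univ_Icc, volume_pi, Measure.pi_pi]
  refine Finset.prod_eq_one fun i _ => ?_
  simp [Real.volume_Icc_pi]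

theorem volume_restrict_Icc_vec (u v : ι → Vec 3) :
    (volume.restrict (Set.Icc u v) : Measure (ι → Vec 3))
      = Measure.pi fun i => volume.restrict (Set.Icc (u i) (v i)) := by
  rw [← Set.pi_univ_Icc, volume_pi, Measure.restrict_pi_pi]

/-- Configurations in the unit cube whose points keep distance `δ` from the boundary and `2 δ` from
each other. -/
def separated (ι : Type*) (δ : ℝ) : Set (ι → Vec 3) :=
  {x | (∀ j k, δ ≤ x j k ∧ x j k ≤ 1 - δ) ∧ ∀ i j, i ≠ j → 2 * δ ≤ ‖x i - x j‖}

theorem separated_anti {δ δ' : ℝ} (h : δ ≤ δ') : separated ι δ' ⊆ separated ι δ := by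
  rintro x ⟨h1, h2⟩
  exact ⟨fun j k => ⟨h.trans (h1 j k).1, (h1 j k).2.trans (by linarith)⟩,
    fun i j hij => le_trans (by linarith) (h2 i j hij)⟩

theorem isClosed_separated (δ : ℝ) : IsClosed (separated ι δ) := by
  have : separated ι δ = (⋂ j, ⋂ k, ({x : ι → Vec 3 | δ ≤ x j k} ∩ {x | x j k ≤ 1 - δ})) ∩
      ⋂ i, ⋂ j, ⋂ (_ : i ≠ j), {x | 2 * δ ≤ ‖x i - x j‖} := by
    ext x
    simp [separated]
  rw [this]
  refine IsClosed.inter (isClosed_iInter fun j => isClosed_iInter fun k => ?_)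
    (isClosed_iInter fun i => isClosed_iInter fun j => isClosed_iInter fun _ => ?_)
  · exact (isClosed_le (by fun_prop) (by fun_prop)).inter (isClosed_le (by fun_prop) (by fun_prop))
  · exact isClosed_le (by fun_prop) (by fun_prop)

theorem volume_coord_eq_zero (j : ι) (k : Fin 3) (t : ℝ) :
    volume {x : ι → Vec 3 | x j k = t} = 0 := by
  rw [volume_pi]
  have h : (volume : Measure (Vec 3)) {v | v k = t} = 0 := by
    rw [volume_pi]
    exact Measure.pi_hyperplane (fun _ : Fin 3 => (volume : Measure ℝ)) k t
  exact Measure.pi_eval_preimage_null (fun _ : ι => (volume : Measure (Vec 3))) (i := j) h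

theorem volume_coord_eq_coord {i j : ι} (hij : i ≠ j) (k : Fin 3) :
    volume {x : ι → Vec 3 | x i k = x j k} = 0 := by
  let L : (ι → Vec 3) →ₗ[ℝ] ℝ :=
    (LinearMap.proj k : Vec 3 →ₗ[ℝ] ℝ) ∘ₗ
      ((LinearMap.proj i : (ι → Vec 3) →ₗ[ℝ] Vec 3) - LinearMap.proj j)
  have hL : {x : ι → Vec 3 | x i k = x j k} = (LinearMap.ker L : Set (ι → Vec 3)) := by
    ext x
    simp [L, sub_eq_zero]
  rw [hL]
  refine Measure.addHaar_submodule volume _ fun htop => ?_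
  have : L (Pi.single i (Pi.single k 1)) = 0 := by
    rw [← LinearMap.mem_ker, htop]
    trivial
  simp [L, hij.symm] at this

theorem exists_volume_separated_ge (ι : Type*) [Fintype ι] [DecidableEq ι] {θ : ℝ≥0∞}
    (hθ : θ < 1) : ∃ δ > 0, θ ≤ volume (separated ι δ) := by
  let s : ℕ → Set (ι → Vec 3) := fun m => separated ι (1 / ((m : ℝ) + 1))
  have hs : Monotone s := fun m n hmn => separated_anti (by gcongr)
  have hnull : volume (Set.Icc (0 : ι → Vec 3) 1 \ ⋃ m, s m) = 0 := by
    refine measure_mono_null (t := (⋃ j, ⋃ k, ({x : ι → Vec 3 | x j k = 0} ∪ {x | x j k = 1})) ∪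
      ⋃ i, ⋃ j, ⋃ (_ : i ≠ j), {x : ι → Vec 3 | x i 0 = x j 0}) ?_ ?_
    · rintro x ⟨hx, hxs⟩
      by_contra hcon
      simp only [Set.mem_union, Set.mem_iUnion, Set.mem_ofPred_eq, not_or, not_exists] at hcon
      obtain ⟨h1, h2⟩ := hcon
      have hev : ∀ᶠ m : ℕ in atTop, x ∈ s m := by
        have ht : Tendsto (fun m : ℕ => 1 / ((m : ℝ) + 1)) atTop (nhds 0) :=
          tendsto_one_div_add_atTop_nhds_zero_nat
        simp only [s, separated, Set.mem_ofPred_eq, eventually_and, eventually_all]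
        refine ⟨fun j k => ⟨?_, ?_⟩, fun i j hij => ?_⟩
        · have : 0 < x j k := lt_of_le_of_ne (hx.1 j k) (Ne.symm (h1 j k).1)
          exact (ht.eventually_lt_const this).mono fun m hm => hm.le
        · have : 0 < 1 - x j k := sub_pos.2 (lt_of_le_of_ne (hx.2 j k) (h1 j k).2)
          filter_upwards [ht.eventually_lt_const this] with m hm
          linarith
        · have : 0 < ‖x i - x j‖ := norm_pos_iff.2 fun h => h2 i j hij (by
            rw [sub_eq_zero.1 h])
          have ht2 := ht.const_mul 2
          rw [mul_zero] at ht2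
          exact (ht2.eventually_lt_const this).mono fun m hm => hm.le
      obtain ⟨m, hm⟩ := hev.exists
      exact hxs (Set.mem_iUnion.2 ⟨m, hm⟩)
    · refine measure_union_null ?_ ?_
      · exact measure_iUnion_null fun j => measure_iUnion_null fun k =>
          measure_union_null (volume_coord_eq_zero j k 0) (volume_coord_eq_zero j k 1)
      · exact measure_iUnion_null fun i => measure_iUnion_null fun j =>
          measure_iUnion_null fun hij => volume_coord_eq_coord hij 0
  have hU : 1 ≤ volume (⋃ m, s m) := by
    rw [← volume_Icc_zero_one_vec (ι := ι)]
    have h := measure_le_inter_add_sdiff volume (Set.Icc (0 : ι → Vec 3) 1) (⋃ m, s m)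
    rw [hnull, add_zero] at h
    exact h.trans (measure_mono Set.inter_subset_right)
  have ht := tendsto_measure_iUnion_atTop (μ := volume) hs
  obtain ⟨m, hm⟩ := (ht.eventually_const_lt (lt_of_lt_of_le hθ hU)).exists
  exact ⟨1 / ((m : ℝ) + 1), by positivity, hm.le⟩

theorem lintegral_lintegral_update {X : ι → Type*} [∀ i, MeasurableSpace (X i)]
    (μ : ∀ i, Measure (X i)) [∀ i, IsProbabilityMeasure (μ i)] {f : (∀ i, X i) → ℝ≥0∞}
    (hf : Measurable f) (i : ι) :
    ∫⁻ x, ∫⁻ z, f (Function.update x i z) ∂μ i ∂Measure.pi μ = ∫⁻ x, f x ∂Measure.pi μ := by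
  have hm := hf.lmarginal μ (s := {i})
  refine lintegral_eq_of_lmarginal_eq {i} (f := fun x => ∫⁻ z, f (Function.update x i z) ∂μ i)
    ?_ hf ?_
  · rwa [lmarginal_singleton] at hm
  · ext x
    simp [lmarginal_singleton]

end Configurations

section BodyEnergy

variable {ι F : Type*} [Fintype ι] [DecidableEq ι] [NormedAddCommGroup F] [NormedSpace ℝ F]

/-- The squared gradient of `φ` with respect to the position of the particle `i`. -/
def parSq (φ : (ι → Vec 3) → F) (i : ι) (x : ι → Vec 3) : ℝ≥0∞ :=
  ∑ k, ‖fderiv ℝ φ x (Pi.single i (Pi.single k 1))‖ₑ ^ 2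

/-- The interaction energy density of the particle `i` with the other ones. -/
def pairE (V : Vec 3 → ℝ) (l : ℝ) (φ : (ι → Vec 3) → F) (i : ι) (x : ι → Vec 3) : ℝ≥0∞ :=
  ∑ j ∈ Finset.univ.erase i, ENNReal.ofReal (l ^ 2 * V (l • (x i - x j))) * ‖φ x‖ₑ ^ 2 / 2

/-- The energy density of `φ` for the interaction potential `l ^ 2 * V (l • x)`. -/
def bodyE (V : Vec 3 → ℝ) (l : ℝ) (φ : (ι → Vec 3) → F) (x : ι → Vec 3) : ℝ≥0∞ :=
  ∑ i, (parSq φ i x + pairE V l φ i x)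

theorem measurable_parSq {φ : (ι → Vec 3) → F} (hφ : ContDiff ℝ (⊤ : ℕ∞) φ) (i : ι) :
    Measurable (parSq φ i) := by
  refine Finset.measurable_sum _ fun k _ => ?_
  have : Continuous fun x => ‖fderiv ℝ φ x (Pi.single i (Pi.single k 1))‖ₑ ^ 2 :=
    (ENNReal.continuous_pow 2).comp
      ((hφ.continuous_fderiv (by simp)).clm_apply continuous_const).enorm
  exact this.measurable

theorem measurable_enorm_sq {φ : (ι → Vec 3) → F} (hφ : Continuous φ) :
    Measurable fun x => ‖φ x‖ₑ ^ 2 :=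
  ((ENNReal.continuous_pow 2).comp hφ.enorm).measurable

theorem measurable_pairE {V : Vec 3 → ℝ} (hV : Measurable V) (l : ℝ) {φ : (ι → Vec 3) → F}
    (hφ : Continuous φ) (i : ι) : Measurable (pairE V l φ i) := by
  refine Finset.measurable_sum _ fun j _ => ?_
  have h1 : Measurable fun x : ι → Vec 3 => V (l • (x i - x j)) := hV.comp (by fun_prop)
  have h2 := measurable_enorm_sq hφ
  fun_prop

theorem gradSq_update {φ : (ι → Vec 3) → ℝ} (hφ : Differentiable ℝ φ) (x : ι → Vec 3) (i : ι)
    (z : Vec 3) :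
    gradSq (fun z => φ (Function.update x i z)) z = parSq φ i (Function.update x i z) := by
  refine Finset.sum_congr rfl fun k _ => ?_
  have h := (hφ (Function.update x i z)).hasFDerivAt.comp z (hasFDerivAt_update x z)
  have h' : fderiv ℝ (fun z => φ (Function.update x i z)) z = _ := h.fderiv
  rw [h', ContinuousLinearMap.comp_apply]
  congr 3
  ext j m
  rcases eq_or_ne j i with rfl | hj
  · simp
  · simp [hj]

variable {V : Vec 3 → ℝ} {a : ℝ}

theorem card_mul_le_of_mem_separated {ε δ l : ℝ}
    (H : ∀ (h : Vec 3 → ℝ) (c : ℝ) (y : Vec 3), ContDiff ℝ (⊤ : ℕ∞) h →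
      ENNReal.ofReal (4 * π * a / l) * ‖c‖ₑ ^ 2 ≤ ∫⁻ z in Metric.ball y δ,
        (ENNReal.ofReal (1 + ε) *
          (gradSq h z + ENNReal.ofReal (l ^ 2 * V (l • (z - y))) * ‖h z‖ₑ ^ 2 / 2)
          + ENNReal.ofReal ε * ‖h z - c‖ₑ ^ 2))
    {φ : (ι → Vec 3) → ℝ} (hφ : ContDiff ℝ (⊤ : ℕ∞) φ) (c : ℝ) (i : ι) {x : ι → Vec 3}
    (hx : x ∈ separated ι δ) :
    ((Fintype.card ι - 1 : ℕ) : ℝ≥0∞) * (ENNReal.ofReal (4 * π * a / l) * ‖c‖ₑ ^ 2)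
      ≤ ∫⁻ z in Set.Icc 0 1, (fun x => ENNReal.ofReal (1 + ε) * (parSq φ i x + pairE V l φ i x)
          + ENNReal.ofReal ε * ‖φ x - c‖ₑ ^ 2) (Function.update x i z) := by
  set G : Vec 3 → ℝ≥0∞ := fun z =>
    (fun x => ENNReal.ofReal (1 + ε) * (parSq φ i x + pairE V l φ i x)
          + ENNReal.ofReal ε * ‖φ x - c‖ₑ ^ 2) (Function.update x i z) with hG
  have hφd : Differentiable ℝ φ := hφ.differentiable (by simp)
  have hball : ∀ j ∈ Finset.univ.erase i, ENNReal.ofReal (4 * π * a / l) * ‖c‖ₑ ^ 2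
      ≤ ∫⁻ z in Metric.ball (x j) δ, G z := by
    intro j hj
    have hji : j ≠ i := Finset.ne_of_mem_erase hj
    refine (H (fun z => φ (Function.update x i z)) c (x j)
      (hφ.comp (contDiff_update _ _ _))).trans ?_
    refine lintegral_mono fun z => ?_
    rw [gradSq_update hφd]
    simp only [hG]
    gcongr
    refine le_trans (le_of_eq ?_) (Finset.single_le_sum (f := fun j =>
      ENNReal.ofReal (l ^ 2 * V (l • (Function.update x i z i - Function.update x i z j))) *
        ‖φ (Function.update x i z)‖ₑ ^ 2 / 2) (fun _ _ => zero_le) hj)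
    simp [hji]
  calc ((Fintype.card ι - 1 : ℕ) : ℝ≥0∞) * (ENNReal.ofReal (4 * π * a / l) * ‖c‖ₑ ^ 2)
      = ∑ j ∈ Finset.univ.erase i, ENNReal.ofReal (4 * π * a / l) * ‖c‖ₑ ^ 2 := by
        rw [Finset.sum_const, nsmul_eq_mul, Finset.card_erase_of_mem (Finset.mem_univ i),
          Finset.card_univ]
    _ ≤ ∑ j ∈ Finset.univ.erase i, ∫⁻ z in Metric.ball (x j) δ, G z := Finset.sum_le_sum hball
    _ = ∫⁻ z in ⋃ j ∈ Finset.univ.erase i, Metric.ball (x j) δ, G z := by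
        rw [lintegral_biUnion_finset]
        · intro j _ k _ hjk
          refine Set.disjoint_left.2 fun z hz hz' => ?_
          have := hx.2 j k hjk
          rw [← dist_eq_norm] at this
          rw [Metric.mem_ball] at hz hz'
          have := dist_triangle_left (x j) (x k) z
          linarith
        · exact fun j _ => Metric.isOpen_ball.measurableSet
    _ ≤ ∫⁻ z in Set.Icc 0 1, G z := by
        refine lintegral_mono_set ?_
        refine Set.iUnion₂_subset fun j _ z hz => ?_
        rw [Metric.mem_ball, dist_eq_norm] at hz
        have hk : ∀ k, |z k - x j k| < δ := fun k =>
          lt_of_le_of_lt (norm_le_pi_norm (z - x j) k) hz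
        refine ⟨fun k => ?_, fun k => ?_⟩
        · have h1 := (hx.1 j k).1
          have h2 := (abs_lt.1 (hk k)).1
          change 0 ≤ z k
          linarith
        · have h1 := (hx.1 j k).2
          have h2 := (abs_lt.1 (hk k)).2
          change z k ≤ 1
          linarith

theorem enorm_fderiv_sq_le_sum_parSq (φ : (ι → Vec 3) → ℝ) (x : ι → Vec 3) :
    ‖fderiv ℝ φ x‖ₑ ^ 2 ≤ 3 * Fintype.card ι * ∑ i, parSq φ i x := by
  set L := fderiv ℝ φ x
  have h1 : ∀ i, ‖L.comp (ContinuousLinearMap.single ℝ (fun _ => Vec 3) i)‖ ^ 2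
      ≤ 3 * ∑ k, (L (Pi.single i (Pi.single k 1))) ^ 2 := by
    intro i
    have := enorm_clm_sq_le (L.comp (ContinuousLinearMap.single ℝ (fun _ => Vec 3) i))
    rw [← ofReal_norm, ← ENNReal.ofReal_pow (norm_nonneg _),
      ENNReal.ofReal_le_ofReal_iff (by positivity)] at this
    simpa using this
  have h2 : ∑ i, parSq φ i x
      = ENNReal.ofReal (∑ i, ∑ k, (L (Pi.single i (Pi.single k 1))) ^ 2) := by
    rw [ENNReal.ofReal_sum_of_nonneg fun i _ => Finset.sum_nonneg fun k _ => sq_nonneg _]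
    refine Finset.sum_congr rfl fun i _ => ?_
    rw [ENNReal.ofReal_sum_of_nonneg fun k _ => sq_nonneg _]
    simp_rw [parSq, enorm_sq_eq_ofReal]
    rfl
  have h3 : (3 : ℝ≥0∞) * Fintype.card ι = ENNReal.ofReal (3 * Fintype.card ι) := by
    rw [ENNReal.ofReal_mul (by norm_num), ENNReal.ofReal_natCast]
    simp
  rw [h2, h3, ← ENNReal.ofReal_mul (by positivity), ← ofReal_norm,
    ← ENNReal.ofReal_pow (norm_nonneg _)]
  apply ENNReal.ofReal_le_ofReal
  calc ‖L‖ ^ 2 ≤ (∑ i, ‖L.comp (ContinuousLinearMap.single ℝ (fun _ => Vec 3) i)‖) ^ 2 := by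
        gcongr
        exact opNorm_le_sum_single L
    _ ≤ Fintype.card ι * ∑ i, ‖L.comp (ContinuousLinearMap.single ℝ (fun _ => Vec 3) i)‖ ^ 2 :=
        sq_sum_le_card_mul_sum_sq
    _ ≤ Fintype.card ι * ∑ i, 3 * ∑ k, (L (Pi.single i (Pi.single k 1))) ^ 2 := by
        gcongr with i
        exact h1 i
    _ = _ := by
        rw [← Finset.mul_sum]
        ring

end BodyEnergy

section BodyEnergyLower

variable {V : Vec 3 → ℝ} {a : ℝ}

theorem exists_le_lintegral_bodyE_real
    (hscat : sInf (scatSet3 (fun x => ENNReal.ofReal (V x))) = ENNReal.ofReal (4 * π * a))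
    (hVsupp : HasCompactSupport V) (hV : Measurable V) (ha : 0 < a)
    (ι : Type*) [Fintype ι] [DecidableEq ι] {ε : ℝ} (hε : 0 < ε) :
    ∃ l₀ > 0, ∀ l ≥ l₀, ∀ φ : (ι → Vec 3) → ℝ, ContDiff ℝ (⊤ : ℕ∞) φ →
      ENNReal.ofReal (Fintype.card ι * (Fintype.card ι - 1 : ℕ) * (4 * π * a / l)) *
        ∫⁻ x in Set.Icc 0 1, ‖φ x‖ₑ ^ 2
      ≤ ENNReal.ofReal (1 + ε) * ∫⁻ x in Set.Icc 0 1, bodyE V l φ x := by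
  set n : ℕ := Fintype.card ι
  set m : ℕ := Fintype.card ι - 1
  set K : ℝ := 2 ^ Module.finrank ℝ (ι → Vec 3) * (3 * n) with hK
  have hK0 : 0 ≤ K := by positivity
  obtain ⟨e, he0, he⟩ : ∃ e > 0, (1 + e) * ((1 + e) * (1 + e + n * e * K)) ≤ 1 + ε / 2 := by
    have hcont : Continuous fun e : ℝ => (1 + e) * ((1 + e) * (1 + e + n * e * K)) := by fun_prop
    have ht := (hcont.tendsto 0).mono_left (nhdsWithin_le_nhds (s := Set.Ioi 0))
    norm_num at ht
    have h1 : (1 : ℝ) < 1 + ε / 2 := by linarith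
    obtain ⟨e, he, he0⟩ := ((ht.eventually_lt_const h1).and self_mem_nhdsWithin).exists
    exact ⟨e, he0, he.le⟩
  have hθ : ENNReal.ofReal (1 / (1 + e)) < 1 := by
    rw [ENNReal.ofReal_lt_one, div_lt_one (by positivity)]
    linarith
  obtain ⟨δ, hδ, hG⟩ := exists_volume_separated_ge ι hθ
  obtain ⟨l₁, hl₁, H⟩ := exists_local_scattering hscat hVsupp he0 hδ
  set P : ℝ := (1 + 1 / e) * (n * m * (4 * π * a)) * K with hP
  have hP0 : 0 ≤ P := by positivity
  refine ⟨max l₁ (2 * P / ε), by positivity, fun l hl φ hφ => ?_⟩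
  have hll : l ≥ l₁ := le_trans (le_max_left _ _) hl
  have hl0 : 0 < l := lt_of_lt_of_le hl₁ hll
  have hlP : P / l ≤ ε / 2 := by
    have h1 : 2 * P / ε ≤ l := le_trans (le_max_right _ _) hl
    rw [div_le_iff₀ hε] at h1
    rw [div_le_iff₀ hl0]
    linarith
  set Q : Set (ι → Vec 3) := Set.Icc 0 1 with hQ
  have hQm : MeasurableSet Q := measurableSet_Icc
  have hφd : Differentiable ℝ φ := hφ.differentiable (by simp)
  obtain ⟨c, hc⟩ := exists_lintegral_enorm_sub_sq_le volume hQm (convex_Icc 0 1)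
    volume_Icc_zero_one_vec (fun x hx y hy => by
      refine (pi_norm_le_iff_of_nonneg zero_le_one).2 fun i =>
        (pi_norm_le_iff_of_nonneg zero_le_one).2 fun k => ?_
      have h1 : 0 ≤ x i k := hx.1 i k
      have h2 : x i k ≤ 1 := hx.2 i k
      have h3 : 0 ≤ y i k := hy.1 i k
      have h4 : y i k ≤ 1 := hy.2 i k
      change |x i k - y i k| ≤ 1
      rw [abs_le]
      constructor <;> linarith) (hφ.of_le (by simp) : ContDiff ℝ 1 φ)
  set E : ℝ≥0∞ := ∫⁻ x in Q, bodyE V l φ x with hE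
  set D : ℝ≥0∞ := ∫⁻ x in Q, ‖φ x - c‖ₑ ^ 2
  have hD : D ≤ ENNReal.ofReal K * E := by
    refine hc.trans ?_
    have hKe : ENNReal.ofReal K = 2 ^ Module.finrank ℝ (ι → Vec 3) * (3 * n) := by
      rw [hK, ENNReal.ofReal_mul (by positivity), ENNReal.ofReal_pow (by norm_num),
        ENNReal.ofReal_mul (by norm_num), ENNReal.ofReal_natCast]
      simp
    rw [hKe, mul_assoc]
    gcongr
    rw [hE, ← lintegral_const_mul' _ _ (by finiteness)]
    refine lintegral_mono fun x => (enorm_fderiv_sq_le_sum_parSq φ x).trans ?_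
    gcongr
    exact Finset.sum_le_sum fun i _ => le_self_add
  have hmd : Measurable fun x => ‖φ x - c‖ₑ ^ 2 :=
    measurable_enorm_sq (hφ.continuous.sub continuous_const)
  have hmi : ∀ i, Measurable fun x => parSq φ i x + pairE V l φ i x := fun i =>
    (measurable_parSq hφ i).add (measurable_pairE hV l hφ.continuous i)
  have hi : ∀ i, ENNReal.ofReal (1 / (1 + e)) *
      ((m : ℝ≥0∞) * (ENNReal.ofReal (4 * π * a / l) * ‖c‖ₑ ^ 2))
      ≤ ENNReal.ofReal (1 + e) * (∫⁻ x in Q, (parSq φ i x + pairE V l φ i x))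
        + ENNReal.ofReal e * D := by
    intro i
    have hmF : Measurable fun x => ENNReal.ofReal (1 + e) * (parSq φ i x + pairE V l φ i x)
          + ENNReal.ofReal e * ‖φ x - c‖ₑ ^ 2 := ((hmi i).const_mul _).add (hmd.const_mul _)
    have hprob : IsProbabilityMeasure (volume.restrict (Set.Icc (0 : Vec 3) 1)) :=
      ⟨by simp [Real.volume_Icc_pi]⟩
    have hup := lintegral_lintegral_update
      (fun _ : ι => volume.restrict (Set.Icc (0 : Vec 3) 1)) hmF i
    have hQr := volume_restrict_Icc_vec (0 : ι → Vec 3) 1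
    simp only [Pi.zero_apply, Pi.one_apply] at hQr
    rw [← hQr] at hup
    calc _ ≤ volume (separated ι δ) *
          ((m : ℝ≥0∞) * (ENNReal.ofReal (4 * π * a / l) * ‖c‖ₑ ^ 2)) := by gcongr
      _ = ∫⁻ x in separated ι δ, (m : ℝ≥0∞) * (ENNReal.ofReal (4 * π * a / l) * ‖c‖ₑ ^ 2) := by
          rw [setLIntegral_const, mul_comm]
      _ ≤ ∫⁻ x in separated ι δ, ∫⁻ z in Set.Icc 0 1,
            (fun x => ENNReal.ofReal (1 + e) * (parSq φ i x + pairE V l φ i x)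
              + ENNReal.ofReal e * ‖φ x - c‖ₑ ^ 2) (Function.update x i z) :=
          setLIntegral_mono' (isClosed_separated δ).measurableSet fun x hx =>
            card_mul_le_of_mem_separated (fun h c y hh => H l hll h c y hh) hφ c i hx
      _ ≤ ∫⁻ x in Q, ∫⁻ z in Set.Icc 0 1,
            (fun x => ENNReal.ofReal (1 + e) * (parSq φ i x + pairE V l φ i x)
              + ENNReal.ofReal e * ‖φ x - c‖ₑ ^ 2) (Function.update x i z) := by
          refine lintegral_mono_set fun x hx => ⟨fun j k => ?_, fun j k => ?_⟩
          · exact hδ.le.trans (hx.1 j k).1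
          · exact (hx.1 j k).2.trans (by change 1 - δ ≤ 1; linarith)
      _ = _ := by
          rw [hup, lintegral_add_right _ (hmd.const_mul _), lintegral_const_mul' _ _ (by simp),
            lintegral_const_mul' _ _ (by simp)]
  have hsum : ENNReal.ofReal (1 / (1 + e)) *
      (ENNReal.ofReal (n * m * (4 * π * a / l)) * ‖c‖ₑ ^ 2)
      ≤ ENNReal.ofReal (1 + e + n * e * K) * E := by
    have h := Finset.sum_le_sum fun i (_ : i ∈ Finset.univ) => hi i
    rw [Finset.sum_add_distrib,
      ← Finset.mul_sum _ (fun i => ∫⁻ x in Q, (parSq φ i x + pairE V l φ i x)),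
      ← lintegral_finsetSum _ fun i _ => hmi i,
      Finset.sum_const, Finset.sum_const, Finset.card_univ, nsmul_eq_mul, nsmul_eq_mul] at h
    calc _ = (n : ℝ≥0∞) * (ENNReal.ofReal (1 / (1 + e)) *
          ((m : ℝ≥0∞) * (ENNReal.ofReal (4 * π * a / l) * ‖c‖ₑ ^ 2))) := by
          rw [ENNReal.ofReal_mul (by positivity), ENNReal.ofReal_mul (by positivity),
            ENNReal.ofReal_natCast, ENNReal.ofReal_natCast]
          ring
      _ ≤ ENNReal.ofReal (1 + e) * E + n * (ENNReal.ofReal e * D) := h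
      _ ≤ ENNReal.ofReal (1 + e) * E + n * (ENNReal.ofReal e * (ENNReal.ofReal K * E)) := by gcongr
      _ = _ := by
          have h2 : ENNReal.ofReal (1 + e + n * e * K)
              = ENNReal.ofReal (1 + e) + n * (ENNReal.ofReal e * ENNReal.ofReal K) := by
            rw [← ENNReal.ofReal_mul he0.le, ← ENNReal.ofReal_natCast,
              ← ENNReal.ofReal_mul (by positivity),
              ← ENNReal.ofReal_add (by positivity) (by positivity), mul_assoc]
          rw [h2]
          ring
  have hc2 : ENNReal.ofReal (n * m * (4 * π * a / l)) * ‖c‖ₑ ^ 2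
      ≤ ENNReal.ofReal ((1 + e) * (1 + e + n * e * K)) * E := by
    calc _ = ENNReal.ofReal (1 + e) * (ENNReal.ofReal (1 / (1 + e)) *
          (ENNReal.ofReal (n * m * (4 * π * a / l)) * ‖c‖ₑ ^ 2)) := by
          rw [← mul_assoc, ← ENNReal.ofReal_mul (by positivity), mul_one_div_cancel (by positivity)]
          simp
      _ ≤ ENNReal.ofReal (1 + e) * (ENNReal.ofReal (1 + e + n * e * K) * E) := by gcongr
      _ = _ := by rw [← mul_assoc, ← ENNReal.ofReal_mul (by positivity)]
  have hφ2 : ∫⁻ x in Q, ‖φ x‖ₑ ^ 2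
      ≤ ENNReal.ofReal (1 + e) * ‖c‖ₑ ^ 2 + ENNReal.ofReal (1 + 1 / e) * D := by
    calc ∫⁻ x in Q, ‖φ x‖ₑ ^ 2 ≤ ∫⁻ x in Q, (ENNReal.ofReal (1 + e) * ‖c‖ₑ ^ 2
          + ENNReal.ofReal (1 + 1 / e) * ‖φ x - c‖ₑ ^ 2) := by
          refine lintegral_mono fun x => ?_
          have := enorm_add_sq_le he0 c (φ x - c)
          rwa [add_sub_cancel] at this
      _ = _ := by
          rw [lintegral_add_right _ (hmd.const_mul _), setLIntegral_const,
            volume_Icc_zero_one_vec, mul_one, lintegral_const_mul' _ _ (by simp)]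
  set κ : ℝ := n * m * (4 * π * a / l) with hκ
  have hκ0 : 0 ≤ κ := by positivity
  calc ENNReal.ofReal κ * ∫⁻ x in Q, ‖φ x‖ₑ ^ 2
      ≤ ENNReal.ofReal κ *
        (ENNReal.ofReal (1 + e) * ‖c‖ₑ ^ 2 + ENNReal.ofReal (1 + 1 / e) * D) := by gcongr
    _ = ENNReal.ofReal (1 + e) * (ENNReal.ofReal κ * ‖c‖ₑ ^ 2)
        + ENNReal.ofReal (1 + 1 / e) * ENNReal.ofReal κ * D := by ring
    _ ≤ ENNReal.ofReal (1 + e) * (ENNReal.ofReal ((1 + e) * (1 + e + n * e * K)) * E)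
        + ENNReal.ofReal (1 + 1 / e) * ENNReal.ofReal κ * (ENNReal.ofReal K * E) := by gcongr
    _ = ENNReal.ofReal ((1 + e) * ((1 + e) * (1 + e + n * e * K)) + P / l) * E := by
        have hPl : P / l = (1 + 1 / e) * κ * K := by rw [hP, hκ]; ring
        have h1 : ENNReal.ofReal ((1 + e) * ((1 + e) * (1 + e + n * e * K)) + P / l)
            = ENNReal.ofReal (1 + e) * ENNReal.ofReal ((1 + e) * (1 + e + n * e * K))
              + ENNReal.ofReal (1 + 1 / e) * ENNReal.ofReal κ * ENNReal.ofReal K := by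
          rw [hPl, ← ENNReal.ofReal_mul (by positivity), ← ENNReal.ofReal_mul (by positivity),
            ← ENNReal.ofReal_mul (by positivity),
            ENNReal.ofReal_add (by positivity) (by positivity)]
        rw [h1]
        ring
    _ ≤ ENNReal.ofReal (1 + ε) * E := by
        refine mul_le_mul_left (ENNReal.ofReal_le_ofReal ?_) _
        linarith

theorem enorm_sq_eq_re_add_im (z : ℂ) : ‖z‖ₑ ^ 2 = ‖z.re‖ₑ ^ 2 + ‖z.im‖ₑ ^ 2 := by
  rw [enorm_sq_eq_ofReal, enorm_sq_eq_ofReal, ← ENNReal.ofReal_add (sq_nonneg _) (sq_nonneg _),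
    ← ofReal_norm, ← ENNReal.ofReal_pow (norm_nonneg _), Complex.sq_norm, Complex.normSq_apply]
  congr 1
  ring

theorem parSq_eq_re_add_im {ι : Type*} [Fintype ι] [DecidableEq ι] {φ : (ι → Vec 3) → ℂ}
    (hφ : Differentiable ℝ φ) (i : ι) (x : ι → Vec 3) :
    parSq φ i x = parSq (fun x => (φ x).re) i x + parSq (fun x => (φ x).im) i x := by
  rw [parSq, parSq, parSq, ← Finset.sum_add_distrib]
  refine Finset.sum_congr rfl fun k _ => ?_
  have h1 : fderiv ℝ (fun x => (φ x).re) x = Complex.reCLM.comp (fderiv ℝ φ x) :=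
    (Complex.reCLM.hasFDerivAt.comp x (hφ x).hasFDerivAt).fderiv
  have h2 : fderiv ℝ (fun x => (φ x).im) x = Complex.imCLM.comp (fderiv ℝ φ x) :=
    (Complex.imCLM.hasFDerivAt.comp x (hφ x).hasFDerivAt).fderiv
  rw [h1, h2]
  exact enorm_sq_eq_re_add_im _

theorem exists_le_lintegral_bodyE
    (hscat : sInf (scatSet3 (fun x => ENNReal.ofReal (V x))) = ENNReal.ofReal (4 * π * a))
    (hVsupp : HasCompactSupport V) (hV : Measurable V) (ha : 0 < a)
    (ι : Type*) [Fintype ι] [DecidableEq ι] {ε : ℝ} (hε : 0 < ε) :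
    ∃ l₀ > 0, ∀ l ≥ l₀, ∀ φ : (ι → Vec 3) → ℂ, ContDiff ℝ (⊤ : ℕ∞) φ →
      ENNReal.ofReal (Fintype.card ι * (Fintype.card ι - 1 : ℕ) * (4 * π * a / l)) *
        ∫⁻ x in Set.Icc 0 1, ‖φ x‖ₑ ^ 2
      ≤ ENNReal.ofReal (1 + ε) * ∫⁻ x in Set.Icc 0 1, bodyE V l φ x := by
  obtain ⟨l₀, hl₀, H⟩ := exists_le_lintegral_bodyE_real hscat hVsupp hV ha ι hε
  refine ⟨l₀, hl₀, fun l hl φ hφ => ?_⟩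
  have hre : ContDiff ℝ (⊤ : ℕ∞) fun x => (φ x).re := Complex.reCLM.contDiff.comp hφ
  have him : ContDiff ℝ (⊤ : ℕ∞) fun x => (φ x).im := Complex.imCLM.contDiff.comp hφ
  have hb : ∀ x, bodyE V l φ x
      = bodyE V l (fun x => (φ x).re) x + bodyE V l (fun x => (φ x).im) x := by
    intro x
    simp_rw [bodyE]
    rw [← Finset.sum_add_distrib]
    refine Finset.sum_congr rfl fun i _ => ?_
    have hp : pairE V l φ i x
        = pairE V l (fun x => (φ x).re) i x + pairE V l (fun x => (φ x).im) i x := by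
      simp_rw [pairE]
      rw [← Finset.sum_add_distrib]
      refine Finset.sum_congr rfl fun j _ => ?_
      rw [enorm_sq_eq_re_add_im, mul_add, ENNReal.add_div]
    rw [parSq_eq_re_add_im (hφ.differentiable (by simp)), hp]
    ring
  have hbm : Measurable (bodyE V l fun x => (φ x).im) := by
    refine Finset.measurable_sum _ fun i _ => ?_
    exact (measurable_parSq him i).add (measurable_pairE hV l him.continuous i)
  simp_rw [hb, enorm_sq_eq_re_add_im]
  rw [lintegral_add_right _ hbm, lintegral_add_right _ (measurable_enorm_sq him.continuous),
    mul_add, mul_add]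
  exact add_le_add (H l hl _ hre) (H l hl _ him)

end BodyEnergyLower

theorem exists_disjoint_groups {α B : Type*} [DecidableEq α] [Fintype B] [DecidableEq B]
    (σ : α → B) {M : ℕ} (hM : 0 < M) (S : Finset α) :
    ∃ P : Finset (Finset α), (∀ g ∈ P, g ⊆ S ∧ g.card ≤ 2 * M ∧ ∀ i ∈ g, ∀ j ∈ g, σ i = σ j) ∧
      (P : Set (Finset α)).PairwiseDisjoint id ∧
      (2 * M - 1) * S.card ≤ ∑ g ∈ P, g.card * (g.card - 1) + M ^ 2 * Fintype.card B := by
  induction hn : S.card using Nat.strong_induction_on generalizing S with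
  | _ n ih =>
    subst hn
    by_cases hb : ∃ b, 2 * M ≤ (S.filter fun i => σ i = b).card
    · obtain ⟨b, hb⟩ := hb
      obtain ⟨g, hgb, hg⟩ := Finset.exists_subset_card_eq hb
      have hgS : g ⊆ S := hgb.trans (Finset.filter_subset _ _)
      have hcard : (S \ g).card + 2 * M = S.card := by
        rw [← hg, Finset.card_sdiff_add_card_eq_card hgS]
      obtain ⟨P, hP1, hP2, hP3⟩ := ih (S \ g).card (by omega) (S \ g) rfl
      have hdisj : ∀ h ∈ P, Disjoint g h := fun h hh =>
        Finset.disjoint_of_subset_right (hP1 h hh).1 Finset.disjoint_sdiff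
      have hgP : g ∉ P := fun h => by
        have := (disjoint_self.1 (hdisj g h))
        rw [this] at hg
        simp at hg
        omega
      refine ⟨insert g P, ?_, ?_, ?_⟩
      · intro h hh
        rcases Finset.mem_insert.1 hh with rfl | hh
        · refine ⟨hgS, hg.le, fun i hi j hj => ?_⟩
          rw [(Finset.mem_filter.1 (hgb hi)).2, (Finset.mem_filter.1 (hgb hj)).2]
        · exact ⟨(hP1 h hh).1.trans Finset.sdiff_subset, (hP1 h hh).2⟩
      · rw [Finset.coe_insert]
        exact hP2.insert fun h hh _ => hdisj h hh
      · rw [Finset.sum_insert hgP, hg, ← hcard, mul_add]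
        linarith [mul_comm (2 * M) (2 * M - 1)]
    · push Not at hb
      have hdisj : ((Finset.univ : Finset B) : Set B).PairwiseDisjoint
          fun b => S.filter fun i => σ i = b := by
        intro b _ b' _ hbb
        refine Finset.disjoint_left.2 fun i hi hi' => hbb ?_
        rw [← (Finset.mem_filter.1 hi).2, (Finset.mem_filter.1 hi').2]
      refine ⟨Finset.univ.image fun b => S.filter fun i => σ i = b, ?_, ?_, ?_⟩
      · intro g hg
        obtain ⟨b, -, rfl⟩ := Finset.mem_image.1 hg
        refine ⟨Finset.filter_subset _ _, (hb b).le, fun i hi j hj => ?_⟩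
        rw [(Finset.mem_filter.1 hi).2, (Finset.mem_filter.1 hj).2]
      · rw [Finset.coe_image]
        rintro _ ⟨b, hb, rfl⟩ _ ⟨b', hb', rfl⟩ hne
        exact hdisj hb hb' fun h => hne (by rw [h])
      · rw [Finset.sum_image_of_disjoint (by simp) hdisj,
          Finset.card_eq_sum_card_fiberwise (f := σ) (t := Finset.univ) (by simp),
          Finset.mul_sum, mul_comm (M ^ 2), ← smul_eq_mul (Fintype.card B), ← Finset.card_univ,
          ← Finset.sum_const, ← Finset.sum_add_distrib]
        refine Finset.sum_le_sum fun b _ => ?_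
        generalize (S.filter fun i => σ i = b).card = n
        rcases n with _ | n
        · simp
        · rw [Nat.add_sub_cancel]
          zify [show 1 ≤ 2 * M by omega]
          nlinarith [sq_nonneg ((n : ℤ) + 1 - M)]

section Reindex

variable {ι ι' F : Type*} [Fintype ι] [DecidableEq ι] [Fintype ι'] [DecidableEq ι']
  [NormedAddCommGroup F] [NormedSpace ℝ F]

theorem setLIntegral_reindex (e : ι ≃ ι') (f : (ι' → Vec 3) → ℝ≥0∞) :
    ∫⁻ x in Set.Icc (0 : ι → Vec 3) 1, f (fun j => x (e.symm j)) = ∫⁻ x in Set.Icc 0 1, f x := by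
  have h := volume_measurePreserving_piCongrLeft (fun _ : ι' => Vec 3) e
  have hfun : ∀ x : ι → Vec 3,
      MeasurableEquiv.piCongrLeft (fun _ : ι' => Vec 3) e x = fun j => x (e.symm j) := by
    intro x
    ext1 j
    obtain ⟨i, rfl⟩ := e.surjective j
    rw [MeasurableEquiv.piCongrLeft_apply_apply, e.symm_apply_apply]
  rw [← h.setLIntegral_comp_preimage_emb (MeasurableEquiv.measurableEmbedding _) f]
  have hpre : MeasurableEquiv.piCongrLeft (fun _ : ι' => Vec 3) e ⁻¹' Set.Icc 0 1
      = Set.Icc 0 1 := by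
    ext x
    rw [Set.mem_preimage, hfun]
    simp only [Set.mem_Icc, Pi.le_def]
    rw [e.symm.forall_congr_left, e.symm.forall_congr_left]
    simp
  rw [hpre]
  simp_rw [hfun]

theorem parSq_comp_of_apply_single {φ : (ι' → Vec 3) → F} (hφ : Differentiable ℝ φ)
    (L : (ι → Vec 3) →L[ℝ] (ι' → Vec 3)) (b : ι' → Vec 3) (i : ι) (i' : ι')
    (hL : ∀ v, L (Pi.single i v) = Pi.single i' v) (x : ι → Vec 3) :
    parSq (fun x => φ (b + L x)) i x = parSq φ i' (b + L x) := by
  refine Finset.sum_congr rfl fun k _ => ?_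
  have h := (hφ (b + L x)).hasFDerivAt.comp x (L.hasFDerivAt.const_add b)
  have h' : fderiv ℝ (fun x => φ (b + L x)) x = _ := h.fderiv
  rw [h', ContinuousLinearMap.comp_apply, hL]

/-- Reindexing of the particles as a continuous linear map. -/
def reindexCLM (e : ι ≃ ι') : (ι → Vec 3) →L[ℝ] (ι' → Vec 3) :=
  ContinuousLinearMap.pi fun j => ContinuousLinearMap.proj (e.symm j)

theorem reindexCLM_single (e : ι ≃ ι') (i : ι) (v : Vec 3) :
    reindexCLM e (Pi.single i v) = Pi.single (e i) v := by
  ext1 j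
  obtain ⟨i', rfl⟩ := e.surjective j
  simp [reindexCLM, Pi.single_apply]

theorem bodyE_reindex (V : Vec 3 → ℝ) (l : ℝ) (e : ι ≃ ι') {φ : (ι' → Vec 3) → F}
    (hφ : Differentiable ℝ φ) (x : ι → Vec 3) :
    bodyE V l (fun x => φ (0 + reindexCLM e x)) x = bodyE V l φ (fun j => x (e.symm j)) := by
  have hx : (0 + reindexCLM e x) = fun j => x (e.symm j) := by
    ext1 j
    simp [reindexCLM]
  rw [bodyE, bodyE, ← e.sum_comp]
  refine Finset.sum_congr rfl fun i _ => ?_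
  rw [parSq_comp_of_apply_single hφ _ _ i (e i) (reindexCLM_single e i), hx]
  congr 1
  rw [pairE, pairE]
  refine Finset.sum_equiv e (by simp) fun j _ => ?_
  simp [hx]

end Reindex

section Groups

variable {V : Vec 3 → ℝ} {a : ℝ}

theorem exists_le_lintegral_bodyE_of_card_le
    (hscat : sInf (scatSet3 (fun x => ENNReal.ofReal (V x))) = ENNReal.ofReal (4 * π * a))
    (hVsupp : HasCompactSupport V) (hV : Measurable V) (ha : 0 < a)
    (p : ℕ) {ε : ℝ} (hε : 0 < ε) :
    ∃ l₀ > 0, ∀ l ≥ l₀, ∀ (ι : Type) [Fintype ι] [DecidableEq ι], Fintype.card ι ≤ p →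
      ∀ φ : (ι → Vec 3) → ℂ, ContDiff ℝ (⊤ : ℕ∞) φ →
      ENNReal.ofReal (Fintype.card ι * (Fintype.card ι - 1 : ℕ) * (4 * π * a / l)) *
        ∫⁻ x in Set.Icc 0 1, ‖φ x‖ₑ ^ 2
      ≤ ENNReal.ofReal (1 + ε) * ∫⁻ x in Set.Icc 0 1, bodyE V l φ x := by
  choose l₀ hl₀ H using fun n : ℕ => exists_le_lintegral_bodyE hscat hVsupp hV ha (Fin n) hε
  refine ⟨∑ n ∈ Finset.range (p + 1), l₀ n,
    Finset.sum_pos (fun n _ => hl₀ n) (by simp), fun l hl ι _ _ hι φ hφ => ?_⟩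
  have hl' : l ≥ l₀ (Fintype.card ι) := le_trans
    (Finset.single_le_sum (f := l₀) (fun n _ => (hl₀ n).le)
      (Finset.mem_range.2 (Nat.lt_succ_of_le hι))) hl
  let e : Fin (Fintype.card ι) ≃ ι := (Fintype.equivFin ι).symm
  have h := H _ l hl' (fun x => φ (0 + reindexCLM e x)) (hφ.comp (by fun_prop))
  rw [Fintype.card_fin] at h
  simp_rw [bodyE_reindex V l e (hφ.differentiable (by simp))] at h
  rw [setLIntegral_reindex e] at h
  refine le_trans (le_of_eq ?_) h
  rw [← setLIntegral_reindex e]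
  congr 1
  refine lintegral_congr fun x => ?_
  congr 3
  ext1 j
  simp [reindexCLM]

end Groups

section Groups

variable {ι F : Type*} [Fintype ι] [DecidableEq ι] [NormedAddCommGroup F] [NormedSpace ℝ F]

/-- Energy density of the particles in `g`, without the interaction with the others. -/
def groupE (V : Vec 3 → ℝ) (l : ℝ) (g : Finset ι) (φ : (ι → Vec 3) → F) (x : ι → Vec 3) : ℝ≥0∞ :=
  ∑ i ∈ g, (parSq φ i x +
    ∑ j ∈ g.erase i, ENNReal.ofReal (l ^ 2 * V (l • (x i - x j))) * ‖φ x‖ₑ ^ 2 / 2)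

theorem measurable_groupE {V : Vec 3 → ℝ} (hV : Measurable V) (l : ℝ) (g : Finset ι)
    {φ : (ι → Vec 3) → F} (hφ : ContDiff ℝ (⊤ : ℕ∞) φ) : Measurable (groupE V l g φ) := by
  refine Finset.measurable_sum _ fun i _ => (measurable_parSq hφ i).add ?_
  refine Finset.measurable_sum _ fun j _ => ?_
  have := measurable_enorm_sq hφ.continuous
  fun_prop

/-- Extension by zero of a configuration of the particles in `g`. -/
def extendCLM (g : Finset ι) : (g → Vec 3) →L[ℝ] (ι → Vec 3) :=
  ContinuousLinearMap.pi fun j =>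
    if h : j ∈ g then ContinuousLinearMap.proj (⟨j, h⟩ : g) else 0

theorem extendCLM_single (g : Finset ι) (i : g) (v : Vec 3) :
    extendCLM g (Pi.single i v) = Pi.single (i : ι) v := by
  ext1 j
  by_cases h : j ∈ g
  · simp [extendCLM, h, Pi.single_apply, Subtype.ext_iff]
  · have : j ≠ i := fun h' => h (h' ▸ i.2)
    simp [extendCLM, h, Pi.single_eq_of_ne this]

theorem updateFinset_eq_add (x : ι → Vec 3) (g : Finset ι) (y : g → Vec 3) :
    Function.updateFinset x g y = Function.updateFinset x g 0 + extendCLM g y := by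
  ext1 j
  by_cases h : j ∈ g <;> simp [Function.updateFinset, extendCLM, h]

theorem bodyE_slice (V : Vec 3 → ℝ) (l : ℝ) (g : Finset ι) {φ : (ι → Vec 3) → F}
    (hφ : Differentiable ℝ φ) (x : ι → Vec 3) (y : g → Vec 3) :
    bodyE V l (fun y => φ (Function.updateFinset x g y)) y
      = groupE V l g φ (Function.updateFinset x g y) := by
  rw [bodyE, groupE, ← Finset.sum_coe_sort g]
  refine Finset.sum_congr rfl fun i _ => ?_
  congr 1
  · have h : (fun y => φ (Function.updateFinset x g y))
        = fun y => φ (Function.updateFinset x g 0 + extendCLM g y) :=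
      funext fun y => by rw [← updateFinset_eq_add]
    rw [h, updateFinset_eq_add x g y]
    exact parSq_comp_of_apply_single hφ _ _ i i (extendCLM_single g i) y
  · have hmap : g.erase (i : ι) = (Finset.univ.erase i).map (Function.Embedding.subtype _) := by
      ext j
      simp only [Finset.mem_erase, Finset.mem_map, Finset.mem_univ, and_true,
        Function.Embedding.coe_subtype, Subtype.exists, exists_and_right, exists_eq_right]
      constructor
      · exact fun h => ⟨h.2, fun h' => h.1 (Subtype.ext_iff.1 h')⟩
      · exact fun ⟨h, h'⟩ => ⟨fun h'' => h' (Subtype.ext h''), h⟩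
    rw [pairE, hmap, Finset.sum_map]
    refine Finset.sum_congr rfl fun j _ => ?_
    have hi : ∀ i : g, Function.updateFinset x g y i = y i := fun i => by
      simp [Function.updateFinset]
    simp [hi]

end Groups

section GroupBound

variable {V : Vec 3 → ℝ} {a : ℝ}

theorem exists_le_lintegral_groupE
    (hscat : sInf (scatSet3 (fun x => ENNReal.ofReal (V x))) = ENNReal.ofReal (4 * π * a))
    (hVsupp : HasCompactSupport V) (hV : Measurable V) (ha : 0 < a)
    (p : ℕ) {ε : ℝ} (hε : 0 < ε) :
    ∃ l₀ > 0, ∀ l ≥ l₀, ∀ (ι : Type) [Fintype ι] [DecidableEq ι] (g : Finset ι), g.card ≤ p →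
      ∀ φ : (ι → Vec 3) → ℂ, ContDiff ℝ (⊤ : ℕ∞) φ →
      ENNReal.ofReal (g.card * (g.card - 1 : ℕ) * (4 * π * a / l)) *
        ∫⁻ x in Set.Icc 0 1, ‖φ x‖ₑ ^ 2
      ≤ ENNReal.ofReal (1 + ε) * ∫⁻ x in Set.Icc 0 1, groupE V l g φ x := by
  obtain ⟨l₀, hl₀, H⟩ := exists_le_lintegral_bodyE_of_card_le hscat hVsupp hV ha p hε
  refine ⟨l₀, hl₀, fun l hl ι _ _ g hg φ hφ => ?_⟩
  have hm := measurable_enorm_sq hφ.continuous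
  have hm' := measurable_groupE hV l g hφ
  rw [← lintegral_const_mul _ hm, ← lintegral_const_mul _ hm', volume_restrict_Icc_vec]
  refine lintegral_le_of_lmarginal_le g (hm.const_mul _) (hm'.const_mul _) fun x => ?_
  have hU : ContDiff ℝ (⊤ : ℕ∞) fun y : g → Vec 3 => φ (Function.updateFinset x g y) := by
    have h : (fun y => φ (Function.updateFinset x g y))
        = fun y => φ (Function.updateFinset x g 0 + extendCLM g y) :=
      funext fun y => by rw [← updateFinset_eq_add]
    rw [h]
    exact hφ.comp (by fun_prop)
  have h := H l hl g (by simpa using hg) _ hU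
  simp_rw [bodyE_slice V l g (hφ.differentiable (by simp)), Fintype.card_coe] at h
  have hUm : Measurable fun y : g → Vec 3 => Function.updateFinset x g y := measurable_updateFinset
  have hc := fun (c : ℝ≥0∞) (μ : Measure (g → Vec 3)) =>
    lintegral_const_mul (μ := μ) c (hm.comp hUm)
  have hc' := fun (c : ℝ≥0∞) (μ : Measure (g → Vec 3)) =>
    lintegral_const_mul (μ := μ) c (hm'.comp hUm)
  simp only [Function.comp_def] at hc hc'
  rw [← hc, ← hc', volume_restrict_Icc_vec] at h
  exact h

/-- Lower bound for particles distributed over cells labelled by `B`, keeping only the interaction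
within each cell. -/
theorem exists_le_lintegral_cells
    (hscat : sInf (scatSet3 (fun x => ENNReal.ofReal (V x))) = ENNReal.ofReal (4 * π * a))
    (hVsupp : HasCompactSupport V) (hV : Measurable V) (ha : 0 < a)
    {M : ℕ} (hM : 0 < M) {ε : ℝ} (hε : 0 < ε) :
    ∃ l₀ > 0, ∀ l ≥ l₀, ∀ (ι B : Type) [Fintype ι] [DecidableEq ι] [Fintype B] [DecidableEq B]
      (σ : ι → B), ∀ φ : (ι → Vec 3) → ℂ, ContDiff ℝ (⊤ : ℕ∞) φ →
      ENNReal.ofReal (((2 * M - 1) * Fintype.card ι - M ^ 2 * Fintype.card B)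
          * (4 * π * a / l)) * ∫⁻ x in Set.Icc 0 1, ‖φ x‖ₑ ^ 2
      ≤ ENNReal.ofReal (1 + ε) * ∫⁻ x in Set.Icc 0 1, ∑ i, (parSq φ i x +
        ∑ j ∈ (Finset.univ.erase i).filter fun j => σ j = σ i,
          ENNReal.ofReal (l ^ 2 * V (l • (x i - x j))) * ‖φ x‖ₑ ^ 2 / 2) := by
  obtain ⟨l₀, hl₀, H⟩ := exists_le_lintegral_groupE hscat hVsupp hV ha (2 * M) hε
  refine ⟨l₀, hl₀, fun l hl ι B _ _ _ _ σ φ hφ => ?_⟩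
  obtain ⟨P, hP, hPd, hPs⟩ := exists_disjoint_groups σ hM Finset.univ
  have hlpos : 0 < l := hl₀.trans_le hl
  calc _ ≤ ENNReal.ofReal (∑ g ∈ P, g.card * (g.card - 1 : ℕ) * (4 * π * a / l)) *
        ∫⁻ x in Set.Icc 0 1, ‖φ x‖ₑ ^ 2 := by
        refine mul_le_mul_left (ENNReal.ofReal_le_ofReal ?_) _
        rw [← Finset.sum_mul]
        refine mul_le_mul_of_nonneg_right ?_ (by positivity)
        have h : (((2 * M - 1) * Fintype.card ι : ℕ) : ℝ)
            ≤ ((∑ g ∈ P, g.card * (g.card - 1) + M ^ 2 * Fintype.card B : ℕ) : ℝ) := by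
          exact_mod_cast hPs
        push_cast [show 1 ≤ 2 * M by omega] at h
        linarith
    _ = ∑ g ∈ P, ENNReal.ofReal (g.card * (g.card - 1 : ℕ) * (4 * π * a / l)) *
        ∫⁻ x in Set.Icc 0 1, ‖φ x‖ₑ ^ 2 := by
        rw [ENNReal.ofReal_sum_of_nonneg (fun g _ => by positivity), Finset.sum_mul]
    _ ≤ ∑ g ∈ P, ENNReal.ofReal (1 + ε) * ∫⁻ x in Set.Icc 0 1, groupE V l g φ x :=
        Finset.sum_le_sum fun g hg => H l hl ι g (hP g hg).2.1 φ hφ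
    _ = ENNReal.ofReal (1 + ε) * ∫⁻ x in Set.Icc 0 1, ∑ g ∈ P, groupE V l g φ x := by
        rw [lintegral_finsetSum _ fun g _ => measurable_groupE hV l g hφ, Finset.mul_sum]
    _ ≤ _ := by
        refine mul_le_mul_right (lintegral_mono fun x => ?_) _
        calc _ ≤ ∑ g ∈ P, ∑ i ∈ g, (parSq φ i x +
            ∑ j ∈ (Finset.univ.erase i).filter fun j => σ j = σ i,
              ENNReal.ofReal (l ^ 2 * V (l • (x i - x j))) * ‖φ x‖ₑ ^ 2 / 2) := by
              refine Finset.sum_le_sum fun g hg => Finset.sum_le_sum fun i hi => ?_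
              refine add_le_add le_rfl (Finset.sum_le_sum_of_subset fun j hj => ?_)
              rw [Finset.mem_erase] at hj
              simp only [Finset.mem_filter, Finset.mem_erase, Finset.mem_univ, and_true]
              exact ⟨hj.1, (hP g hg).2.2 j hj.2 i hi⟩
          _ ≤ _ := by
              have hb := Finset.sum_biUnion (f := fun i => parSq φ i x +
                ∑ j ∈ (Finset.univ.erase i).filter fun j => σ j = σ i,
                  ENNReal.ofReal (l ^ 2 * V (l • (x i - x j))) * ‖φ x‖ₑ ^ 2 / 2) hPd
              refine le_of_eq_of_le hb.symm ?_
              exact Finset.sum_le_sum_of_subset (Finset.subset_univ _)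

end GroupBound

section Cells

/-- Corner of the cell of side length `1 / L` with label `σ` in the configuration space. -/
def cellCorner {N L : ℕ} (σ : Fin N → Fin 3 → Fin L) : Fin N → Vec 3 :=
  fun i k => -1 / 2 + (σ i k : ℝ) / L

/-- Cell of side length `1 / L` with label `σ` in the configuration space. -/
def cell {N L : ℕ} (σ : Fin N → Fin 3 → Fin L) : Set (Fin N → Vec 3) :=
  Set.Icc (cellCorner σ) (cellCorner σ + (L : ℝ)⁻¹ • 1)

theorem mem_cell {N L : ℕ} {σ : Fin N → Fin 3 → Fin L} {x : Fin N → Vec 3} :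
    x ∈ cell σ ↔ ∀ i k, -1 / 2 + (σ i k : ℝ) / L ≤ x i k ∧
      x i k ≤ -1 / 2 + ((σ i k : ℝ) + 1) / L := by
  simp only [cell, Set.mem_Icc, Pi.le_def, ← forall_and, cellCorner, Pi.add_apply, Pi.smul_apply,
    Pi.one_apply, smul_eq_mul, mul_one, add_div, one_div, add_assoc]

theorem iUnion_cell {N L : ℕ} (hL : 0 < L) :
    ⋃ σ : Fin N → Fin 3 → Fin L, cell σ = box 3 N 1 := by
  have hL' : (0 : ℝ) < L := by exact_mod_cast hL
  ext x
  simp only [Set.mem_iUnion, mem_cell, box, Set.mem_ofPred_eq, Set.mem_Icc]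
  constructor
  · rintro ⟨σ, h⟩ i k
    obtain ⟨h1, h2⟩ := h i k
    have h3 : (0 : ℝ) ≤ (σ i k : ℝ) / L := by positivity
    have h4 : ((σ i k : ℝ) + 1) / L ≤ 1 := by
      rw [div_le_one hL']
      exact_mod_cast (σ i k).2
    constructor <;> linarith
  · intro h
    have key : ∀ i k, ∃ s : Fin L, -1 / 2 + (s : ℝ) / L ≤ x i k ∧
        x i k ≤ -1 / 2 + ((s : ℝ) + 1) / L := by
      intro i k
      obtain ⟨h1, h2⟩ := h i k
      have h0 : 0 ≤ (L : ℝ) * (x i k + 1 / 2) := mul_nonneg hL'.le (by linarith)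
      by_cases hf : ⌊(L : ℝ) * (x i k + 1 / 2)⌋₊ < L
      · refine ⟨⟨_, hf⟩, ?_, ?_⟩
        · have := (div_le_iff₀' hL').2 (Nat.floor_le h0)
          dsimp only
          linarith
        · have := (le_div_iff₀' hL').2 (Nat.lt_floor_add_one ((L : ℝ) * (x i k + 1 / 2))).le
          dsimp only
          linarith
      · refine ⟨⟨L - 1, by omega⟩, ?_, ?_⟩
        · have h3 : (L : ℝ) ≤ (L : ℝ) * (x i k + 1 / 2) :=
            le_trans (by exact_mod_cast not_lt.1 hf) (Nat.floor_le h0)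
          have h4 : ((L - 1 : ℕ) : ℝ) / L ≤ 1 := by
            rw [div_le_one hL']
            exact_mod_cast Nat.sub_le L 1
          have h5 : 1 ≤ x i k + 1 / 2 := by
            by_contra! hc
            nlinarith
          dsimp only
          linarith
        · have h4 : (((L - 1 : ℕ) : ℝ) + 1) / L = 1 := by
            rw [div_eq_one_iff_eq hL'.ne']
            exact_mod_cast Nat.sub_add_cancel hL
          dsimp only
          linarith
    choose σ hσ using key
    exact ⟨σ, hσ⟩

theorem aedisjoint_cell {N L : ℕ} (hL : 0 < L) :
    Pairwise fun σ τ : Fin N → Fin 3 → Fin L => AEDisjoint volume (cell σ) (cell τ) := by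
  have hL' : (0 : ℝ) < L := by exact_mod_cast hL
  have key : ∀ (σ τ : Fin N → Fin 3 → Fin L) (i : Fin N) (k : Fin 3), σ i k < τ i k →
      volume (cell σ ∩ cell τ) = 0 := by
    intro σ τ i k h
    refine measure_mono_null ?_ (volume_coord_eq_zero i k (-1 / 2 + (τ i k : ℝ) / L))
    rintro x ⟨h1, h2⟩
    refine le_antisymm ((mem_cell.1 h1 i k).2.trans ?_) (mem_cell.1 h2 i k).1
    have : ((σ i k : ℝ) + 1) ≤ τ i k := by exact_mod_cast h
    gcongr
  intro σ τ hne
  obtain ⟨i, hi⟩ := Function.ne_iff.1 hne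
  obtain ⟨k, hk⟩ := Function.ne_iff.1 hi
  rcases lt_or_gt_of_ne hk with h | h
  · exact key σ τ i k h
  · rw [AEDisjoint, Set.inter_comm]
    exact key τ σ i k h

theorem lintegral_box_eq_sum {N L : ℕ} (hL : 0 < L) (f : (Fin N → Vec 3) → ℝ≥0∞) :
    ∫⁻ x in box 3 N 1, f x = ∑ σ : Fin N → Fin 3 → Fin L, ∫⁻ x in cell σ, f x := by
  have hm : ∀ σ : Fin N → Fin 3 → Fin L, NullMeasurableSet (cell σ) := fun σ =>
    (measurableSet_Icc : MeasurableSet (cell σ)).nullMeasurableSet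
  rw [← iUnion_cell hL, lintegral_iUnion₀ hm (aedisjoint_cell hL), tsum_fintype]

theorem lintegral_cell {N L : ℕ} (hL : 0 < L) (σ : Fin N → Fin 3 → Fin L)
    (f : (Fin N → Vec 3) → ℝ≥0∞) :
    ∫⁻ z in Set.Icc 0 1, f (cellCorner σ + (L : ℝ)⁻¹ • z)
      = ENNReal.ofReal |((L : ℝ)⁻¹ ^ Module.finrank ℝ (Fin N → Vec 3))⁻¹| *
        ∫⁻ x in cell σ, f x := by
  have hL' : (0 : ℝ) < L := by exact_mod_cast hL
  rw [cell, ← lintegral_indicator measurableSet_Icc, ← lintegral_indicator measurableSet_Icc,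
    ← lintegral_comp_add_smul volume (inv_ne_zero hL'.ne') (cellCorner σ)]
  refine lintegral_congr fun z => ?_
  have hz : z ∈ Set.Icc (0 : Fin N → Vec 3) 1 ↔
      cellCorner σ + (L : ℝ)⁻¹ • z ∈ Set.Icc (cellCorner σ) (cellCorner σ + (L : ℝ)⁻¹ • 1) := by
    rw [Set.mem_Icc, Set.mem_Icc, le_add_iff_nonneg_right, add_le_add_iff_left,
      smul_le_smul_iff_of_pos_left (inv_pos.2 hL'),
      ← smul_le_smul_iff_of_pos_left (inv_pos.2 hL') (b₁ := (0 : Fin N → Vec 3)), smul_zero]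
  by_cases h : z ∈ Set.Icc (0 : Fin N → Vec 3) 1
  · rw [Set.indicator_of_mem h, Set.indicator_of_mem (hz.1 h)]
  · rw [Set.indicator_of_notMem h, Set.indicator_of_notMem fun h' => h (hz.2 h')]

end Cells

section Scaling

variable {ι F : Type*} [Fintype ι] [DecidableEq ι] [NormedAddCommGroup F] [NormedSpace ℝ F]

theorem parSq_comp_add_smul {φ : (ι → Vec 3) → F} (hφ : Differentiable ℝ φ) (b : ι → Vec 3)
    (r : ℝ) (i : ι) (z : ι → Vec 3) :
    parSq (fun z => φ (b + r • z)) i z = ENNReal.ofReal (r ^ 2) * parSq φ i (b + r • z) := by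
  rw [parSq, parSq, Finset.mul_sum]
  refine Finset.sum_congr rfl fun k _ => ?_
  have h := (hφ (b + r • z)).hasFDerivAt.comp z (((hasFDerivAt_id z).const_smul r).const_add b)
  have h' : fderiv ℝ (fun z => φ (b + r • z)) z = _ := h.fderiv
  rw [h', ContinuousLinearMap.comp_apply, _root_.smul_apply, map_smul, enorm_smul,
    mul_pow, enorm_sq_eq_ofReal r]
  rfl

end Scaling

section Localization

variable {V : Vec 3 → ℝ} {a : ℝ}

theorem lintegral_energy_le (hV : Measurable V) (hVeven : ∀ x, V (-x) = V x) (N : ℕ)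
    {ψ : (Fin N → Vec 3) → ℂ} (hψ : ContDiff ℝ (⊤ : ℕ∞) ψ) :
    ∫⁻ x in box 3 N 1, ∑ i, (parSq ψ i x + ∑ j ∈ Finset.univ.erase i,
      ENNReal.ofReal ((N : ℝ) ^ 2 * V ((N : ℝ) • (x i - x j))) * ‖ψ x‖ₑ ^ 2 / 2)
    ≤ kineticE 3 N 1 ψ + interE 3 N 1 (gpPotential V N) ψ := by
  have hm := measurable_enorm_sq hψ.continuous
  have hw : ∀ i j, Measurable fun x : Fin N → Vec 3 =>
      ENNReal.ofReal ((N : ℝ) ^ 2 * V ((N : ℝ) • (x i - x j))) * ‖ψ x‖ₑ ^ 2 := by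
    intro i j
    have h1 : Measurable fun x : Fin N → Vec 3 => V ((N : ℝ) • (x i - x j)) :=
      hV.comp (by fun_prop)
    fun_prop
  simp_rw [Finset.sum_add_distrib]
  rw [lintegral_add_left (Finset.measurable_sum _ fun i _ => measurable_parSq hψ i)]
  refine add_le_add (le_of_eq ?_) ?_
  · rw [lintegral_finsetSum _ fun i _ => measurable_parSq hψ i, kineticE]
    refine Finset.sum_congr rfl fun i _ => ?_
    rw [← lintegral_finsetSum]
    · rfl
    · intro k _
      exact ((ENNReal.continuous_pow 2).comp
        ((hψ.continuous_fderiv (by simp)).clm_apply continuous_const).enorm).measurable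
  · have hsum : ∀ x : Fin N → Vec 3, ∑ i, ∑ j ∈ Finset.univ.erase i,
        ENNReal.ofReal ((N : ℝ) ^ 2 * V ((N : ℝ) • (x i - x j))) * ‖ψ x‖ₑ ^ 2 / 2
        = ∑ i, ∑ j, if i < j then
          ENNReal.ofReal ((N : ℝ) ^ 2 * V ((N : ℝ) • (x i - x j))) * ‖ψ x‖ₑ ^ 2 else 0 := by
      intro x
      set w : Fin N → Fin N → ℝ≥0∞ := fun i j =>
        ENNReal.ofReal ((N : ℝ) ^ 2 * V ((N : ℝ) • (x i - x j))) * ‖ψ x‖ₑ ^ 2 with hw_def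
      have hsymm : ∀ i j, w i j = w j i := by
        intro i j
        simp only [hw_def]
        rw [← hVeven, ← smul_neg, neg_sub]
      have h1 : ∀ i, ∑ j ∈ Finset.univ.erase i, w i j / 2
          = ∑ j, ((if i < j then w i j / 2 else 0) + if j < i then w i j / 2 else 0) := by
        intro i
        rw [← Finset.sum_erase Finset.univ (a := i) (by simp)]
        refine Finset.sum_congr rfl fun j hj => ?_
        rcases lt_or_gt_of_ne (Finset.ne_of_mem_erase hj) with h | h <;> simp [h, h.not_gt]
      change ∑ i, ∑ j ∈ Finset.univ.erase i, w i j / 2 = ∑ i, ∑ j, if i < j then w i j else 0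
      simp_rw [h1, Finset.sum_add_distrib]
      have h2 : ∑ i, ∑ j, (if j < i then w i j / 2 else 0)
          = ∑ i, ∑ j, if i < j then w i j / 2 else 0 := by
        rw [Finset.sum_comm]
        exact Finset.sum_congr rfl fun i _ => Finset.sum_congr rfl fun j _ => by rw [hsymm]
      rw [h2, ← Finset.sum_add_distrib]
      refine Finset.sum_congr rfl fun i _ => ?_
      rw [← Finset.sum_add_distrib]
      refine Finset.sum_congr rfl fun j _ => ?_
      split_ifs
      · exact ENNReal.add_halves _
      · simp
    simp_rw [hsum]
    rw [lintegral_finsetSum _ fun i _ => Finset.measurable_sum _ fun j _ => by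
      split_ifs
      · exact hw i j
      · exact measurable_const]
    refine Finset.sum_le_sum fun i _ => ?_
    rw [lintegral_finsetSum _ fun j _ => by
      split_ifs
      · exact hw i j
      · exact measurable_const]
    refine Finset.sum_le_sum fun j _ => ?_
    split_ifs
    · refine lintegral_mono fun x => mul_le_mul_left ?_ _
      refine le_trans (le_of_eq ?_) (ENNReal.le_tsum (0 : Fin 3 → ℤ))
      simp only [gpPotential]
      congr 4
      ext k
      simp
    · simp

theorem exists_le_energy
    (hscat : sInf (scatSet3 (fun x => ENNReal.ofReal (V x))) = ENNReal.ofReal (4 * π * a))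
    (hVsupp : HasCompactSupport V) (hV : Measurable V) (hVeven : ∀ x, V (-x) = V x) (ha : 0 < a)
    {M : ℕ} (hM : 0 < M) {ε : ℝ} (hε : 0 < ε) :
    ∃ l₀ > 0, ∀ N L : ℕ, 0 < L → 0 < N → l₀ ≤ (N : ℝ) / L →
      ∀ ψ, IsTrialState 3 N 1 ψ →
      ENNReal.ofReal (((2 * M - 1) * N - M ^ 2 * L ^ 3) * (4 * π * a * L ^ 3 / N))
      ≤ ENNReal.ofReal (1 + ε) * (kineticE 3 N 1 ψ + interE 3 N 1 (gpPotential V N) ψ) := by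
  obtain ⟨l₀, hl₀, H⟩ := exists_le_lintegral_cells hscat hVsupp hV ha hM hε
  refine ⟨l₀, hl₀, fun N L hL hN hNL ψ hψ => ?_⟩
  obtain ⟨hψs, -, -, hnorm⟩ := hψ
  have hL' : (0 : ℝ) < L := by exact_mod_cast hL
  have hN' : (0 : ℝ) < N := by exact_mod_cast hN
  set e : (Fin N → Vec 3) → ℝ≥0∞ := fun x => ∑ i, (parSq ψ i x + ∑ j ∈ Finset.univ.erase i,
      ENNReal.ofReal ((N : ℝ) ^ 2 * V ((N : ℝ) • (x i - x j))) * ‖ψ x‖ₑ ^ 2 / 2) with he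
  set K : ℝ := ((2 * M - 1) * N - M ^ 2 * L ^ 3) with hK
  have hcell : ∀ σ : Fin N → Fin 3 → Fin L,
      ENNReal.ofReal (K * (4 * π * a / (N / L))) * ∫⁻ x in cell σ, ‖ψ x‖ₑ ^ 2
      ≤ ENNReal.ofReal (1 + ε) * (ENNReal.ofReal ((L : ℝ)⁻¹ ^ 2) * ∫⁻ x in cell σ, e x) := by
    intro σ
    set J : ℝ≥0∞ := ENNReal.ofReal |((L : ℝ)⁻¹ ^ Module.finrank ℝ (Fin N → Vec 3))⁻¹|
    have hJ0 : J ≠ 0 := by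
      refine (ENNReal.ofReal_pos.2 (abs_pos.2 ?_)).ne'
      positivity
    have h := H (N / L) hNL (Fin N) (Fin 3 → Fin L) σ
      (fun z => ψ (cellCorner σ + (L : ℝ)⁻¹ • z)) (hψs.comp (by fun_prop))
    have hle : ∀ z, (∑ i, (parSq (fun z => ψ (cellCorner σ + (L : ℝ)⁻¹ • z)) i z +
        ∑ j ∈ (Finset.univ.erase i).filter fun j => σ j = σ i,
          ENNReal.ofReal ((N / L : ℝ) ^ 2 * V ((N / L : ℝ) • (z i - z j))) *
            ‖ψ (cellCorner σ + (L : ℝ)⁻¹ • z)‖ₑ ^ 2 / 2))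
        ≤ ENNReal.ofReal ((L : ℝ)⁻¹ ^ 2) * e (cellCorner σ + (L : ℝ)⁻¹ • z) := by
      intro z
      rw [he]
      dsimp only
      rw [Finset.mul_sum]
      refine Finset.sum_le_sum fun i _ => ?_
      rw [mul_add, parSq_comp_add_smul (hψs.differentiable (by simp)), Finset.mul_sum]
      refine add_le_add le_rfl ?_
      refine le_trans (le_of_eq (Finset.sum_congr rfl fun j hj => ?_))
        (Finset.sum_le_sum_of_subset (Finset.filter_subset (fun j => σ j = σ i) _))
      have hσ := (Finset.mem_filter.1 hj).2
      have hz : (N : ℝ) • ((cellCorner σ + (L : ℝ)⁻¹ • z) i - (cellCorner σ + (L : ℝ)⁻¹ • z) j)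
          = (N / L : ℝ) • (z i - z j) := by
        ext k
        simp only [cellCorner, Pi.smul_apply, Pi.sub_apply, Pi.add_apply, smul_eq_mul, hσ]
        ring
      rw [hz, mul_div_assoc, mul_div_assoc, ← mul_assoc, ← ENNReal.ofReal_mul (by positivity)]
      have hc : (N / L : ℝ) ^ 2 * V ((N / L : ℝ) • (z i - z j))
          = (L : ℝ)⁻¹ ^ 2 * ((N : ℝ) ^ 2 * V ((N / L : ℝ) • (z i - z j))) := by ring
      rw [hc]
    have h2 := h.trans (mul_le_mul_right (lintegral_mono hle) _)
    rw [lintegral_const_mul' _ _ ENNReal.ofReal_ne_top,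
      lintegral_cell hL σ (fun x => ‖ψ x‖ₑ ^ 2), lintegral_cell hL σ e] at h2
    have hcard : (((2 * M - 1) * Fintype.card (Fin N) - M ^ 2 * Fintype.card (Fin 3 → Fin L)) : ℝ)
        = K := by
      simp [hK]
    rw [hcard] at h2
    refine (ENNReal.mul_le_mul_iff_right hJ0 ENNReal.ofReal_ne_top).1 ?_
    calc _ = _ := by ring
      _ ≤ _ := h2
      _ = _ := by ring
  have hsum := Finset.sum_le_sum fun σ (_ : σ ∈ Finset.univ) => hcell σ
  simp_rw [← Finset.mul_sum] at hsum
  rw [← lintegral_box_eq_sum hL, ← lintegral_box_eq_sum hL] at hsum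
  have hn : ∫⁻ x in box 3 N 1, ‖ψ x‖ₑ ^ 2 = 1 := hnorm
  rw [hn, mul_one] at hsum
  have h3 := hsum.trans (mul_le_mul_right (mul_le_mul_right
    (lintegral_energy_le hV hVeven N hψs) _) _)
  calc _ = ENNReal.ofReal ((L : ℝ) ^ 2) * ENNReal.ofReal (K * (4 * π * a / (N / L))) := by
        rw [← ENNReal.ofReal_mul (by positivity)]
        congr 1
        field_simp
    _ ≤ _ := mul_le_mul_right h3 _
    _ = (ENNReal.ofReal ((L : ℝ) ^ 2) * ENNReal.ofReal ((L : ℝ)⁻¹ ^ 2)) *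
        (ENNReal.ofReal (1 + ε) * (kineticE 3 N 1 ψ + interE 3 N 1 (gpPotential V N) ψ)) := by
        ring
    _ = _ := by
        rw [← ENNReal.ofReal_mul (by positivity), ← mul_pow, mul_inv_cancel₀ hL'.ne']
        simp

end Localization

section LowerBound

variable {V : Vec 3 → ℝ} {a : ℝ}

theorem eventually_le_energy
    (hscat : sInf (scatSet3 (fun x => ENNReal.ofReal (V x))) = ENNReal.ofReal (4 * π * a))
    (hVsupp : HasCompactSupport V) (hV : Measurable V) (hVeven : ∀ x, V (-x) = V x) (ha : 0 < a)
    {c : ℝ} (hc : c < 4 * π * a) :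
    ∀ᶠ N : ℕ in atTop, ∀ ψ, IsTrialState 3 N 1 ψ →
      ENNReal.ofReal (c * N) ≤ kineticE 3 N 1 ψ + interE 3 N 1 (gpPotential V N) ψ := by
  obtain ⟨M, hMc, hM⟩ : ∃ M : ℕ, c < 4 * π * a * (1 - (M : ℝ)⁻¹) / (1 + (M : ℝ)⁻¹) ∧ 0 < M := by
    have h : Tendsto (fun M : ℕ => 4 * π * a * (1 - (M : ℝ)⁻¹) / (1 + (M : ℝ)⁻¹)) atTop
        (nhds (4 * π * a * (1 - 0) / (1 + 0))) := by
      have h0 := tendsto_inv_atTop_nhds_zero_nat (𝕜 := ℝ)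
      exact ((h0.const_sub 1).const_mul _).div (h0.const_add 1) (by norm_num)
    rw [sub_zero, add_zero, mul_one, div_one] at h
    exact ((h.eventually (lt_mem_nhds hc)).and (eventually_gt_atTop 0)).exists
  have hM' : (0 : ℝ) < M := by exact_mod_cast hM
  set ε : ℝ := (M : ℝ)⁻¹ with hε
  have hε0 : 0 < ε := inv_pos.2 hM'
  obtain ⟨l₀, hl₀, H⟩ := exists_le_energy hscat hVsupp hV hVeven ha hM hε0
  set y : ℕ → ℝ := fun N => ((N : ℝ) / M) ^ ((3 : ℕ) : ℝ)⁻¹ with hy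
  have hy3 : ∀ N, y N ^ 3 = N / M := fun N =>
    Real.rpow_inv_natCast_pow (by positivity) (by norm_num)
  have hyt : Tendsto y atTop atTop :=
    (tendsto_rpow_atTop (by norm_num)).comp (tendsto_natCast_atTop_atTop.atTop_div_const hM')
  set t : ℕ → ℝ := fun N => ((⌊y N⌋₊ : ℝ) / y N) ^ 3 with ht
  have htt : Tendsto (fun N => 4 * π * a * (t N * (2 - ε) - t N ^ 2) / (1 + ε)) atTop
      (nhds (4 * π * a * (1 - ε) / (1 + ε))) := by
    have h1 : Tendsto t atTop (nhds (1 ^ 3)) := ((tendsto_nat_floor_div_atTop).comp hyt).pow 3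
    rw [one_pow] at h1
    have h2 := (((h1.mul_const (2 - ε)).sub (h1.pow 2)).const_mul (4 * π * a)).div_const (1 + ε)
    convert h2 using 3
    ring
  filter_upwards [htt.eventually (lt_mem_nhds hMc), hyt.eventually_ge_atTop (max 1 l₀),
    eventually_gt_atTop 0] with N hcN hyN hN ψ hψ
  have hN' : (0 : ℝ) < N := by exact_mod_cast hN
  have hy1 : 1 ≤ y N := (le_max_left _ _).trans hyN
  have hy0 : 0 < y N := by linarith
  have hL : 0 < ⌊y N⌋₊ := Nat.floor_pos.2 hy1
  have hL' : (0 : ℝ) < ⌊y N⌋₊ := by exact_mod_cast hL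
  have hNy : (N : ℝ) = M * y N ^ 3 := by
    rw [hy3]
    field_simp
  have hNL : l₀ ≤ (N : ℝ) / ⌊y N⌋₊ := by
    rw [le_div_iff₀ hL']
    have h1 : (⌊y N⌋₊ : ℝ) ≤ y N := Nat.floor_le hy0.le
    have h2 : l₀ ≤ y N := (le_max_right _ _).trans hyN
    have h3 : (1 : ℝ) ≤ M := by exact_mod_cast hM
    calc l₀ * ⌊y N⌋₊ ≤ y N * y N := by gcongr
      _ ≤ 1 * (y N * y N * y N) := by nlinarith [mul_pos hy0 hy0]
      _ ≤ M * (y N * y N * y N) := by gcongr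
      _ = N := by rw [hNy]; ring
  have h := H N _ hL hN hNL ψ hψ
  have hK : ((2 * M - 1) * N - M ^ 2 * (⌊y N⌋₊ : ℝ) ^ 3) * (4 * π * a * (⌊y N⌋₊ : ℝ) ^ 3 / N)
      = (1 + ε) * ((4 * π * a * (t N * (2 - ε) - t N ^ 2) / (1 + ε)) * N) := by
    have h1 : (⌊y N⌋₊ : ℝ) ^ 3 = t N * (N / M) := by
      rw [← hy3, ht]
      field_simp
    rw [h1, hε]
    field_simp
  rw [hK, ENNReal.ofReal_mul (by positivity)] at h
  have h' := (ENNReal.mul_le_mul_iff_right (ENNReal.ofReal_pos.2 (by positivity)).ne'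
    ENNReal.ofReal_ne_top).1 h
  exact (ENNReal.ofReal_le_ofReal (by gcongr)).trans h'

end LowerBound

theorem exists_smooth_truncation {ε : ℝ} (hε : 0 < ε) :
    ∃ χ : ℝ → ℝ, ContDiff ℝ (⊤ : ℕ∞) χ ∧ χ 1 = 1 ∧ (∀ t, |χ t| ≤ 1) ∧
      (∀ t, |deriv χ t| ≤ 1 + ε) ∧ ∀ t, |χ t| ≤ (1 + ε) * |t| := by
  have hr0 : 0 < (1 + ε)⁻¹ := by positivity
  have hr1 : (1 + ε)⁻¹ < 1 := inv_lt_one_of_one_lt₀ (by linarith)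
  let b : ContDiffBump (0 : ℝ) := ⟨(1 + ε)⁻¹, 1, hr0, hr1⟩
  have hbc : Continuous b := b.continuous
  have hbi : ∀ u v, IntervalIntegrable b volume u v := fun u v => hbc.intervalIntegrable u v
  set I : ℝ := ∫ t in (0 : ℝ)..1, b t with hI
  have hIr : (1 + ε)⁻¹ ≤ I := by
    have h1 : ∫ t in (0 : ℝ)..(1 + ε)⁻¹, b t = (1 + ε)⁻¹ := by
      have : ∫ t in (0 : ℝ)..(1 + ε)⁻¹, b t = ∫ t in (0 : ℝ)..(1 + ε)⁻¹, (1 : ℝ) := by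
        refine intervalIntegral.integral_congr fun t ht => ?_
        rw [Set.uIcc_of_le hr0.le] at ht
        refine b.one_of_mem_closedBall ?_
        rw [Metric.mem_closedBall, dist_zero_right, Real.norm_of_nonneg ht.1]
        exact ht.2
      simp [this]
    rw [← h1, hI]
    exact intervalIntegral.integral_mono_interval le_rfl hr0.le hr1.le
      (ae_of_all _ fun t => b.nonneg) (hbi _ _)
  have hI0 : 0 < I := hr0.trans_le hIr
  have hIinv : I⁻¹ ≤ 1 + ε := by
    rw [inv_le_comm₀ hI0 (by positivity)]
    exact hIr
  let χ : ℝ → ℝ := fun t => I⁻¹ * ∫ s in (0 : ℝ)..t, b s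
  have hd : ∀ t, HasDerivAt χ (I⁻¹ * b t) t := fun t =>
    (intervalIntegral.integral_hasDerivAt_right (hbi _ _)
      (hbc.stronglyMeasurableAtFilter _ _) hbc.continuousAt).const_mul _
  have hderiv : deriv χ = fun t => I⁻¹ * b t := funext fun t => (hd t).deriv
  have hχ1 : χ 1 = 1 := inv_mul_cancel₀ hI0.ne'
  have hχ0 : χ 0 = 0 := by simp [χ]
  have hmono : Monotone χ := monotone_of_deriv_nonneg (fun t => (hd t).differentiableAt) fun t => by
    rw [hderiv]
    exact mul_nonneg (inv_nonneg.2 hI0.le) b.nonneg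
  have hodd : ∀ t, χ (-t) = -χ t := by
    intro t
    simp only [χ]
    rw [← mul_neg, ← intervalIntegral.integral_symm]
    congr 1
    have h := intervalIntegral.integral_comp_neg (a := 0) (b := t) b
    simp only [b.neg, neg_zero] at h
    rw [intervalIntegral.integral_symm, ← h, ← intervalIntegral.integral_symm]
  have hle : ∀ t, χ t ≤ 1 := by
    intro t
    rcases le_total t 1 with ht | ht
    · exact (hmono ht).trans hχ1.le
    · have h0 : ∫ s in (1 : ℝ)..t, b s = 0 := by
        have : ∫ s in (1 : ℝ)..t, b s = ∫ s in (1 : ℝ)..t, (0 : ℝ) := by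
          refine intervalIntegral.integral_congr fun s hs => ?_
          rw [Set.uIcc_of_le ht] at hs
          refine b.zero_of_le_dist ?_
          rw [dist_zero_right]
          exact hs.1.trans (le_abs_self s)
        simp [this]
      have : χ t = χ 1 := by
        simp only [χ]
        rw [← intervalIntegral.integral_add_adjacent_intervals (hbi 0 1) (hbi 1 t), h0, add_zero]
      rw [this, hχ1]
  have hdle : ∀ t, |deriv χ t| ≤ 1 + ε := by
    intro t
    rw [hderiv, abs_of_nonneg (mul_nonneg (inv_nonneg.2 hI0.le) b.nonneg)]
    calc I⁻¹ * b t ≤ (1 + ε) * 1 := mul_le_mul hIinv b.le_one b.nonneg (by positivity)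
      _ = 1 + ε := mul_one _
  refine ⟨χ, ?_, hχ1, fun t => abs_le.2 ⟨?_, hle t⟩, hdle, fun t => ?_⟩
  · refine contDiff_infty_iff_deriv.2 ⟨fun t => (hd t).differentiableAt, ?_⟩
    rw [hderiv]
    exact contDiff_const.mul b.contDiff
  · have := hle (-t)
    rw [hodd] at this
    linarith
  · have h := Convex.norm_image_sub_le_of_norm_deriv_le (f := χ) (s := Set.univ) (C := 1 + ε)
      (fun x _ => (hd x).differentiableAt) (fun x _ => hdle x) convex_univ (Set.mem_univ 0)
      (Set.mem_univ t)
    simpa [hχ0] using h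

section Profile

theorem gradSq_comp_le {d : ℕ} {χ : ℝ → ℝ} (hχ : Differentiable ℝ χ) {f : Vec d → ℝ}
    (hf : Differentiable ℝ f) {c : ℝ} (hd : ∀ t, |deriv χ t| ≤ c) (x : Vec d) :
    gradSq (fun x => χ (f x)) x ≤ ENNReal.ofReal (c ^ 2) * gradSq f x := by
  rw [gradSq, gradSq, Finset.mul_sum]
  refine Finset.sum_le_sum fun k _ => ?_
  have h := (hχ (f x)).hasDerivAt.comp_hasFDerivAt x (hf x).hasFDerivAt
  have h' : fderiv ℝ (fun x => χ (f x)) x = _ := h.fderiv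
  rw [h', _root_.smul_apply, smul_eq_mul, enorm_mul, mul_pow, enorm_sq_eq_ofReal (deriv χ _)]
  refine mul_le_mul_left (ENNReal.ofReal_le_ofReal ?_) _
  rw [← sq_abs]
  exact pow_le_pow_left₀ (abs_nonneg _) (hd _) 2

theorem enorm_half_add_sq_le (p q : ℝ) :
    ‖(1 / 2) * (p + q)‖ₑ ^ 2 ≤ (1 / 2 : ℝ≥0∞) * (‖p‖ₑ ^ 2 + ‖q‖ₑ ^ 2) := by
  have h : (1 / 2 : ℝ≥0∞) = ENNReal.ofReal (1 / 2) := by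
    rw [ENNReal.ofReal_div_of_pos two_pos]
    simp
  rw [enorm_sq_eq_ofReal, enorm_sq_eq_ofReal, enorm_sq_eq_ofReal, h,
    ← ENNReal.ofReal_add (sq_nonneg _) (sq_nonneg _), ← ENNReal.ofReal_mul (by norm_num)]
  refine ENNReal.ofReal_le_ofReal ?_
  nlinarith [sq_nonneg (p - q)]

theorem gradSq_half_add_neg_le {d : ℕ} {f : Vec d → ℝ} (hf : Differentiable ℝ f) (x : Vec d) :
    gradSq (fun x => (1 / 2) * (f x + f (-x))) x
      ≤ (1 / 2 : ℝ≥0∞) * (gradSq f x + gradSq f (-x)) := by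
  have h1 : ∀ v, fderiv ℝ (fun x => (1 / 2) * (f x + f (-x))) x v
      = (1 / 2) * (fderiv ℝ f x v + -fderiv ℝ f (-x) v) := by
    intro v
    have h2 := (hf (-x)).hasFDerivAt.comp x (hasFDerivAt_id x).neg
    have h := ((hf x).hasFDerivAt.add h2).const_mul (1 / 2)
    have h' : fderiv ℝ (fun x => (1 / 2) * (f x + f (-x))) x = _ := h.fderiv
    rw [h']
    simp
    ring
  simp_rw [gradSq, h1, ← Finset.sum_add_distrib, Finset.mul_sum]
  refine Finset.sum_le_sum fun k _ => (enorm_half_add_sq_le _ _).trans (le_of_eq ?_)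
  rw [enorm_neg]

variable {V : Vec 3 → ℝ}

theorem exists_profile (hV : Measurable V) (hVeven : ∀ x, V (-x) = V x) {c : ℝ}
    (hc : sInf (scatSet3 (fun x => ENNReal.ofReal (V x))) < ENNReal.ofReal c) :
    ∃ f : Vec 3 → ℝ, ContDiff ℝ (⊤ : ℕ∞) f ∧ HasCompactSupport (fun x => f x - 1) ∧
      (∀ x, f (-x) = f x) ∧ (∀ x, |f x| ≤ 1) ∧
      ∫⁻ x, (gradSq f x + ENNReal.ofReal (V x) * ‖f x‖ₑ ^ 2 / 2) < ENNReal.ofReal c := by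
  obtain ⟨_, ⟨f, hf, hfc, rfl⟩, hlt⟩ := sInf_lt_iff.1 hc
  set E := ∫⁻ x, (gradSq f x + ENNReal.ofReal (V x) * ‖f x‖ₑ ^ 2 / 2) with hE
  have hlt : E < ENNReal.ofReal c := hlt
  obtain ⟨ε, hε, hlt⟩ : ∃ ε > 0, ENNReal.ofReal ((1 + ε) ^ 2) * E < ENNReal.ofReal c := by
    have hEt : E ≠ ⊤ := hlt.ne_top
    have h : Tendsto (fun ε : ℝ => ENNReal.ofReal ((1 + ε) ^ 2) * E) (nhdsWithin 0 (Set.Ioi 0))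
        (nhds (ENNReal.ofReal ((1 + 0) ^ 2) * E)) := by
      refine ENNReal.Tendsto.mul_const ?_ (Or.inr hEt)
      refine (ENNReal.continuous_ofReal.tendsto _).comp ?_
      exact ((by fun_prop : Continuous fun ε : ℝ => (1 + ε) ^ 2).tendsto 0).mono_left
        nhdsWithin_le_nhds
    rw [add_zero, one_pow, ENNReal.ofReal_one, one_mul] at h
    obtain ⟨ε, h1, h2⟩ := ((h.eventually (gt_mem_nhds hlt)).and self_mem_nhdsWithin).exists
    exact ⟨ε, h2, h1⟩
  obtain ⟨χ, hχ, hχ1, hχle, hχd, hχl⟩ := exists_smooth_truncation hε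
  set g : Vec 3 → ℝ := fun x => χ (f x) with hg
  have hgs : ContDiff ℝ (⊤ : ℕ∞) g := hχ.comp hf
  have hgc : HasCompactSupport fun x => g x - 1 := by
    refine hfc.mono fun x hx hx' => hx ?_
    have h1 : f x = 1 := sub_eq_zero.1 hx'
    simp only [hg, h1, hχ1, sub_self]
  have hgE : ∀ x, gradSq g x + ENNReal.ofReal (V x) * ‖g x‖ₑ ^ 2 / 2 ≤ ENNReal.ofReal ((1 + ε) ^ 2)
      * (gradSq f x + ENNReal.ofReal (V x) * ‖f x‖ₑ ^ 2 / 2) := by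
    intro x
    rw [mul_add]
    refine add_le_add (gradSq_comp_le (hχ.differentiable (by simp)) (hf.differentiable (by simp))
      hχd x) ?_
    have h1 : ‖g x‖ₑ ^ 2 ≤ ENNReal.ofReal ((1 + ε) ^ 2) * ‖f x‖ₑ ^ 2 := by
      rw [enorm_sq_eq_ofReal, enorm_sq_eq_ofReal, ← ENNReal.ofReal_mul (by positivity), ← mul_pow]
      refine ENNReal.ofReal_le_ofReal ?_
      rw [← sq_abs, ← sq_abs ((1 + ε) * f x), abs_mul, abs_of_pos (by positivity : 0 < 1 + ε)]
      exact pow_le_pow_left₀ (abs_nonneg _) (hχl _) 2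
    calc ENNReal.ofReal (V x) * ‖g x‖ₑ ^ 2 / 2
        ≤ ENNReal.ofReal (V x) * (ENNReal.ofReal ((1 + ε) ^ 2) * ‖f x‖ₑ ^ 2) / 2 := by gcongr
      _ = _ := by
        rw [← mul_assoc, mul_comm (ENNReal.ofReal (V x)), mul_assoc, mul_div_assoc]
  set e : Vec 3 → ℝ≥0∞ := fun x => gradSq g x + ENNReal.ofReal (V x) * ‖g x‖ₑ ^ 2 / 2 with he
  have hem : Measurable e := by
    have h1 : Measurable fun x => ‖g x‖ₑ ^ 2 :=
      ((ENNReal.continuous_pow 2).comp hgs.continuous.enorm).measurable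
    have h2 : Measurable (gradSq g) := by
      refine Finset.measurable_sum _ fun k _ => ?_
      exact ((ENNReal.continuous_pow 2).comp
        ((hgs.continuous_fderiv (by simp)).clm_apply continuous_const).enorm).measurable
    fun_prop
  refine ⟨fun x => (1 / 2) * (g x + g (-x)), contDiff_const.mul (hgs.add (hgs.comp contDiff_neg)),
    ?_, fun x => by simp only [neg_neg, add_comm], fun x => ?_, ?_⟩
  · have h1 : HasCompactSupport fun x => g (-x) - 1 :=
      hgc.comp_homeomorph (Homeomorph.neg (Vec 3))
    have h2 := (hgc.add h1).mul_left (f := fun _ => (1 / 2 : ℝ))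
    have h3 : (fun x => (1 / 2) * (g x + g (-x)) - 1) = (fun _ => (1 / 2 : ℝ)) *
        ((fun x => g x - 1) + fun x => g (-x) - 1) := by
      ext x
      simp only [Pi.mul_apply, Pi.add_apply]
      ring
    dsimp only
    rw [h3]
    exact h2
  · rw [abs_mul, abs_of_pos (by norm_num : (0 : ℝ) < 1 / 2)]
    have := abs_add_le (g x) (g (-x))
    have := hχle (f x)
    have := hχle (f (-x))
    simp only [hg] at *
    linarith
  · refine lt_of_le_of_lt ?_ hlt
    calc _ ≤ ∫⁻ x, (1 / 2 : ℝ≥0∞) * (e x + e (-x)) := by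
          refine lintegral_mono fun x => ?_
          have h1 := gradSq_half_add_neg_le (hgs.differentiable (by simp)) x
          have h2 := enorm_half_add_sq_le (g x) (g (-x))
          calc _ ≤ (1 / 2 : ℝ≥0∞) * (gradSq g x + gradSq g (-x)) + ENNReal.ofReal (V x) *
                ((1 / 2 : ℝ≥0∞) * (‖g x‖ₑ ^ 2 + ‖g (-x)‖ₑ ^ 2)) / 2 := by gcongr
            _ = _ := by
              simp only [he, hVeven, div_eq_mul_inv]
              ring
      _ = ∫⁻ x, e x := by
          rw [lintegral_const_mul' _ _ (by simp), lintegral_add_left hem,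
            lintegral_neg_eq_self, ← two_mul, ← mul_assoc, one_div,
            ENNReal.inv_mul_cancel (by simp) (by simp), one_mul]
      _ ≤ _ := by
          rw [hE, ← lintegral_const_mul' _ _ ENNReal.ofReal_ne_top]
          exact lintegral_mono hgE

end Profile

section Periodic

/-- The function on the torus that equals `f (N z)` near the origin. -/
def torusProfile (f : Vec 3 → ℝ) (N : ℕ) (z : Vec 3) : ℝ :=
  f ((N : ℝ) • fun k => z k - round (z k))

/-- The unit cube centred at the origin. -/
def unitCube : Set (Vec 3) := Set.Icc (fun _ => -1 / 2) (fun _ => 1 / 2)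

theorem mem_unitCube {z : Vec 3} : z ∈ unitCube ↔ ∀ k, |z k| ≤ 1 / 2 := by
  simp only [unitCube, Set.mem_Icc, Pi.le_def, ← forall_and, abs_le, neg_div]

variable {f : Vec 3 → ℝ} {R : ℝ} {N : ℕ}

theorem le_norm_smul_of_le_abs (w : Vec 3) (k : Fin 3) (hN : 4 * R ≤ N) (h : 1 / 4 ≤ |w k|) :
    R ≤ ‖(N : ℝ) • w‖ := by
  have h1 := norm_le_pi_norm ((N : ℝ) • w) k
  rw [Pi.smul_apply, smul_eq_mul, Real.norm_eq_abs, abs_mul, Nat.abs_cast] at h1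
  have h2 : (N : ℝ) * (1 / 4) ≤ N * |w k| := by gcongr
  linarith

theorem torusProfile_eq (hf : ∀ x, R ≤ ‖x‖ → f x = 1) (hN : 4 * R ≤ N) {z : Vec 3}
    {n : Fin 3 → ℤ} (h : ∀ k, |z k - n k| ≤ 3 / 4) :
    torusProfile f N z = f ((N : ℝ) • fun k => z k - n k) := by
  by_cases hn : n = fun k => round (z k)
  · rw [hn, torusProfile]
  · obtain ⟨k, hk⟩ := Function.ne_iff.1 hn
    have h1 : (1 : ℝ) ≤ |(n k : ℝ) - round (z k)| := by
      exact_mod_cast Int.one_le_abs (sub_ne_zero.2 hk)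
    have h2 : |z k - round (z k)| ≤ 1 / 2 := abs_sub_round (z k)
    have h3 : |(n k : ℝ) - round (z k)| ≤ |z k - n k| + |z k - round (z k)| := by
      rw [abs_sub_comm (z k) (n k)]
      exact abs_sub_le _ _ _
    have h4 := h k
    rw [torusProfile, hf _ (le_norm_smul_of_le_abs _ k hN (by linarith)),
      hf _ (le_norm_smul_of_le_abs _ k hN (by linarith))]

theorem torusProfile_add_int (f : Vec 3 → ℝ) (N : ℕ) (z : Vec 3) (n : Fin 3 → ℤ) :
    torusProfile f N (fun k => z k + n k) = torusProfile f N z := by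
  simp [torusProfile]

theorem torusProfile_neg (hf : ∀ x, R ≤ ‖x‖ → f x = 1) (hN : 4 * R ≤ N)
    (hfeven : ∀ x, f (-x) = f x) (z : Vec 3) : torusProfile f N (-z) = torusProfile f N z := by
  rw [torusProfile_eq hf hN (n := fun k => -round (z k)), torusProfile, ← hfeven, ← smul_neg]
  · congr 2
    ext k
    simp
    ring
  · intro k
    have : |z k - round (z k)| ≤ 1 / 2 := abs_sub_round (z k)
    rw [Pi.neg_apply, Int.cast_neg, ← neg_add', abs_neg, ← sub_eq_add_neg]
    linarith

theorem torusProfile_eventuallyEq (hf : ∀ x, R ≤ ‖x‖ → f x = 1) (hN : 4 * R ≤ N) {z : Vec 3}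
    {n : Fin 3 → ℤ} (h : ∀ k, |z k - n k| ≤ 1 / 2) :
    torusProfile f N =ᶠ[nhds z] fun w => f ((N : ℝ) • (fun k => -(n k : ℝ)) + (N : ℝ) • w) := by
  filter_upwards [Metric.ball_mem_nhds z (by norm_num : (0 : ℝ) < 1 / 4)] with w hw
  rw [torusProfile_eq hf hN (n := n)]
  · rw [← smul_add]
    congr 2
    ext k
    simp only [Pi.add_apply]
    ring
  · intro k
    have h1 : |w k - z k| ≤ 1 / 4 := by
      rw [Metric.mem_ball, dist_eq_norm] at hw
      exact (norm_le_pi_norm (w - z) k).trans hw.le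
    have h2 := abs_sub_le (w k) (z k) (n k)
    have h3 := h k
    linarith

theorem contDiff_torusProfile (hf : ∀ x, R ≤ ‖x‖ → f x = 1) (hN : 4 * R ≤ N)
    (hfs : ContDiff ℝ (⊤ : ℕ∞) f) : ContDiff ℝ (⊤ : ℕ∞) (torusProfile f N) := by
  refine contDiff_iff_contDiffAt.2 fun z => ?_
  refine ContDiffAt.congr_of_eventuallyEq ?_
    (torusProfile_eventuallyEq hf hN (n := fun k => round (z k)) fun k => abs_sub_round (z k))
  exact (hfs.comp (by fun_prop)).contDiffAt

theorem torusProfile_of_mem (hf : ∀ x, R ≤ ‖x‖ → f x = 1) (hN : 4 * R ≤ N) {z : Vec 3}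
    (hz : z ∈ unitCube) : torusProfile f N z = f ((N : ℝ) • z) := by
  rw [torusProfile_eq hf hN (n := 0)]
  · simp
  · intro k
    have := mem_unitCube.1 hz k
    simp
    linarith

theorem fderiv_torusProfile_of_mem (hf : ∀ x, R ≤ ‖x‖ → f x = 1) (hN : 4 * R ≤ N)
    (hfs : Differentiable ℝ f) {z : Vec 3} (hz : z ∈ unitCube) (v : Vec 3) :
    fderiv ℝ (torusProfile f N) z v = N * fderiv ℝ f ((N : ℝ) • z) v := by
  have h := torusProfile_eventuallyEq hf hN (z := z) (n := 0) fun k => by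
    simpa using mem_unitCube.1 hz k
  rw [h.fderiv_eq, fderiv_comp_smul_apply hfs]
  congr 3
  ext k
  simp

theorem setLIntegral_unitCube_comp_smul_le (hN : 0 < N) (G : Vec 3 → ℝ≥0∞) :
    ∫⁻ z in unitCube, G ((N : ℝ) • z) ≤ ENNReal.ofReal (1 / (N : ℝ) ^ 3) * ∫⁻ x, G x := by
  refine (setLIntegral_le_lintegral _ _).trans (le_of_eq ?_)
  have h := lintegral_comp_add_smul volume
    (by exact_mod_cast hN.ne' : (N : ℝ) ≠ 0) (0 : Vec 3) G
  simp only [zero_add] at h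
  rw [h, Module.finrank_fin_fun, abs_of_nonneg (by positivity), one_div]

theorem lintegral_gradSq_torusProfile_le (hf : ∀ x, R ≤ ‖x‖ → f x = 1) (hN : 4 * R ≤ N)
    (hN0 : 0 < N) (hfs : Differentiable ℝ f) :
    ∫⁻ z in unitCube, gradSq (torusProfile f N) z ≤ ENNReal.ofReal (1 / N) * ∫⁻ x, gradSq f x := by
  have hN' : (0 : ℝ) < N := by exact_mod_cast hN0
  calc _ = ∫⁻ z in unitCube, ENNReal.ofReal ((N : ℝ) ^ 2) * gradSq f ((N : ℝ) • z) := by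
        refine setLIntegral_congr_fun measurableSet_Icc fun z hz => ?_
        simp only [gradSq, fderiv_torusProfile_of_mem hf hN hfs hz, enorm_mul, mul_pow,
          enorm_sq_eq_ofReal (N : ℝ), Finset.mul_sum]
    _ ≤ ENNReal.ofReal ((N : ℝ) ^ 2) * (ENNReal.ofReal (1 / (N : ℝ) ^ 3) * ∫⁻ x, gradSq f x) := by
        rw [lintegral_const_mul' _ _ ENNReal.ofReal_ne_top]
        gcongr
        exact setLIntegral_unitCube_comp_smul_le hN0 _
    _ = _ := by
        rw [← mul_assoc, ← ENNReal.ofReal_mul (by positivity)]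
        congr 2
        field_simp

theorem lintegral_enorm_fderiv_torusProfile_le (hf : ∀ x, R ≤ ‖x‖ → f x = 1) (hN : 4 * R ≤ N)
    (hN0 : 0 < N) (hfs : Differentiable ℝ f) (v : Vec 3) :
    ∫⁻ z in unitCube, ‖fderiv ℝ (torusProfile f N) z v‖ₑ
      ≤ ENNReal.ofReal (1 / (N : ℝ) ^ 2) * ∫⁻ x, ‖fderiv ℝ f x v‖ₑ := by
  have hN' : (0 : ℝ) < N := by exact_mod_cast hN0
  calc _ = ∫⁻ z in unitCube, ENNReal.ofReal N * ‖fderiv ℝ f ((N : ℝ) • z) v‖ₑ := by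
        refine setLIntegral_congr_fun measurableSet_Icc fun z hz => ?_
        simp only [fderiv_torusProfile_of_mem hf hN hfs hz, enorm_mul]
        rw [Real.enorm_of_nonneg hN'.le]
    _ ≤ ENNReal.ofReal N * (ENNReal.ofReal (1 / (N : ℝ) ^ 3) * ∫⁻ x, ‖fderiv ℝ f x v‖ₑ) := by
        rw [lintegral_const_mul' _ _ ENNReal.ofReal_ne_top]
        gcongr
        exact setLIntegral_unitCube_comp_smul_le hN0 fun x => ‖fderiv ℝ f x v‖ₑ
    _ = _ := by
        rw [← mul_assoc, ← ENNReal.ofReal_mul (by positivity)]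
        congr 2
        field_simp

theorem periodize_gpPotential_of_mem {V : Vec 3 → ℝ} (hVR : ∀ x, R ≤ ‖x‖ → V x = 0)
    (hN : 4 * R ≤ N) {z : Vec 3} (hz : z ∈ unitCube) :
    periodize 3 (gpPotential V N) 1 z = ENNReal.ofReal ((N : ℝ) ^ 2 * V ((N : ℝ) • z)) := by
  rw [periodize, tsum_eq_single 0]
  · simp [gpPotential]
  · intro n hn
    obtain ⟨k, hk⟩ := Function.ne_iff.1 hn
    have h1 : (1 : ℝ) ≤ |(n k : ℝ)| := by exact_mod_cast Int.one_le_abs hk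
    have h2 := mem_unitCube.1 hz k
    have h3 : |(n k : ℝ)| ≤ |z k + 1 * n k| + |z k| := by
      calc |(n k : ℝ)| = |(z k + 1 * n k) + -z k| := by
            congr 1
            ring
        _ ≤ |z k + 1 * n k| + |-z k| := abs_add_le _ _
        _ = _ := by rw [abs_neg]
    rw [gpPotential, hVR _ (le_norm_smul_of_le_abs _ k hN (by linarith))]
    simp

theorem lintegral_periodize_torusProfile_le {V : Vec 3 → ℝ} (hVR : ∀ x, R ≤ ‖x‖ → V x = 0)
    (hf : ∀ x, R ≤ ‖x‖ → f x = 1) (hN : 4 * R ≤ N) (hN0 : 0 < N) :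
    ∫⁻ z in unitCube, periodize 3 (gpPotential V N) 1 z * ‖torusProfile f N z‖ₑ ^ 2
      ≤ ENNReal.ofReal (1 / N) * ∫⁻ x, ENNReal.ofReal (V x) * ‖f x‖ₑ ^ 2 := by
  have hN' : (0 : ℝ) < N := by exact_mod_cast hN0
  calc _ = ∫⁻ z in unitCube, ENNReal.ofReal ((N : ℝ) ^ 2) *
          (ENNReal.ofReal (V ((N : ℝ) • z)) * ‖f ((N : ℝ) • z)‖ₑ ^ 2) := by
        refine setLIntegral_congr_fun measurableSet_Icc fun z hz => ?_
        simp only [periodize_gpPotential_of_mem hVR hN hz, torusProfile_of_mem hf hN hz]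
        rw [ENNReal.ofReal_mul (by positivity), mul_assoc]
    _ ≤ ENNReal.ofReal ((N : ℝ) ^ 2) * (ENNReal.ofReal (1 / (N : ℝ) ^ 3) *
          ∫⁻ x, ENNReal.ofReal (V x) * ‖f x‖ₑ ^ 2) := by
        rw [lintegral_const_mul' _ _ ENNReal.ofReal_ne_top]
        gcongr
        exact setLIntegral_unitCube_comp_smul_le hN0 fun x => ENNReal.ofReal (V x) * ‖f x‖ₑ ^ 2
    _ = _ := by
        rw [← mul_assoc, ← ENNReal.ofReal_mul (by positivity)]
        congr 2
        field_simp

theorem lintegral_one_sub_torusProfile_le (hf : ∀ x, R ≤ ‖x‖ → f x = 1) (hN : 4 * R ≤ N)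
    (hN0 : 0 < N) :
    ∫⁻ z in unitCube, ENNReal.ofReal (1 - torusProfile f N z ^ 2)
      ≤ ENNReal.ofReal (1 / (N : ℝ) ^ 3) * ∫⁻ x, ENNReal.ofReal (1 - f x ^ 2) := by
  refine le_trans (le_of_eq ?_)
    (setLIntegral_unitCube_comp_smul_le hN0 fun x => ENNReal.ofReal (1 - f x ^ 2))
  refine setLIntegral_congr_fun measurableSet_Icc fun z hz => ?_
  simp only [torusProfile_of_mem hf hN hz]

end Periodic

section TorusIntegral

open scoped Pointwise

variable {G : Vec 3 → ℝ≥0∞}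

theorem setLIntegral_Icc_add_one (hG : ∀ (z : Vec 3) (n : Fin 3 → ℤ), G (fun k => z k + n k) = G z)
    (v w : Vec 3) : ∫⁻ z in Set.Icc v (v + 1), G z = ∫⁻ z in Set.Icc w (w + 1), G z := by
  let b := Pi.basisFun ℝ (Fin 3)
  have hD := ZSpan.isAddFundamentalDomain' b (volume : Measure (Vec 3))
  have : Countable (Submodule.span ℤ (Set.range b)).toAddSubgroup :=
    inferInstanceAs (Countable (Submodule.span ℤ (Set.range b)))
  have hD' : ∀ v : Vec 3, v +ᵥ ZSpan.fundamentalDomain b = Set.pi Set.univ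
      fun k => Set.Ico (v k) ((v + 1) k) := by
    intro v
    ext z
    rw [Set.mem_vadd_set_iff_neg_vadd_mem, ZSpan.fundamentalDomain_pi_basisFun]
    simp only [Set.mem_pi, Set.mem_univ, true_implies, Set.mem_Ico, vadd_eq_add, Pi.add_apply,
      Pi.neg_apply, Pi.one_apply]
    refine forall_congr' fun k => ?_
    constructor <;> rintro ⟨h1, h2⟩ <;> constructor <;> linarith
  have hae : ∀ v : Vec 3, ∫⁻ z in Set.Icc v (v + 1), G z
      = ∫⁻ z in v +ᵥ ZSpan.fundamentalDomain b, G z := by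
    intro v
    rw [hD' v]
    exact (setLIntegral_congr Measure.univ_pi_Ico_ae_eq_Icc).symm
  rw [hae, hae]
  refine (hD.vadd_of_comm v).setLIntegral_eq (hD.vadd_of_comm w) G fun g x => ?_
  have hg : (g : Vec 3) ∈ Submodule.span ℤ (Set.range b) := g.2
  rw [b.mem_span_iff_repr_mem ℤ] at hg
  choose n hn using hg
  rw [← hG x n]
  congr 1
  ext k
  have := hn k
  simp only [algebraMap_int_eq, eq_intCast, b, Pi.basisFun_repr] at this
  rw [this, add_comm]
  rfl

theorem lintegral_unitCube_sub (hGm : Measurable G)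
    (hG : ∀ (z : Vec 3) (n : Fin 3 → ℤ), G (fun k => z k + n k) = G z) (y : Vec 3) :
    ∫⁻ z in unitCube, G (y - z) = ∫⁻ z in unitCube, G z := by
  have h := (Measure.measurePreserving_sub_left volume y).setLIntegral_comp_preimage
    (s := Set.Icc (y - fun _ => 1 / 2) (y - (fun _ => 1 / 2) + 1)) measurableSet_Icc hGm
  have hpre : (fun z => y - z) ⁻¹' Set.Icc (y - fun _ => 1 / 2) (y - (fun _ => 1 / 2) + 1)
      = unitCube := by
    ext z
    simp only [Set.mem_preimage, unitCube, Set.mem_Icc, Pi.le_def, Pi.sub_apply, Pi.add_apply,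
      Pi.one_apply]
    constructor <;> rintro ⟨h1, h2⟩ <;> constructor <;> intro k <;> have := h1 k <;>
      have := h2 k <;> linarith
  have hC : unitCube = Set.Icc (fun _ => -1 / 2 : Vec 3) ((fun _ => -1 / 2) + 1) := by
    rw [unitCube]
    congr 1
    ext k
    simp only [Pi.add_apply, Pi.one_apply]
    norm_num
  rw [hpre] at h
  rw [h, hC]
  exact setLIntegral_Icc_add_one hG _ _

theorem volume_restrict_box (N : ℕ) : (volume.restrict (box 3 N 1) : Measure (Fin N → Vec 3))
    = Measure.pi fun _ => volume.restrict unitCube := by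
  have h : box 3 N 1 = Set.Icc (fun _ _ => -1 / 2) (fun _ _ => 1 / 2) := by
    ext x
    simp only [box, Set.mem_ofPred_eq, Set.mem_Icc, Pi.le_def, forall_and]
  rw [h, volume_restrict_Icc_vec]
  rfl

instance isProbabilityMeasure_unitCube : IsProbabilityMeasure (volume.restrict unitCube) := by
  refine ⟨?_⟩
  rw [Measure.restrict_apply_univ, unitCube, Real.volume_Icc_pi]
  norm_num

theorem lintegral_box_comp_sub_mul (hGm : Measurable G)
    (hG : ∀ (z : Vec 3) (n : Fin 3 → ℤ), G (fun k => z k + n k) = G z) {N : ℕ} {i j : Fin N}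
    (hij : i ≠ j) {H : (Fin N → Vec 3) → ℝ≥0∞} (hHm : Measurable H)
    (hH : ∀ x z, H (Function.update x j z) = H x) :
    ∫⁻ x in box 3 N 1, G (x i - x j) * H x
      = (∫⁻ z in unitCube, G z) * ∫⁻ x in box 3 N 1, H x := by
  rw [volume_restrict_box, ← lintegral_lintegral_update _ (f := fun x => G (x i - x j) * H x)
    ((hGm.comp (by fun_prop)).mul hHm) j, ← lintegral_const_mul _ hHm]
  refine lintegral_congr fun x => ?_
  simp only [hH, Function.update_self, Function.update_of_ne hij]
  have hm : Measurable fun z => G (x i - z) := hGm.comp (by fun_prop)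
  rw [lintegral_mul_const _ hm, lintegral_unitCube_sub hGm hG]

theorem lintegral_box_comp_sub (hGm : Measurable G)
    (hG : ∀ (z : Vec 3) (n : Fin 3 → ℤ), G (fun k => z k + n k) = G z) {N : ℕ} {i j : Fin N}
    (hij : i ≠ j) :
    ∫⁻ x in box 3 N 1, G (x i - x j) = ∫⁻ z in unitCube, G z := by
  have h := lintegral_box_comp_sub_mul hGm hG hij (H := fun _ => 1) measurable_const
    fun _ _ => rfl
  simp only [mul_one] at h
  rw [h, volume_restrict_box]
  simp

theorem lintegral_box_comp_sub_mul_comp_sub (hGm : Measurable G)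
    (hG : ∀ (z : Vec 3) (n : Fin 3 → ℤ), G (fun k => z k + n k) = G z) {N : ℕ} {i j j' : Fin N}
    (hij : i ≠ j) (hij' : i ≠ j') (hjj' : j ≠ j') :
    ∫⁻ x in box 3 N 1, G (x i - x j) * G (x i - x j') = (∫⁻ z in unitCube, G z) ^ 2 := by
  rw [lintegral_box_comp_sub_mul hGm hG hij (H := fun x => G (x i - x j'))
    (hGm.comp (by fun_prop)), lintegral_box_comp_sub hGm hG hij', sq]
  intro x z
  rw [Function.update_of_ne hij, Function.update_of_ne hjj'.symm]

end TorusIntegral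

section Jastrow

/-- The pairs `(i, j)` with `i < j`. -/
def pairsLT (N : ℕ) : Finset (Fin N × Fin N) := Finset.univ.filter fun p => p.1 < p.2

theorem mem_pairsLT {N : ℕ} {p : Fin N × Fin N} : p ∈ pairsLT N ↔ p.1 < p.2 := by
  simp [pairsLT]

theorem prod_pairsLT_perm {N : ℕ} {M : Type*} [CommMonoid M] (g : Fin N → Fin N → M)
    (hg : ∀ i j, g i j = g j i) (σ : Equiv.Perm (Fin N)) :
    ∏ p ∈ pairsLT N, g (σ p.1) (σ p.2) = ∏ p ∈ pairsLT N, g p.1 p.2 := by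
  let e : Equiv.Perm (Fin N) → Fin N × Fin N → Fin N × Fin N := fun τ p =>
    if τ p.1 < τ p.2 then (τ p.1, τ p.2) else (τ p.2, τ p.1)
  have he : ∀ τ, ∀ p ∈ pairsLT N, e τ p ∈ pairsLT N := by
    intro τ p hp
    rw [mem_pairsLT] at hp ⊢
    by_cases h : τ p.1 < τ p.2
    · simp [e, h]
    · have := τ.injective.ne hp.ne
      simp only [e, h, if_false]
      exact lt_of_le_of_ne (not_lt.1 h) this.symm
  have hinv : ∀ τ ρ : Equiv.Perm (Fin N), (∀ i, ρ (τ i) = i) → ∀ p ∈ pairsLT N,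
      e ρ (e τ p) = p := by
    intro τ ρ h p hp
    rw [mem_pairsLT] at hp
    by_cases h1 : τ p.1 < τ p.2
    · simp [e, h1, h, hp]
    · simp [e, h1, h, hp.le]
  refine Finset.prod_nbij' (e σ) (e σ⁻¹) (he σ) (he σ⁻¹) (hinv _ _ fun i => by simp)
    (hinv _ _ fun i => by simp) fun p _ => ?_
  by_cases h : σ p.1 < σ p.2
  · simp [e, h]
  · simp only [e, h, if_false]
    exact hg _ _

/-- The Jastrow product of `F` over all pairs of particles. -/
def jastrow (F : Vec 3 → ℝ) (N : ℕ) (x : Fin N → Vec 3) : ℝ :=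
  ∏ p ∈ pairsLT N, F (x p.1 - x p.2)

variable {F : Vec 3 → ℝ} {N : ℕ}

theorem contDiff_jastrow (hF : ContDiff ℝ (⊤ : ℕ∞) F) :
    ContDiff ℝ (⊤ : ℕ∞) (jastrow F N) := by
  refine contDiff_prod fun p _ => hF.comp ?_
  fun_prop

theorem jastrow_add_int (hF : ∀ (z : Vec 3) (n : Fin 3 → ℤ), F (fun k => z k + n k) = F z)
    (x : Fin N → Vec 3) (v : Fin N → Fin 3 → ℤ) :
    jastrow F N (fun i k => x i k + v i k) = jastrow F N x := by
  refine Finset.prod_congr rfl fun p _ => ?_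
  rw [← hF (x p.1 - x p.2) (v p.1 - v p.2)]
  congr 1
  ext k
  simp only [Pi.sub_apply]
  push_cast
  ring

theorem jastrow_perm (hF : ∀ z, F (-z) = F z) (σ : Equiv.Perm (Fin N)) (x : Fin N → Vec 3) :
    jastrow F N (x ∘ σ) = jastrow F N x := by
  refine prod_pairsLT_perm (fun i j => F (x i - x j)) (fun i j => ?_) σ
  rw [← hF, neg_sub]

theorem abs_prod_le_one {ι : Type*} (s : Finset ι) {g : ι → ℝ} (hg : ∀ i, |g i| ≤ 1) :
    |∏ i ∈ s, g i| ≤ 1 := by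
  rw [Finset.abs_prod]
  exact Finset.prod_le_one (fun i _ => abs_nonneg _) fun i _ => hg i

theorem abs_jastrow_le_one (hF : ∀ z, |F z| ≤ 1) (x : Fin N → Vec 3) : |jastrow F N x| ≤ 1 :=
  abs_prod_le_one _ fun _ => hF _

theorem enorm_jastrow_le (hF : ∀ z, |F z| ≤ 1) (x : Fin N → Vec 3) {i j : Fin N} (hij : i < j) :
    ‖jastrow F N x‖ₑ ≤ ‖F (x i - x j)‖ₑ := by
  rw [Real.enorm_eq_ofReal_abs, Real.enorm_eq_ofReal_abs]
  refine ENNReal.ofReal_le_ofReal ?_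
  rw [jastrow, ← Finset.mul_prod_erase _ _ (mem_pairsLT.2 hij : (i, j) ∈ pairsLT N), abs_mul]
  exact mul_le_of_le_one_right (abs_nonneg _) (abs_prod_le_one _ fun _ => hF _)

theorem one_sub_prod_le_sum {ι : Type*} (s : Finset ι) {g : ι → ℝ} (h0 : ∀ i, 0 ≤ g i)
    (h1 : ∀ i, g i ≤ 1) : 1 - ∏ i ∈ s, g i ≤ ∑ i ∈ s, (1 - g i) := by
  classical
  induction s using Finset.induction_on with
  | empty => simp
  | insert a s ha ih =>
    rw [Finset.prod_insert ha, Finset.sum_insert ha]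
    have hp : ∏ i ∈ s, g i ≤ 1 := Finset.prod_le_one (fun i _ => h0 i) fun i _ => h1 i
    nlinarith [h1 a, h0 a]

theorem one_le_jastrow_sq_add (hF : ∀ z, |F z| ≤ 1) (x : Fin N → Vec 3) :
    1 ≤ ‖jastrow F N x‖ₑ ^ 2 + ∑ p ∈ pairsLT N, ENNReal.ofReal (1 - F (x p.1 - x p.2) ^ 2) := by
  have hsq : ∀ z, F z ^ 2 ≤ 1 := fun z => (sq_le_one_iff_abs_le_one _).2 (hF z)
  rw [enorm_sq_eq_ofReal,
    ← ENNReal.ofReal_sum_of_nonneg fun p _ => by linarith [hsq (x p.1 - x p.2)],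
    ← ENNReal.ofReal_add (by positivity)
      (Finset.sum_nonneg fun p _ => by linarith [hsq (x p.1 - x p.2)]), ENNReal.one_le_ofReal,
    jastrow, ← Finset.prod_pow]
  linarith [one_sub_prod_le_sum (pairsLT N) (g := fun p => F (x p.1 - x p.2) ^ 2)
    (fun _ => sq_nonneg _) fun _ => hsq _]

theorem enorm_fderiv_jastrow_le (hFs : ContDiff ℝ (⊤ : ℕ∞) F) (hF : ∀ z, |F z| ≤ 1)
    (hFe : ∀ z, F (-z) = F z) (x : Fin N → Vec 3) (i : Fin N) (w : Vec 3) :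
    ‖fderiv ℝ (jastrow F N) x (Pi.single i w)‖ₑ
      ≤ ∑ j ∈ Finset.univ.erase i, ‖fderiv ℝ F (x i - x j) w‖ₑ := by
  have hd := hFs.differentiable (by simp)
  have hneg : ∀ z, fderiv ℝ F (-z) w = -fderiv ℝ F z w := by
    intro z
    have h := fderiv_comp_smul_apply hd 0 (-1) z w
    simp only [zero_add, neg_smul, one_smul, hFe] at h
    linarith
  have hp : ∀ p : Fin N × Fin N, HasFDerivAt (fun y : Fin N → Vec 3 => F (y p.1 - y p.2))
      ((fderiv ℝ F (x p.1 - x p.2)).comp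
        ((ContinuousLinearMap.proj p.1 : (Fin N → Vec 3) →L[ℝ] Vec 3)
          - ContinuousLinearMap.proj p.2)) x := fun p =>
    (hd _).hasFDerivAt.comp x
      ((ContinuousLinearMap.proj p.1 : (Fin N → Vec 3) →L[ℝ] Vec 3)
          - ContinuousLinearMap.proj p.2).hasFDerivAt
  have hj : HasFDerivAt (jastrow F N) _ x :=
    HasFDerivAt.finsetProd (u := pairsLT N) fun p _ => hp p
  rw [hj.fderiv]
  have hterm : ∀ p ∈ pairsLT N,
      ‖((∏ q ∈ (pairsLT N).erase p, F (x q.1 - x q.2)) •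
        (fderiv ℝ F (x p.1 - x p.2)).comp
        ((ContinuousLinearMap.proj p.1 : (Fin N → Vec 3) →L[ℝ] Vec 3)
          - ContinuousLinearMap.proj p.2)) (Pi.single i w)‖ₑ
      ≤ (if p.1 = i then ‖fderiv ℝ F (x i - x p.2) w‖ₑ else 0)
        + if p.2 = i then ‖fderiv ℝ F (x i - x p.1) w‖ₑ else 0 := by
    rintro ⟨a, b⟩ hab
    rw [mem_pairsLT] at hab
    dsimp only at hab ⊢
    have h1 : ‖∏ q ∈ (pairsLT N).erase (a, b), F (x q.1 - x q.2)‖ₑ ≤ 1 := by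
      rw [Real.enorm_eq_ofReal_abs, ← ENNReal.ofReal_one]
      exact ENNReal.ofReal_le_ofReal (abs_prod_le_one _ fun _ => hF _)
    rw [_root_.smul_apply, smul_eq_mul, enorm_mul]
    refine (mul_le_of_le_one_left' h1).trans ?_
    rw [ContinuousLinearMap.comp_apply, _root_.sub_apply,
      ContinuousLinearMap.proj_apply, ContinuousLinearMap.proj_apply]
    by_cases ha : a = i
    · subst ha
      simp [hab.ne']
    · by_cases hb : b = i
      · subst hb
        have h2 := hneg (x b - x a)
        rw [neg_sub] at h2
        simp [ha, h2]
      · simp [ha, hb]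
  rw [_root_.sum_apply]
  refine (enorm_sum_le _ _).trans ((Finset.sum_le_sum hterm).trans (le_of_eq ?_))
  rw [pairsLT, Finset.sum_filter, Fintype.sum_prod_type]
  have hsplit : ∀ a b : Fin N, (if a < b then
      ((if a = i then ‖fderiv ℝ F (x i - x b) w‖ₑ else 0)
        + if b = i then ‖fderiv ℝ F (x i - x a) w‖ₑ else 0) else 0)
      = (if a = i then (if i < b then ‖fderiv ℝ F (x i - x b) w‖ₑ else 0) else 0)
        + if b = i then (if a < i then ‖fderiv ℝ F (x i - x a) w‖ₑ else 0) else 0 := by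
    intro a b
    by_cases ha : a = i
    · subst ha
      by_cases hb : b = a
      · subst hb; simp
      · simp [hb]
    · by_cases hb : b = i
      · subst hb; simp [ha]
      · simp [ha, hb]
  simp only [hsplit, Finset.sum_add_distrib, Finset.sum_ite_eq', Finset.mem_univ, if_true,
    Finset.sum_ite_irrel, Finset.sum_const_zero]
  rw [← Finset.sum_add_distrib, ← Finset.filter_ne', Finset.sum_filter]
  refine Finset.sum_congr rfl fun j _ => ?_
  rcases lt_trichotomy i j with h | h | h
  · simp [h, h.not_gt, h.ne']
  · simp [h]
  · simp [h, h.not_gt, h.ne]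

end Jastrow

section JastrowEnergy

variable {F : Vec 3 → ℝ} {N : ℕ}

theorem fderiv_add_int (hFp : ∀ (z : Vec 3) (n : Fin 3 → ℤ), F (fun k => z k + n k) = F z)
    (z : Vec 3) (n : Fin 3 → ℤ) : fderiv ℝ F (fun k => z k + n k) = fderiv ℝ F z := by
  have h : (fun y => F (y + fun k => (n k : ℝ))) = F := funext fun y => hFp y n
  have h2 := fderiv_comp_add_right (𝕜 := ℝ) (f := F) (x := z) fun k => (n k : ℝ)
  rw [h] at h2
  exact h2.symm

theorem periodize_add_int (W : Vec 3 → ℝ≥0∞) (z : Vec 3) (n : Fin 3 → ℤ) :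
    periodize 3 W 1 (fun k => z k + n k) = periodize 3 W 1 z := by
  refine Eq.trans (tsum_congr fun m => ?_)
    ((Equiv.addRight n).tsum_eq fun m : Fin 3 → ℤ => W fun k => z k + 1 * m k)
  congr 1
  ext k
  simp only [Equiv.coe_addRight, Pi.add_apply]
  push_cast
  ring

theorem measurable_periodize {W : Vec 3 → ℝ≥0∞} (hW : Measurable W) :
    Measurable (periodize 3 W 1) := by
  unfold periodize
  exact Measurable.tsum fun n => hW.comp (by fun_prop)

theorem lintegral_fderiv_jastrow_sq_le (hFs : ContDiff ℝ (⊤ : ℕ∞) F) (hF : ∀ z, |F z| ≤ 1)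
    (hFe : ∀ z, F (-z) = F z)
    (hFp : ∀ (z : Vec 3) (n : Fin 3 → ℤ), F (fun k => z k + n k) = F z) (i : Fin N) (w : Vec 3) :
    ∫⁻ x in box 3 N 1, ‖fderiv ℝ (jastrow F N) x (Pi.single i w)‖ₑ ^ 2
      ≤ N * (∫⁻ z in unitCube, ‖fderiv ℝ F z w‖ₑ ^ 2)
        + N ^ 2 * (∫⁻ z in unitCube, ‖fderiv ℝ F z w‖ₑ) ^ 2 := by
  set h : Vec 3 → ℝ≥0∞ := fun z => ‖fderiv ℝ F z w‖ₑ with hh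
  have hm : Measurable h :=
    (((hFs.continuous_fderiv (by simp)).clm_apply continuous_const).enorm).measurable
  have hp : ∀ (z : Vec 3) (n : Fin 3 → ℤ), h (fun k => z k + n k) = h z := fun z n => by
    simp only [hh, fderiv_add_int hFp]
  have hmj : ∀ j, Measurable fun x : Fin N → Vec 3 => h (x i - x j) := fun j =>
    hm.comp (by fun_prop)
  have hmjl : ∀ j l, Measurable fun x : Fin N → Vec 3 => h (x i - x j) * h (x i - x l) :=
    fun j l => (hmj j).mul (hmj l)
  set A := ∫⁻ z in unitCube, h z ^ 2
  set B := ∫⁻ z in unitCube, h z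
  calc _ ≤ ∫⁻ x in box 3 N 1, ∑ j ∈ Finset.univ.erase i, ∑ l ∈ Finset.univ.erase i,
          h (x i - x j) * h (x i - x l) := by
        refine lintegral_mono fun x => ?_
        rw [← Finset.sum_mul_sum, ← sq]
        exact pow_le_pow_left' (enorm_fderiv_jastrow_le hFs hF hFe x i w) 2
    _ = ∑ j ∈ Finset.univ.erase i, ∑ l ∈ Finset.univ.erase i,
          ∫⁻ x in box 3 N 1, h (x i - x j) * h (x i - x l) := by
        rw [lintegral_finsetSum _ fun j _ =>
          Finset.measurable_sum _ fun l _ => hmjl j l]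
        exact Finset.sum_congr rfl fun j _ =>
          lintegral_finsetSum _ fun l _ => hmjl j l
    _ ≤ ∑ j ∈ Finset.univ.erase i, ∑ l ∈ Finset.univ.erase i,
          ((if j = l then A else 0) + B ^ 2) := by
        refine Finset.sum_le_sum fun j hj => Finset.sum_le_sum fun l hl => ?_
        have hij := (Finset.ne_of_mem_erase hj).symm
        have hil := (Finset.ne_of_mem_erase hl).symm
        by_cases hjl : j = l
        · subst hjl
          have := lintegral_box_comp_sub (hm.pow_const 2) (fun z n => by rw [hp]) hij
          simp only [← sq, this, if_true]
          exact le_self_add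
        · rw [lintegral_box_comp_sub_mul_comp_sub hm hp hij hil hjl, if_neg hjl, zero_add]
    _ ≤ ∑ j : Fin N, ∑ l : Fin N, ((if j = l then A else 0) + B ^ 2) :=
        (Finset.sum_le_sum fun j _ => Finset.sum_le_sum_of_subset (Finset.erase_subset _ _)).trans
          (Finset.sum_le_sum_of_subset (Finset.erase_subset _ _))
    _ = _ := by
        simp [Finset.sum_add_distrib, sq, mul_assoc]

theorem sum_lintegral_fderiv_jastrow_le (hFs : ContDiff ℝ (⊤ : ℕ∞) F) (hF : ∀ z, |F z| ≤ 1)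
    (hFe : ∀ z, F (-z) = F z)
    (hFp : ∀ (z : Vec 3) (n : Fin 3 → ℤ), F (fun k => z k + n k) = F z) :
    ∑ i : Fin N, ∑ k : Fin 3, ∫⁻ x in box 3 N 1,
        ‖fderiv ℝ (jastrow F N) x (Pi.single i (Pi.single k 1))‖ₑ ^ 2
      ≤ N * (N * (∫⁻ z in unitCube, gradSq F z)
        + N ^ 2 * ∑ k : Fin 3, (∫⁻ z in unitCube, ‖fderiv ℝ F z (Pi.single k 1)‖ₑ) ^ 2) := by
  have hgrad : ∫⁻ z in unitCube, gradSq F z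
      = ∑ k : Fin 3, ∫⁻ z in unitCube, ‖fderiv ℝ F z (Pi.single k 1)‖ₑ ^ 2 := by
    unfold gradSq
    exact lintegral_finsetSum _ fun k _ =>
      (((hFs.continuous_fderiv (by simp)).clm_apply continuous_const).enorm).measurable.pow_const 2
  calc _ ≤ ∑ _i : Fin N, ∑ k : Fin 3, ((N : ℝ≥0∞) *
          (∫⁻ z in unitCube, ‖fderiv ℝ F z (Pi.single k 1)‖ₑ ^ 2)
          + N ^ 2 * (∫⁻ z in unitCube, ‖fderiv ℝ F z (Pi.single k 1)‖ₑ) ^ 2) :=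
        Finset.sum_le_sum fun i _ => Finset.sum_le_sum fun k _ =>
          lintegral_fderiv_jastrow_sq_le hFs hF hFe hFp i _
    _ = _ := by
        rw [hgrad, Finset.sum_const, Finset.card_univ, Fintype.card_fin, nsmul_eq_mul,
          Finset.sum_add_distrib, Finset.mul_sum, Finset.mul_sum]

theorem sum_ite_lt_le (N : ℕ) (I : ℝ≥0∞) :
    ∑ i : Fin N, ∑ j : Fin N, (if i < j then I else 0) ≤ N ^ 2 * I / 2 := by
  rw [ENNReal.le_div_iff_mul_le (by simp) (by simp), mul_two]
  conv_lhs =>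
    enter [2]
    rw [Finset.sum_comm]
  rw [← Finset.sum_add_distrib]
  calc _ ≤ ∑ i : Fin N, ∑ j : Fin N, I := by
        refine Finset.sum_le_sum fun i _ => ?_
        rw [← Finset.sum_add_distrib]
        refine Finset.sum_le_sum fun j _ => ?_
        rcases lt_trichotomy i j with h | h | h
        · simp [h, h.not_gt]
        · simp [h]
        · simp [h, h.not_gt]
    _ = _ := by simp [sq, mul_assoc]

theorem sum_lintegral_periodize_jastrow_le (hFs : ContDiff ℝ (⊤ : ℕ∞) F) (hF : ∀ z, |F z| ≤ 1)
    (hFp : ∀ (z : Vec 3) (n : Fin 3 → ℤ), F (fun k => z k + n k) = F z)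
    {W : Vec 3 → ℝ≥0∞} (hW : Measurable W) :
    ∑ i : Fin N, ∑ j : Fin N, (if i < j then
        ∫⁻ x in box 3 N 1, periodize 3 W 1 (fun k => x i k - x j k) * ‖jastrow F N x‖ₑ ^ 2 else 0)
      ≤ N ^ 2 * (∫⁻ z in unitCube, periodize 3 W 1 z * ‖F z‖ₑ ^ 2) / 2 := by
  refine le_trans (Finset.sum_le_sum fun i _ => Finset.sum_le_sum fun j _ => ?_)
    (sum_ite_lt_le N _)
  split_ifs with hij
  · rw [← lintegral_box_comp_sub (G := fun z => periodize 3 W 1 z * ‖F z‖ₑ ^ 2)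
      ((measurable_periodize hW).mul (hFs.continuous.enorm.measurable.pow_const 2))
      (fun z n => by rw [periodize_add_int, hFp]) hij.ne]
    refine lintegral_mono fun x => ?_
    exact mul_le_mul_right (pow_le_pow_left' (enorm_jastrow_le hF x hij) 2) _
  · exact le_rfl

theorem one_le_lintegral_jastrow_sq_add (hFs : ContDiff ℝ (⊤ : ℕ∞) F) (hF : ∀ z, |F z| ≤ 1)
    (hFp : ∀ (z : Vec 3) (n : Fin 3 → ℤ), F (fun k => z k + n k) = F z) :
    1 ≤ (∫⁻ x in box 3 N 1, ‖jastrow F N x‖ₑ ^ 2)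
      + N ^ 2 * ∫⁻ z in unitCube, ENNReal.ofReal (1 - F z ^ 2) := by
  have hm : Measurable fun z => ENNReal.ofReal (1 - F z ^ 2) :=
    ((continuous_const.sub (hFs.continuous.pow 2)).measurable).ennreal_ofReal
  have hms : ∀ p : Fin N × Fin N,
      Measurable fun x : Fin N → Vec 3 => ENNReal.ofReal (1 - F (x p.1 - x p.2) ^ 2) :=
    fun p => hm.comp (g := fun z => ENNReal.ofReal (1 - F z ^ 2)) (by fun_prop)
  calc (1 : ℝ≥0∞) = ∫⁻ _x in box 3 N 1, 1 := by rw [volume_restrict_box]; simp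
    _ ≤ ∫⁻ x in box 3 N 1, (‖jastrow F N x‖ₑ ^ 2
          + ∑ p ∈ pairsLT N, ENNReal.ofReal (1 - F (x p.1 - x p.2) ^ 2)) :=
        lintegral_mono fun x => one_le_jastrow_sq_add hF x
    _ = (∫⁻ x in box 3 N 1, ‖jastrow F N x‖ₑ ^ 2)
          + ∑ _p ∈ pairsLT N, ∫⁻ z in unitCube, ENNReal.ofReal (1 - F z ^ 2) := by
        rw [lintegral_add_right _ (Finset.measurable_sum _ fun p _ => hms p),
          lintegral_finsetSum _ fun p _ => hms p]
        congr 1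
        refine Finset.sum_congr rfl fun p hp => ?_
        exact lintegral_box_comp_sub hm (fun z n => by simp only [hFp]) (mem_pairsLT.1 hp).ne
    _ ≤ _ := by
        refine add_le_add le_rfl ?_
        refine (Finset.sum_le_sum_of_subset (Finset.subset_univ _)).trans (le_of_eq ?_)
        simp [sq]

/-- A real periodic symmetric function can be normalized to a trial state. -/
theorem exists_isTrialState {φ : (Fin N → Vec 3) → ℝ} (hφ : ContDiff ℝ (⊤ : ℕ∞) φ)
    (hper : ∀ (x : Fin N → Vec 3) (v : Fin N → Fin 3 → ℤ), φ (fun i k => x i k + v i k) = φ x)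
    (hsymm : ∀ (σ : Equiv.Perm (Fin N)) x, φ (x ∘ σ) = φ x)
    (h0 : ∫⁻ x in box 3 N 1, ‖φ x‖ₑ ^ 2 ≠ 0) (htop : ∫⁻ x in box 3 N 1, ‖φ x‖ₑ ^ 2 ≠ ⊤)
    (W : Vec 3 → ℝ≥0∞) :
    ∃ ψ, IsTrialState 3 N 1 ψ ∧ (∫⁻ x in box 3 N 1, ‖φ x‖ₑ ^ 2) *
        (kineticE 3 N 1 ψ + interE 3 N 1 W ψ)
      = (∑ i : Fin N, ∑ k : Fin 3, ∫⁻ x in box 3 N 1,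
          ‖fderiv ℝ φ x (Pi.single i (Pi.single k 1))‖ₑ ^ 2)
        + ∑ i : Fin N, ∑ j : Fin N, (if i < j then
          ∫⁻ x in box 3 N 1, periodize 3 W 1 (fun k => x i k - x j k) * ‖φ x‖ₑ ^ 2 else 0) := by
  set M := ∫⁻ x in box 3 N 1, ‖φ x‖ₑ ^ 2 with hM
  have hMpos : 0 < M.toReal := ENNReal.toReal_pos h0 htop
  set c : ℝ := (√M.toReal)⁻¹ with hc
  have hcM : M * ‖c‖ₑ ^ 2 = 1 := by
    rw [enorm_sq_eq_ofReal, hc, inv_pow, Real.sq_sqrt hMpos.le, ENNReal.ofReal_inv_of_pos hMpos,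
      ENNReal.ofReal_toReal htop, ENNReal.mul_inv_cancel h0 htop]
  have hctop : ‖c‖ₑ ^ 2 ≠ ⊤ := by simp
  have henorm : ∀ x, ‖((c * φ x : ℝ) : ℂ)‖ₑ ^ 2 = ‖c‖ₑ ^ 2 * ‖φ x‖ₑ ^ 2 := by
    intro x
    rw [← mul_pow, ← enorm_mul, ← ofReal_norm, Complex.norm_real, ofReal_norm]
  have hfd : ∀ x v, ‖fderiv ℝ (fun x => ((c * φ x : ℝ) : ℂ)) x v‖ₑ ^ 2
      = ‖c‖ₑ ^ 2 * ‖fderiv ℝ φ x v‖ₑ ^ 2 := by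
    intro x v
    have h1 : HasFDerivAt (fun x => ((c * φ x : ℝ) : ℂ))
        (Complex.ofRealCLM.comp (c • fderiv ℝ φ x)) x :=
      Complex.ofRealCLM.hasFDerivAt.comp x
        (((hφ.differentiable (by simp)) x).hasFDerivAt.const_mul c)
    rw [h1.fderiv, ContinuousLinearMap.comp_apply, Complex.ofRealCLM_apply, _root_.smul_apply,
      smul_eq_mul, ← mul_pow, ← enorm_mul, ← ofReal_norm, Complex.norm_real,
      ofReal_norm]
  refine ⟨fun x => ((c * φ x : ℝ) : ℂ), ⟨?_, ?_, ?_, ?_⟩, ?_⟩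
  · exact Complex.ofRealCLM.contDiff.comp (contDiff_const.mul hφ)
  · intro x v
    simp only [one_mul, hper]
  · intro σ x
    simp only [hsymm]
  · change ∫⁻ x in box 3 N 1, ‖((c * φ x : ℝ) : ℂ)‖ₑ ^ 2 = 1
    simp only [henorm]
    rw [lintegral_const_mul' _ _ hctop, mul_comm, hcM]
  · have hk : kineticE 3 N 1 (fun x => ((c * φ x : ℝ) : ℂ)) = ‖c‖ₑ ^ 2 *
        ∑ i : Fin N, ∑ k : Fin 3, ∫⁻ x in box 3 N 1,
          ‖fderiv ℝ φ x (Pi.single i (Pi.single k 1))‖ₑ ^ 2 := by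
      simp only [Finset.mul_sum, ← lintegral_const_mul' _ _ hctop, ← hfd]
      rfl
    have hi : interE 3 N 1 W (fun x => ((c * φ x : ℝ) : ℂ)) = ‖c‖ₑ ^ 2 *
        ∑ i : Fin N, ∑ j : Fin N, (if i < j then
          ∫⁻ x in box 3 N 1, periodize 3 W 1 (fun k => x i k - x j k) * ‖φ x‖ₑ ^ 2 else 0) := by
      simp only [Finset.mul_sum, mul_ite, mul_zero, ← lintegral_const_mul' _ _ hctop,
        mul_left_comm (‖c‖ₑ ^ 2), ← henorm]
      rfl
    rw [hk, hi, ← mul_add, ← mul_assoc, hcM, one_mul]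

end JastrowEnergy

section UpperBound

theorem eventually_add_div_le {e c s d : ℝ} (hec : e < c) :
    ∀ᶠ N : ℕ in atTop, (N * e + s / N) ≤ c * N * (1 - d / N) := by
  have h : Tendsto (fun N : ℕ => (c - e) * (N : ℝ)) atTop atTop :=
    tendsto_natCast_atTop_atTop.const_mul_atTop (sub_pos.2 hec)
  filter_upwards [h.eventually_ge_atTop (|s| + c * d), eventually_ge_atTop 1] with N hN h1
  have h1' : (1 : ℝ) ≤ N := by exact_mod_cast h1
  have h2 : s / N ≤ |s| := by
    rw [div_le_iff₀ (by linarith)]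
    nlinarith [le_abs_self s, abs_nonneg s]
  have h3 : c * N * (1 - d / N) = c * N - c * d := by
    field_simp
  linarith

theorem eventually_exists_energy_le {V : Vec 3 → ℝ} (hV : Measurable V)
    (hVsupp : HasCompactSupport V) (hVeven : ∀ x, V (-x) = V x) {c : ℝ}
    (hc : sInf (scatSet3 (fun x => ENNReal.ofReal (V x))) < ENNReal.ofReal c) :
    ∀ᶠ N : ℕ in atTop, ∃ ψ, IsTrialState 3 N 1 ψ ∧
      kineticE 3 N 1 ψ + interE 3 N 1 (gpPotential V N) ψ ≤ ENNReal.ofReal (c * N) := by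
  obtain ⟨f, hfs, hfc, hfe, hf1, hfE⟩ := exists_profile hV hVeven hc
  have hc0 : 0 < c := ENNReal.ofReal_pos.1 (bot_le.trans_lt hc)
  obtain ⟨R, hR⟩ : ∃ R : ℝ, (∀ x, R ≤ ‖x‖ → f x = 1) ∧ ∀ x, R ≤ ‖x‖ → V x = 0 := by
    obtain ⟨R₁, h₁⟩ := hfc.isCompact.isBounded.subset_ball (0 : Vec 3)
    obtain ⟨R₂, h₂⟩ := hVsupp.isCompact.isBounded.subset_ball (0 : Vec 3)
    refine ⟨max R₁ R₂, fun x hx => ?_, fun x hx => ?_⟩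
    · have : x ∉ tsupport fun x => f x - 1 := fun h => by
        have := mem_ball_zero_iff.1 (h₁ h)
        exact absurd (this.trans_le (le_max_left _ _)) hx.not_gt
      have := image_eq_zero_of_notMem_tsupport this
      linarith
    · refine image_eq_zero_of_notMem_tsupport fun h => ?_
      have := mem_ball_zero_iff.1 (h₂ h)
      exact absurd (this.trans_le (le_max_right _ _)) hx.not_gt
  obtain ⟨hf, hVR⟩ := hR
  have hfd := hfs.differentiable (by simp)
  have hgm : Measurable (gradSq f) := by
    refine Finset.measurable_sum _ fun k _ => ?_
    exact (((hfs.continuous_fderiv (by simp)).clm_apply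
      continuous_const).enorm).measurable.pow_const 2
  set E := ∫⁻ x, (gradSq f x + ENNReal.ofReal (V x) * ‖f x‖ₑ ^ 2 / 2) with hE
  have hEsplit : E = (∫⁻ x, gradSq f x) + (∫⁻ x, ENNReal.ofReal (V x) * ‖f x‖ₑ ^ 2) / 2 := by
    rw [hE, lintegral_add_left hgm]
    simp only [div_eq_mul_inv]
    rw [lintegral_mul_const' _ _ (by simp)]
  set b : Fin 3 → ℝ≥0∞ := fun k => ∫⁻ x, ‖fderiv ℝ f x (Pi.single k 1)‖ₑ with hb
  have hbtop : ∀ k, b k ≠ ⊤ := by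
    intro k
    have hcs : HasCompactSupport fun x => fderiv ℝ f x (Pi.single k 1) := by
      have h := hfc.fderiv_apply (𝕜 := ℝ) (Pi.single k 1)
      simpa only [fderiv_sub_const] using h
    exact ((((hfs.continuous_fderiv (by simp)).clm_apply
      continuous_const).integrable_of_hasCompactSupport hcs).2).ne
  set S := ∑ k, b k ^ 2 with hS
  have hStop : S ≠ ⊤ := ENNReal.sum_ne_top.2 fun k _ => ENNReal.pow_ne_top (hbtop k)
  set D := ∫⁻ x, ENNReal.ofReal (1 - f x ^ 2) with hD
  have hDtop : D ≠ ⊤ := by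
    have hcs : HasCompactSupport fun x => 1 - f x ^ 2 := by
      refine hfc.mono fun x hx hx' => hx ?_
      have : f x = 1 := by
        simp only [sub_eq_zero] at hx'
        exact hx'
      simp [this]
    have hi := (Continuous.integrable_of_hasCompactSupport (μ := volume)
      (continuous_const.sub (hfs.continuous.pow 2)) hcs).lintegral_lt_top
    exact hi.ne
  have hEtop : E ≠ ⊤ := hfE.ne_top
  have hec : E.toReal < c := by
    rw [← ENNReal.ofReal_lt_ofReal_iff hc0, ENNReal.ofReal_toReal hEtop]
    exact hfE
  filter_upwards [eventually_add_div_le (s := S.toReal) (d := D.toReal) hec,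
    eventually_gt_atTop 0, (tendsto_natCast_atTop_atTop (R := ℝ)).eventually_ge_atTop (4 * R),
    (tendsto_natCast_atTop_atTop (R := ℝ)).eventually_gt_atTop D.toReal] with N hN hN0 hNR hND
  have hN' : (0 : ℝ) < N := by exact_mod_cast hN0
  set F := torusProfile f N with hF
  have hFs : ContDiff ℝ (⊤ : ℕ∞) F := contDiff_torusProfile hf hNR hfs
  have hF1 : ∀ z, |F z| ≤ 1 := fun z => hf1 _
  have hFe : ∀ z, F (-z) = F z := torusProfile_neg hf hNR hfe
  have hFp : ∀ (z : Vec 3) (n : Fin 3 → ℤ), F (fun k => z k + n k) = F z :=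
    torusProfile_add_int f N
  have hNe : (N : ℝ≥0∞) = ENNReal.ofReal N := (ENNReal.ofReal_natCast N).symm
  have hWm : Measurable (gpPotential V N) := by
    have : Measurable fun x : Vec 3 => V ((N : ℝ) • x) := hV.comp (by fun_prop)
    exact (this.const_mul _).ennreal_ofReal
  set M := ∫⁻ x in box 3 N 1, ‖jastrow F N x‖ₑ ^ 2 with hM
  have hMtop : M ≠ ⊤ := by
    refine ne_top_of_le_ne_top ENNReal.one_ne_top ?_
    calc M ≤ ∫⁻ _x in box 3 N 1, 1 := lintegral_mono fun x => by
          rw [enorm_sq_eq_ofReal, ← ENNReal.ofReal_one]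
          exact ENNReal.ofReal_le_ofReal ((sq_le_one_iff_abs_le_one _).2 (abs_jastrow_le_one hF1 x))
      _ = 1 := by rw [volume_restrict_box]; simp
  have hMge : 1 - D.toReal / N ≤ M.toReal := by
    have h := one_le_lintegral_jastrow_sq_add (N := N) hFs hF1 hFp
    have h2 : (N : ℝ≥0∞) ^ 2 * ∫⁻ z in unitCube, ENNReal.ofReal (1 - F z ^ 2)
        ≤ ENNReal.ofReal (D.toReal / N) := by
      refine (mul_le_mul_right (lintegral_one_sub_torusProfile_le hf hNR hN0) _).trans
        (le_of_eq ?_)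
      rw [← hD, ← ENNReal.ofReal_toReal hDtop, hNe, ← ENNReal.ofReal_pow hN'.le,
        ← ENNReal.ofReal_mul (by positivity), ← ENNReal.ofReal_mul (by positivity),
        ENNReal.toReal_ofReal ENNReal.toReal_nonneg]
      congr 1
      field_simp
    have h3 := h.trans (add_le_add le_rfl h2)
    rw [← hM, ← ENNReal.ofReal_toReal hMtop, ← ENNReal.ofReal_add ENNReal.toReal_nonneg
      (by positivity), ENNReal.one_le_ofReal] at h3
    linarith
  have hMpos : 0 < M.toReal := by
    have : D.toReal / N < 1 := (div_lt_one hN').2 hND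
    linarith
  have hM0 : M ≠ 0 := fun h => by simp [h] at hMpos
  obtain ⟨ψ, hψ, hψE⟩ := exists_isTrialState (contDiff_jastrow hFs) (jastrow_add_int hFp)
    (jastrow_perm hFe) hM0 hMtop (gpPotential V N)
  refine ⟨ψ, hψ, ?_⟩
  rw [← ENNReal.mul_le_mul_iff_right hM0 hMtop, hψE]
  have hkin : N * (N * (∫⁻ z in unitCube, gradSq F z)
        + N ^ 2 * ∑ k : Fin 3, (∫⁻ z in unitCube, ‖fderiv ℝ F z (Pi.single k 1)‖ₑ) ^ 2)
      ≤ ENNReal.ofReal N * (∫⁻ x, gradSq f x) + ENNReal.ofReal (1 / N) * S := by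
    calc _ ≤ (N : ℝ≥0∞) * (N * (ENNReal.ofReal (1 / N) * ∫⁻ x, gradSq f x)
          + N ^ 2 * ∑ k : Fin 3, (ENNReal.ofReal (1 / (N : ℝ) ^ 2) * b k) ^ 2) := by
          gcongr with k
          · exact lintegral_gradSq_torusProfile_le hf hNR hN0 hfd
          · exact lintegral_enorm_fderiv_torusProfile_le hf hNR hN0 hfd _
      _ = _ := by
          simp only [mul_pow, ← Finset.mul_sum, ← hS]
          rw [hNe, mul_add, ← mul_assoc, ← mul_assoc, ← mul_assoc, ← mul_assoc,
            ← ENNReal.ofReal_pow hN'.le, ← ENNReal.ofReal_pow (by positivity),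
            ← ENNReal.ofReal_mul (by positivity), ← ENNReal.ofReal_mul (by positivity),
            ← ENNReal.ofReal_mul (by positivity), ← ENNReal.ofReal_mul (by positivity)]
          congr 3 <;> field_simp
  have hint : N ^ 2 * (∫⁻ z in unitCube, periodize 3 (gpPotential V N) 1 z * ‖F z‖ₑ ^ 2) / 2
      ≤ ENNReal.ofReal N * ((∫⁻ x, ENNReal.ofReal (V x) * ‖f x‖ₑ ^ 2) / 2) := by
    calc _ ≤ (N : ℝ≥0∞) ^ 2 * (ENNReal.ofReal (1 / N) *
          ∫⁻ x, ENNReal.ofReal (V x) * ‖f x‖ₑ ^ 2) / 2 := by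
          gcongr
          exact lintegral_periodize_torusProfile_le hVR hf hNR hN0
      _ = _ := by
          rw [hNe, ← mul_assoc, ← ENNReal.ofReal_pow hN'.le, ← ENNReal.ofReal_mul (by positivity),
            mul_div_assoc]
          congr 2
          field_simp
  calc _ ≤ (ENNReal.ofReal N * (∫⁻ x, gradSq f x) + ENNReal.ofReal (1 / N) * S)
        + ENNReal.ofReal N * ((∫⁻ x, ENNReal.ofReal (V x) * ‖f x‖ₑ ^ 2) / 2) :=
        add_le_add ((sum_lintegral_fderiv_jastrow_le hFs hF1 hFe hFp).trans hkin)
          ((sum_lintegral_periodize_jastrow_le hFs hF1 hFp hWm).trans hint)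
    _ = ENNReal.ofReal N * E + ENNReal.ofReal (1 / N) * S := by
        rw [hEsplit]
        ring
    _ = ENNReal.ofReal (N * E.toReal + S.toReal / N) := by
        conv_lhs => rw [← ENNReal.ofReal_toReal hEtop, ← ENNReal.ofReal_toReal hStop]
        rw [← ENNReal.ofReal_mul hN'.le, ← ENNReal.ofReal_mul (by positivity),
          ← ENNReal.ofReal_add (by positivity) (by positivity)]
        congr 1
        ring
    _ ≤ ENNReal.ofReal (M.toReal * (c * N)) := by
        refine ENNReal.ofReal_le_ofReal (hN.trans ?_)
        rw [mul_comm]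
        gcongr
    _ = M * ENNReal.ofReal (c * N) := by
        rw [ENNReal.ofReal_mul ENNReal.toReal_nonneg, ENNReal.ofReal_toReal hMtop]

end UpperBound

/-- **Ground state energy in the Gross–Pitaevskii regime (Lieb–Seiringer–Yngvason).**
For a measurable, radial, compactly supported `V : ℝ³ → [0,∞)` with scattering length
`𝔞 > 0`, the ground state energy of the Gross–Pitaevskii Hamiltonian on the unit torus
satisfies `lim_{N→∞} E_N^{GP}/N = 4π𝔞`. -/
theorem gross_pitaevskii_energy
    (V : Vec 3 → ℝ) (hVmeas : Measurable V) (hVpos : ∀ x, 0 ≤ V x)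
    (hVrad : ∀ x y : Vec 3, ∑ k, (x k) ^ 2 = ∑ k, (y k) ^ 2 → V x = V y)
    (hVsupp : HasCompactSupport V)
    (a : ℝ) (ha : 0 < a)
    (hscat : sInf (scatSet3 (fun x => ENNReal.ofReal (V x))) = ENNReal.ofReal (4 * π * a)) :
    Tendsto (fun N : ℕ => gsEnergy 3 N 1 (gpPotential V N) / (N : ℝ))
      atTop (nhds (4 * π * a)) := by
  have hVeven : ∀ x, V (-x) = V x := fun x => hVrad _ _ (by simp)
  have hpos : 0 < 4 * π * a := by positivity
  have hupper : ∀ c, 4 * π * a < c → ∀ᶠ N : ℕ in atTop, ∃ ψ, IsTrialState 3 N 1 ψ ∧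
      kineticE 3 N 1 ψ + interE 3 N 1 (gpPotential V N) ψ ≤ ENNReal.ofReal (c * N) := by
    intro c hc
    refine eventually_exists_energy_le hVmeas hVsupp hVeven ?_
    rw [hscat]
    exact (ENNReal.ofReal_lt_ofReal_iff (hpos.trans hc)).2 hc
  refine tendsto_order.2 ⟨fun c hc => ?_, fun c hc => ?_⟩
  · obtain ⟨c', hcc', hc'⟩ := exists_between hc
    filter_upwards [eventually_le_energy hscat hVsupp hVmeas hVeven ha hc',
      hupper (4 * π * a + 1) (by linarith), eventually_gt_atTop 0] with N hN hex hN0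
    have hN' : (0 : ℝ) < N := by exact_mod_cast hN0
    refine hcc'.trans_le ((le_div_iff₀ hN').2 ?_)
    obtain ⟨ψ₀, h1, h2⟩ := hex
    refine le_csInf ⟨_, ψ₀, h1, ne_top_of_le_ne_top ENNReal.ofReal_ne_top h2, rfl⟩ ?_
    rintro _ ⟨ψ, hψ, htop, rfl⟩
    exact (ENNReal.ofReal_le_iff_le_toReal htop).1 (hN ψ hψ)
  · obtain ⟨c', hc', hcc'⟩ := exists_between hc
    filter_upwards [hupper c' hc', eventually_gt_atTop 0] with N hex hN0
    have hN' : (0 : ℝ) < N := by exact_mod_cast hN0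
    obtain ⟨ψ, h1, h2⟩ := hex
    refine lt_of_le_of_lt ((div_le_iff₀ hN').2 ?_) hcc'
    refine le_trans (csInf_le ⟨0, ?_⟩
      ⟨ψ, h1, ne_top_of_le_ne_top ENNReal.ofReal_ne_top h2, rfl⟩) ?_
    · rintro _ ⟨_, _, _, rfl⟩
      exact ENNReal.toReal_nonneg
    · exact ENNReal.toReal_le_of_le_ofReal (by have := hpos.trans hc'; positivity) h2
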